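/- arXiv:1808.03615 — 2 statements merged into one kernel-verified Lean document; each statement's English description precedes it below -/
import Mathlib

section
/- If V is a partial Steiner triple system, then there is an integer N' such that for every integer u with u ≥ N' and u ≡ 1 or 3 (mod 6), there exists a Steiner triple system U on u points having V as a subsystem (a partial Steiner triple system whose points are among those of U and whose triples are precisely the triples of U contained in it) which is invariant under Aut U, such that the restriction map from Aut U to Aut V is a group isomorphism (Aut U induces the full group Aut V and Aut U ≅ Aut V). -/
open Finset

noncomputable section
open scoped Classical

/-- `T` is the set of triples of a Steiner triple system on the finite type `α`:
every pair of distinct points lies in exactly one triple. -/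
def IsSTS {α : Type*} (T : Finset (Finset α)) : Prop :=
  (∀ t ∈ T, t.card = 3) ∧
    ∀ p q : α, p ≠ q → ∃! t : Finset α, t ∈ T ∧ p ∈ t ∧ q ∈ t

/-- `T` is the set of triples of a partial Steiner triple system on `α`:
every pair of distinct points lies in at most one triple. -/
def IsPSTS {α : Type*} (T : Finset (Finset α)) : Prop :=
  (∀ t ∈ T, t.card = 3) ∧
    ∀ p q : α, p ≠ q → ∀ t₁ ∈ T, ∀ t₂ ∈ T, p ∈ t₁ → q ∈ t₁ → p ∈ t₂ → q ∈ t₂ → t₁ = t₂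

/-- `W` is a (closed) subsystem of the triple system `T`. -/
def IsSub {α : Type*} (T : Finset (Finset α)) (W : Finset α) : Prop :=
  ∀ t ∈ T, 2 ≤ (t ∩ W).card → t ⊆ W

/-- `g` is an automorphism of the triple system `T`. -/
def IsAut {α : Type*} (T : Finset (Finset α)) (g : Equiv.Perm α) : Prop :=
  ∀ t : Finset α, t ∈ T ↔ t.image g ∈ T

/-- The automorphism group of a triple system, as a subgroup of the permutation group. -/
def autGroup {α : Type*} (T : Finset (Finset α)) : Subgroup (Equiv.Perm α) where
  carrier := {g : Equiv.Perm α | IsAut T g}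
  one_mem' := by
    intro t
    simp
  mul_mem' := by
    intro a b ha hb t
    have h1 := hb t
    have h2 := ha (t.image b)
    have key : t.image ⇑(a * b) = (t.image ⇑b).image ⇑a := by
      rw [Equiv.Perm.coe_mul, Finset.image_image]
    rw [key, ← h2]
    exact h1
  inv_mem' := by
    intro a ha t
    have h := ha (t.image ⇑a⁻¹)
    have key : (t.image ⇑a⁻¹).image ⇑a = t := by
      rw [Finset.image_image]
      have hc : (⇑a ∘ ⇑a⁻¹) = id := by
        funext x
        simp
      rw [hc, Finset.image_id]
    rw [key] at h
    exact h.symm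

/-- `φ` embeds the triple system `S` onto a subsystem of `T`: it is injective, maps
triples of `S` to triples of `T`, and the triples of `T` inside the image of `φ` are
precisely the images of the triples of `S`. -/
def IsCopy {α β : Type*} [Fintype α] (S : Finset (Finset α)) (T : Finset (Finset β))
    (φ : α → β) : Prop :=
  Function.Injective φ ∧ (∀ s ∈ S, s.image φ ∈ T) ∧
    ∀ t ∈ T, t ⊆ Finset.univ.image φ → ∃ s ∈ S, t = s.image φ

/-- The point set `W` is invariant under every automorphism of `T`. -/
def AutInvariant {β : Type*} (T : Finset (Finset β)) (W : Finset β) : Prop :=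
  ∀ g : Equiv.Perm β, IsAut T g → W.image g = W

/-- For the copy of `S` inside `T` given by `φ`, restriction gives a group isomorphism
from `Aut T` onto `Aut S`: every automorphism of `T` induces (via `φ`) an automorphism
of `S`, and every automorphism of `S` is induced by exactly one automorphism of `T`. -/
def AutRestrictIso {α β : Type*} (T : Finset (Finset β)) (S : Finset (Finset α))
    (φ : α → β) : Prop :=
  (∀ g : Equiv.Perm β, IsAut T g →
      ∃ h : Equiv.Perm α, IsAut S h ∧ ∀ x : α, g (φ x) = φ (h x)) ∧
    ∀ h : Equiv.Perm α, IsAut S h →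
      ∃! g : Equiv.Perm β, IsAut T g ∧ ∀ x : α, g (φ x) = φ (h x)

/-- `φ` embeds `S` as an `Aut T`-invariant subsystem of `T` on which `Aut T` induces
the full automorphism group of `S`, with `Aut T ≅ Aut S` via restriction. -/
def FullEmbedding {α β : Type*} [Fintype α] (S : Finset (Finset α)) (T : Finset (Finset β))
    (φ : α → β) : Prop :=
  IsCopy S T φ ∧ AutInvariant T (Finset.univ.image φ) ∧ AutRestrictIso T S φ

/-- The points of the projective space `PG(n,2)`: nonzero vectors of `GF(2)^{n+1}`. -/
abbrev PGPoint (n : ℕ) := {x : Fin (n + 1) → ZMod 2 // x ≠ 0}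

/-- The lines of `PG(n,2)`: 3-sets of nonzero vectors summing to `0`. -/
def PGTriples (n : ℕ) : Finset (Finset (PGPoint n)) :=
  Finset.univ.filter fun t : Finset (PGPoint n) =>
    t.card = 3 ∧ ∑ v ∈ t, (v : Fin (n + 1) → ZMod 2) = 0

/-- The smallest subsystem of `T` containing the point set `P`. -/
def GeneratedSub {α : Type*} [Fintype α] (T : Finset (Finset α)) (P : Finset α) : Finset α :=
  Finset.univ.filter fun x => ∀ W : Finset α, IsSub T W → P ⊆ W → x ∈ W

/-- `W` is a subsystem of `T` isomorphic to `PG(n,2)`. -/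
def IsPGSub {α : Type*} [Fintype α] (n : ℕ) (T : Finset (Finset α)) (W : Finset α) : Prop :=
  ∃ φ : PGPoint n → α, IsCopy (PGTriples n) T φ ∧ Finset.univ.image φ = W

/-- A triple system is `PG(2,2)`-paired if any two distinct points lie in at least two
subsystems isomorphic to `PG(2,2)`. -/
def PG22Paired {α : Type*} [Fintype α] (T : Finset (Finset α)) : Prop :=
  ∀ p q : α, p ≠ q → ∃ W₁ W₂ : Finset α, W₁ ≠ W₂ ∧
    (p ∈ W₁ ∧ q ∈ W₁ ∧ IsPGSub 2 T W₁) ∧ p ∈ W₂ ∧ q ∈ W₂ ∧ IsPGSub 2 T W₂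

/-- `T` is `PG(3,2)`-2-pointed with respect to the points `p, q`: any four points
including `p` and `q` generate a subsystem isomorphic to `PG(2,2)` or `PG(3,2)`. -/
def PG32TwoPointed {α : Type*} [Fintype α] (T : Finset (Finset α)) (p q : α) : Prop :=
  p ≠ q ∧ ∀ s : Finset α, s.card = 4 → p ∈ s → q ∈ s →
    IsPGSub 2 T (GeneratedSub T s) ∨ IsPGSub 3 T (GeneratedSub T s)

/-- The copy of `Y` inside `2Y+1`. -/
def dp0 {γ : Type*} (a : γ) : γ ⊕ γ ⊕ Unit := Sum.inl a

/-- The disjoint copy `Y₁` of `Y` inside `2Y+1`. -/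
def dp1 {γ : Type*} (a : γ) : γ ⊕ γ ⊕ Unit := Sum.inr (Sum.inl a)

/-- The extra point `*` of `2Y+1`. -/
def dpStar {γ : Type*} : γ ⊕ γ ⊕ Unit := Sum.inr (Sum.inr ())

/-- The triples of the Steiner triple system `2Y+1` built from a system `Y` with
triple set `T`. -/
def DoubleTriples {γ : Type*} [Fintype γ] (T : Finset (Finset γ)) :
    Finset (Finset (γ ⊕ γ ⊕ Unit)) :=
  Finset.univ.filter fun t : Finset (γ ⊕ γ ⊕ Unit) =>
    (∃ s ∈ T, t = s.image dp0) ∨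
    (∃ a : γ, t = {dpStar, dp0 a, dp1 a}) ∨
    (∃ a b c : γ, ({a, b, c} : Finset γ) ∈ T ∧ t = {dp1 a, dp1 b, dp0 c})

/-- The triples of the direct product of two triple systems. -/
def ProdTriples {α β : Type*} [Fintype α] [Fintype β]
    (TA : Finset (Finset α)) (TB : Finset (Finset β)) : Finset (Finset (α × β)) :=
  Finset.univ.filter fun t : Finset (α × β) =>
    (∃ a : α, ∃ s ∈ TB, t = s.image fun b => (a, b)) ∨
    (∃ b : β, ∃ s ∈ TA, t = s.image fun a => (a, b)) ∨
    (∃ a₁ a₂ a₃ : α, ∃ b₁ b₂ b₃ : β, ({a₁, a₂, a₃} : Finset α) ∈ TA ∧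
      ({b₁, b₂, b₃} : Finset β) ∈ TB ∧ t = {(a₁, b₁), (a₂, b₂), (a₃, b₃)})

/-- The triples of Moore's construction `U = X ∪ (V × A)`.  Here `TX` (on `δ`), `TV`
(on `α`), `TY` (on `γ`) are the triple sets of `X`, `V`, `Y`; `j : δ → γ` embeds `X`
as a subsystem of `Y` and `ℓ : A → γ` labels `Y − X` by the group `A`. -/
def MooreTriples {δ α γ A : Type*} [Fintype δ] [Fintype α] [Fintype A] [Group A]
    (TX : Finset (Finset δ)) (TV : Finset (Finset α)) (TY : Finset (Finset γ))
    (j : δ → γ) (ℓ : A → γ) : Finset (Finset (δ ⊕ α × A)) :=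
  Finset.univ.filter fun t : Finset (δ ⊕ α × A) =>
    (∃ s ∈ TX, t = s.image Sum.inl) ∨
    (∃ v : α, ∃ a₁ a₂ : A, ∃ x : δ, ({ℓ a₁, ℓ a₂, j x} : Finset γ) ∈ TY ∧
      t = {Sum.inr (v, a₁), Sum.inr (v, a₂), Sum.inl x}) ∨
    (∃ v : α, ∃ a₁ a₂ a₃ : A, ({ℓ a₁, ℓ a₂, ℓ a₃} : Finset γ) ∈ TY ∧
      t = {Sum.inr (v, a₁), Sum.inr (v, a₂), Sum.inr (v, a₃)}) ∨
    (∃ v₁ v₂ v₃ : α, ∃ a₁ a₂ a₃ : A, ({v₁, v₂, v₃} : Finset α) ∈ TV ∧ a₁ * a₂ * a₃ = 1 ∧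
      t = {Sum.inr (v₁, a₁), Sum.inr (v₂, a₂), Sum.inr (v₃, a₃)})

/-- The hypotheses of Moore's construction: `Y` and `V` are Steiner triple systems,
`A` is a cyclic group, `j` embeds `X` as a subsystem of `Y` (with triple set `TX`),
and `ℓ` is a bijective labeling of `Y − X` by `A`. -/
def MooreSetup {δ α γ A : Type*} [Fintype δ] [Group A]
    (TX : Finset (Finset δ)) (TV : Finset (Finset α)) (TY : Finset (Finset γ))
    (j : δ → γ) (ℓ : A → γ) : Prop :=
  IsSTS TY ∧ IsSTS TV ∧ IsCyclic A ∧ Function.Injective j ∧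
    IsSub TY (Finset.univ.image j) ∧ IsCopy TX TY j ∧
    Function.Injective ℓ ∧ Set.range ℓ = (Set.range j)ᶜ

/-- The subsystem `Y_v = X ∪ (v × A)` of Moore's construction. -/
def MooreY {δ α A : Type*} [Fintype δ] [Fintype A] (v : α) : Finset (δ ⊕ α × A) :=
  (Finset.univ.image (Sum.inl : δ → δ ⊕ α × A)) ∪
    Finset.univ.image fun a : A => (Sum.inr (v, a) : δ ⊕ α × A)

/-- A subsystem of type (3.1) of Moore's construction, where `ε` denotes the unique
involution `−1` of `A`: the seven points `x, (v_i, a_i), (v_i, −a_i)` for a triple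
`{v₁,v₂,v₃}` of `V`, with `a₁a₂a₃ = 1` and `{a_i, −a_i, x}` a triple of `Y`. -/
def MooreType31 {δ α γ A : Type*} [Group A] (TV : Finset (Finset α))
    (TY : Finset (Finset γ)) (j : δ → γ) (ℓ : A → γ) (ε : A)
    (W : Finset (δ ⊕ α × A)) : Prop :=
  ∃ v₁ v₂ v₃ : α, ∃ a₁ a₂ a₃ : A, ∃ x : δ,
    ({v₁, v₂, v₃} : Finset α) ∈ TV ∧ a₁ * a₂ * a₃ = 1 ∧
    ({ℓ a₁, ℓ (ε * a₁), j x} : Finset γ) ∈ TY ∧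
    ({ℓ a₂, ℓ (ε * a₂), j x} : Finset γ) ∈ TY ∧
    ({ℓ a₃, ℓ (ε * a₃), j x} : Finset γ) ∈ TY ∧
    W = {Sum.inl x, Sum.inr (v₁, a₁), Sum.inr (v₁, ε * a₁), Sum.inr (v₂, a₂),
         Sum.inr (v₂, ε * a₂), Sum.inr (v₃, a₃), Sum.inr (v₃, ε * a₃)}

/-- The point set of a family of triples. -/
def ptsOf {β : Type*} (T : Finset (Finset β)) : Finset β := T.sup id

/-- Adjacency of triples: two distinct triples of `T` meeting in a point. -/
def TriAdj {β : Type*} (T : Finset (Finset β)) (t s : Finset β) : Prop :=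
  t ∈ T ∧ s ∈ T ∧ t ≠ s ∧ (t ∩ s).Nonempty

/-- A partial Steiner triple system is cyclic if the graph whose vertices are its
triples, two joined when they meet, is a cycle (equivalently: it has at least three
triples, every triple meets exactly two others, and the graph is connected). -/
def IsCyclicPSTS {β : Type*} (T : Finset (Finset β)) : Prop :=
  3 ≤ T.card ∧ (∀ t ∈ T, (T.filter fun s => s ≠ t ∧ (s ∩ t).Nonempty).card = 2) ∧
    ∀ t ∈ T, ∀ s ∈ T, Relation.ReflTransGen (TriAdj T) t s

/-- The partial Steiner triple system `Q(z)` (for the parameter `n`), with triple set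
`T`, point set `P` and distinguished point `z`: two cyclic PSTSs `C₁, C₂` on
`2n+4` and `2n+6` points meeting exactly in the point `z`, which lies in two triples
of each, triples `{z, z'_i, z_i}` of `C_i` with `z'_i` in two triples of `C_i`, and a
new point `z'` in the single additional triple `{z'_1, z', z'_2}`. -/
def IsQ {β : Type*} (n : ℕ) (T : Finset (Finset β)) (P : Finset β) (z : β) : Prop :=
  ∃ C₁ C₂ : Finset (Finset β), ∃ z' z₁' z₂' z₁ z₂ : β,
    IsPSTS T ∧ IsCyclicPSTS C₁ ∧ IsCyclicPSTS C₂ ∧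
    (ptsOf C₁).card = 2 * n + 4 ∧ (ptsOf C₂).card = 2 * n + 6 ∧
    ptsOf C₁ ∩ ptsOf C₂ = {z} ∧
    (C₁.filter fun t => z ∈ t).card = 2 ∧ (C₂.filter fun t => z ∈ t).card = 2 ∧
    ({z, z₁', z₁} : Finset β) ∈ C₁ ∧ (C₁.filter fun t => z₁' ∈ t).card = 2 ∧
    ({z, z₂', z₂} : Finset β) ∈ C₂ ∧ (C₂.filter fun t => z₂' ∈ t).card = 2 ∧
    z' ∉ ptsOf C₁ ∪ ptsOf C₂ ∧
    T = C₁ ∪ C₂ ∪ {({z₁', z', z₂'} : Finset β)} ∧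
    P = ptsOf C₁ ∪ ptsOf C₂ ∪ {z'}

/-- Nonempty subsets of `β`: the points of the projective space `P` over `GF(2)`
built on a point set `β`. -/
abbrev NESet (β : Type*) := {s : Finset β // s.Nonempty}

/-- The triples of the projective space over `GF(2)` on the nonempty subsets of `β`:
3-sets of subsets with empty symmetric difference. -/
def sdTriples (β : Type*) [Fintype β] : Finset (Finset (NESet β)) :=
  Finset.univ.filter fun t : Finset (NESet β) =>
    ∃ a b c : NESet β, a ≠ b ∧ a ≠ c ∧ b ≠ c ∧ t = {a, b, c} ∧
      symmDiff (symmDiff a.1 b.1) c.1 = ∅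

/-- The singleton `{a}` as a point of the projective space. -/
def sEl {β : Type*} (a : β) : NESet β := ⟨{a}, Finset.singleton_nonempty a⟩

/-- The pair `{a,b}` as a point of the projective space. -/
def pEl {β : Type*} (a b : β) : NESet β := ⟨{a, b}, Finset.insert_nonempty a {b}⟩

/-- The triples of `P` removed in Cameron's construction, for each triple `{a,b,c}`
of `V'`. -/
def removedTriples {β : Type*} [Fintype β] (TV' : Finset (Finset β)) :
    Finset (Finset (NESet β)) :=
  Finset.univ.filter fun t : Finset (NESet β) =>
    ∃ a b c : β, ({a, b, c} : Finset β) ∈ TV' ∧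
      (t = {pEl a b, pEl a c, pEl b c} ∨ t = {sEl a, sEl b, pEl a b} ∨
       t = {sEl a, sEl c, pEl a c} ∨ t = {sEl b, sEl c, pEl b c})

/-- The new triples of Cameron's construction, for each triple `{a,b,c}` of `V'`. -/
def addedTriples {β : Type*} [Fintype β] (TV' : Finset (Finset β)) :
    Finset (Finset (NESet β)) :=
  Finset.univ.filter fun t : Finset (NESet β) =>
    ∃ a b c : β, ({a, b, c} : Finset β) ∈ TV' ∧
      (t = {sEl a, sEl b, sEl c} ∨ t = {sEl a, pEl a b, pEl a c} ∨
       t = {sEl b, pEl a b, pEl b c} ∨ t = {sEl c, pEl a c, pEl b c})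

/-- The Steiner triple system `U` of Cameron's construction obtained from the
projective space `P` and the partial system `V'`. -/
def CameronSTS {β : Type*} [Fintype β] (TV' : Finset (Finset β)) :
    Finset (Finset (NESet β)) :=
  (sdTriples β \ removedTriples TV') ∪ addedTriples TV'

/-! ### Steiner quasigroups -/

/-- A Steiner quasigroup operation: for `x ≠ y` the triple through `x, y` is `{x, y, m x y}`. -/
structure IsSteiner {P : Type*} (m : P → P → P) : Prop where
  idem : ∀ x, m x x = x
  comm : ∀ x y, m x y = m y x
  inv : ∀ x y, m x (m x y) = y

/-- Automorphisms of a binary operation. -/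
def IsOpAut {P : Type*} (m : P → P → P) (g : Equiv.Perm P) : Prop :=
  ∀ x y, g (m x y) = m (g x) (g y)

/-- The triple system of a Steiner quasigroup. -/
def steinerTriples {P : Type*} [Fintype P] (m : P → P → P) : Finset (Finset P) :=
  Finset.univ.filter fun t => ∃ x y, x ≠ y ∧ t = {x, y, m x y}

namespace IsSteiner

variable {P : Type*} {m : P → P → P}

theorem ne_left (hm : IsSteiner m) {x y : P} (h : x ≠ y) : m x y ≠ x := by
  intro e
  apply h
  have := hm.inv x y
  rw [e, hm.idem] at this
  exact this

theorem ne_right (hm : IsSteiner m) {x y : P} (h : x ≠ y) : m x y ≠ y := by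
  rw [hm.comm]; exact hm.ne_left h.symm

theorem left_cancel (hm : IsSteiner m) {x y z : P} (h : m x y = m x z) : y = z := by
  rw [← hm.inv x y, h, hm.inv]

theorem eq_iff (hm : IsSteiner m) {x y z : P} : m x y = z ↔ y = m x z := by
  constructor
  · rintro rfl; rw [hm.inv]
  · rintro rfl; rw [hm.inv]

theorem eq_of_mem [Fintype P] (hm : IsSteiner m) {t : Finset P} (ht : t ∈ steinerTriples m)
    {p q : P} (hp : p ∈ t) (hq : q ∈ t) (hpq : p ≠ q) : t = {p, q, m p q} := by
  simp only [steinerTriples, mem_filter, mem_univ, true_and] at ht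
  obtain ⟨x, y, hxy, rfl⟩ := ht
  simp only [mem_insert, mem_singleton] at hp hq
  have h1 := hm.inv x y
  have h2 : m y (m x y) = x := by rw [hm.comm x y, hm.inv]
  have h3 : m (m x y) x = y := by rw [hm.comm, h1]
  have h4 : m (m x y) y = x := by rw [hm.comm, h2]
  have h5 := hm.comm y x
  rcases hp with rfl | rfl | rfl <;> rcases hq with rfl | rfl | rfl <;>
    first
      | exact absurd rfl hpq
      | (ext z; simp only [h1, h2, h3, h4, h5, mem_insert, mem_singleton] <;> tauto)

theorem mem_triples [Fintype P] {p q : P} (hpq : p ≠ q) :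
    ({p, q, m p q} : Finset P) ∈ steinerTriples m := by
  simp only [steinerTriples, mem_filter, mem_univ, true_and]
  exact ⟨p, q, hpq, rfl⟩

theorem card_eq_three (hm : IsSteiner m) {x y : P} (h : x ≠ y) :
    ({x, y, m x y} : Finset P).card = 3 :=
  Finset.card_eq_three.2 ⟨x, y, m x y, h, (hm.ne_left h).symm, (hm.ne_right h).symm, rfl⟩

theorem isSTS [Fintype P] (hm : IsSteiner m) : IsSTS (steinerTriples m) := by
  refine ⟨?_, ?_⟩
  · intro t ht
    simp only [steinerTriples, mem_filter, mem_univ, true_and] at ht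
    obtain ⟨x, y, hxy, rfl⟩ := ht
    exact hm.card_eq_three hxy
  · intro p q hpq
    refine ⟨{p, q, m p q}, ⟨mem_triples hpq, by simp, by simp⟩, ?_⟩
    rintro t ⟨ht, hp, hq⟩
    exact hm.eq_of_mem ht hp hq hpq

theorem isAut_iff [Fintype P] (hm : IsSteiner m) (g : Equiv.Perm P) :
    IsAut (steinerTriples m) g ↔ IsOpAut m g := by
  constructor
  · intro h x y
    by_cases hxy : x = y
    · subst hxy; rw [hm.idem, hm.idem]
    have h1 := (h _).1 (mem_triples (m := m) hxy)
    have hg : g x ≠ g y := fun e => hxy (g.injective e)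
    have h2 := hm.eq_of_mem h1 (mem_image_of_mem g (by simp : x ∈ _))
      (mem_image_of_mem g (by simp : y ∈ _)) hg
    have h3 : g (m x y) ∈ ({g x, g y, m (g x) (g y)} : Finset P) := by
      rw [← h2]; exact mem_image_of_mem g (by simp)
    simp only [mem_insert, mem_singleton] at h3
    rcases h3 with h3 | h3 | h3
    · exact absurd (g.injective h3) (hm.ne_left hxy)
    · exact absurd (g.injective h3) (hm.ne_right hxy)
    · exact h3
  · intro h t
    constructor
    · intro ht
      simp only [steinerTriples, mem_filter, mem_univ, true_and] at ht
      obtain ⟨x, y, hxy, rfl⟩ := ht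
      rw [image_insert, image_insert, image_singleton, h x y]
      exact mem_triples fun e => hxy (g.injective e)
    · intro ht
      simp only [steinerTriples, mem_filter, mem_univ, true_and] at ht
      obtain ⟨x, y, hxy, e⟩ := ht
      obtain ⟨x, rfl⟩ := g.surjective x
      obtain ⟨y, rfl⟩ := g.surjective y
      have : t = {x, y, m x y} := by
        apply Finset.image_injective g.injective
        simp only [image_insert, image_singleton]
        rw [e, h x y]
      rw [this]
      exact mem_triples fun e => hxy (congrArg g e)

end IsSteiner

/-- `φ` places the partial system `TV` in the Steiner quasigroup `m`, in such a way that the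
automorphisms of `m` restrict bijectively to the automorphisms of `TV`. -/
structure IsEnvelope {α U : Type*} (TV : Finset (Finset α)) (m : U → U → U) (φ : α → U) :
    Prop where
  steiner : IsSteiner m
  inj : Function.Injective φ
  triple : ∀ a b c, a ≠ b → (m (φ a) (φ b) = φ c ↔ ({a, b, c} : Finset α) ∈ TV)
  lift : ∀ h : Equiv.Perm α, IsAut TV h → ∃ g, IsOpAut m g ∧ ∀ a, g (φ a) = φ (h a)
  restrict : ∀ g, IsOpAut m g → ∀ a, ∃ b, g (φ a) = φ b
  faithful : ∀ g, IsOpAut m g → (∀ a, g (φ a) = φ a) → g = 1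

theorem IsOpAut.mul {P : Type*} {m : P → P → P} {g h : Equiv.Perm P} (hg : IsOpAut m g)
    (hh : IsOpAut m h) : IsOpAut m (g * h) := by
  intro x y
  simp only [Equiv.Perm.coe_mul, Function.comp_apply, hh x y, hg _ _]

theorem IsOpAut.inv {P : Type*} {m : P → P → P} {g : Equiv.Perm P} (hg : IsOpAut m g) :
    IsOpAut m g⁻¹ := by
  intro x y
  apply g.injective
  rw [hg]
  simp

namespace IsEnvelope

variable {α U U' : Type*} {TV : Finset (Finset α)} {m : U → U → U} {φ : α → U}

theorem transport (h : IsEnvelope TV m φ) (e : U ≃ U') :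
    IsEnvelope TV (fun x y => e (m (e.symm x) (e.symm y))) (fun a => e (φ a)) where
  steiner :=
    { idem := fun x => by simp [h.steiner.idem]
      comm := fun x y => by rw [h.steiner.comm]
      inv := fun x y => by simp [h.steiner.inv] }
  inj := e.injective.comp h.inj
  triple a b c hab := by simpa using h.triple a b c hab
  lift σ hσ := by
    obtain ⟨g, hg, hgφ⟩ := h.lift σ hσ
    refine ⟨e.permCongr g, fun x y => ?_, fun a => ?_⟩
    · simp [Equiv.permCongr_apply, hg _ _]
    · simp [Equiv.permCongr_apply, hgφ]
  restrict g hg a := by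
    have hg' : IsOpAut m (e.symm.permCongr g) := fun x y => by
      have := hg (e x) (e y)
      simp only [Equiv.symm_apply_apply] at this
      simp [Equiv.permCongr_apply, this]
    obtain ⟨b, hb⟩ := h.restrict _ hg' a
    refine ⟨b, ?_⟩
    rw [← hb]; simp [Equiv.permCongr_apply]
  faithful g hg hgφ := by
    have hg' : IsOpAut m (e.symm.permCongr g) := fun x y => by
      have := hg (e x) (e y)
      simp only [Equiv.symm_apply_apply] at this
      simp [Equiv.permCongr_apply, this]
    have h1 := h.faithful _ hg' fun a => by simp [Equiv.permCongr_apply, hgφ]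
    ext x
    have := congrArg (fun k : Equiv.Perm U => e (k (e.symm x))) h1
    simpa [Equiv.permCongr_apply] using this

theorem exists_perm [Fintype α] (h : IsEnvelope TV m φ) (hV : IsPSTS TV) {g : Equiv.Perm U}
    (hg : IsOpAut m g) : ∃ σ : Equiv.Perm α, IsAut TV σ ∧ ∀ a, g (φ a) = φ (σ a) := by
  choose f hf using h.restrict g hg
  have hfi : Function.Injective f := by
    intro a b e
    apply h.inj; apply g.injective
    rw [hf, hf, e]
  let σ : Equiv.Perm α := Equiv.ofBijective f (Finite.injective_iff_bijective.1 hfi)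
  have hσ : ∀ a, σ a = f a := fun a => rfl
  refine ⟨σ, ?_, hf⟩
  have key : ∀ a b c, a ≠ b →
      (({a, b, c} : Finset α) ∈ TV ↔ ({f a, f b, f c} : Finset α) ∈ TV) := by
    intro a b c hab
    rw [← h.triple a b c hab, ← h.triple _ _ _ (fun e => hab (hfi e)), ← hf, ← hf, ← hf, ← hg]
    exact g.injective.eq_iff.symm
  intro t
  have hc : (t.image σ).card = t.card := Finset.card_image_of_injective _ σ.injective
  by_cases h3 : t.card = 3
  · obtain ⟨a, b, c, hab, -, -, rfl⟩ := Finset.card_eq_three.1 h3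
    rw [key a b c hab]
    simp [Finset.image_insert, hσ]
  · exact ⟨fun ht => absurd (hV.1 t ht) h3, fun ht => absurd (hc ▸ hV.1 _ ht) h3⟩

theorem fullEmbedding [Fintype α] [Fintype U] (h : IsEnvelope TV m φ) (hV : IsPSTS TV) :
    FullEmbedding TV (steinerTriples m) φ := by
  have hm := h.steiner
  refine ⟨⟨h.inj, ?_, ?_⟩, ?_, ?_, ?_⟩
  · intro s hs
    obtain ⟨a, b, c, hab, -, -, rfl⟩ := Finset.card_eq_three.1 (hV.1 s hs)
    rw [image_insert, image_insert, image_singleton, ← (h.triple a b c hab).2 hs]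
    exact IsSteiner.mem_triples fun e => hab (h.inj e)
  · intro t ht hsub
    obtain ⟨x, y, z, hxy, -, -, rfl⟩ := Finset.card_eq_three.1 (hm.isSTS.1 t ht)
    have hmem : ∀ w ∈ ({x, y, z} : Finset U), ∃ a, φ a = w := fun w hw => by
      simpa using hsub hw
    obtain ⟨a, rfl⟩ := hmem x (by simp)
    obtain ⟨b, rfl⟩ := hmem y (by simp)
    obtain ⟨c, rfl⟩ := hmem z (by simp)
    have hab : a ≠ b := fun e => hxy (congrArg φ e)
    have e := hm.eq_of_mem ht (p := φ a) (q := φ b) (by simp) (by simp) hxy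
    have hmz : m (φ a) (φ b) ∈ ({φ a, φ b, φ c} : Finset U) := by rw [e]; simp
    simp only [mem_insert, mem_singleton] at hmz
    have hmc : m (φ a) (φ b) = φ c := by
      rcases hmz with h1 | h1 | h1
      · exact absurd h1 (hm.ne_left hxy)
      · exact absurd h1 (hm.ne_right hxy)
      · exact h1
    exact ⟨{a, b, c}, (h.triple a b c hab).1 hmc, by simp [image_insert]⟩
  · intro g hg
    obtain ⟨σ, -, hσ⟩ := h.exists_perm hV ((hm.isAut_iff g).1 hg)
    ext x
    simp only [mem_image, mem_univ, true_and]
    constructor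
    · rintro ⟨_, ⟨a, rfl⟩, rfl⟩
      exact ⟨σ a, (hσ a).symm⟩
    · rintro ⟨a, rfl⟩
      exact ⟨_, ⟨σ.symm a, rfl⟩, by rw [hσ]; simp⟩
  · intro g hg
    exact h.exists_perm hV ((hm.isAut_iff g).1 hg)
  · intro σ hσ
    obtain ⟨g, hg, hgφ⟩ := h.lift σ hσ
    refine ⟨g, ⟨(hm.isAut_iff g).2 hg, hgφ⟩, ?_⟩
    rintro g' ⟨hg', hgφ'⟩
    have h1 := h.faithful (g⁻¹ * g') (hg.inv.mul ((hm.isAut_iff g').1 hg')) fun a => by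
      rw [Equiv.Perm.coe_mul, Function.comp_apply, hgφ', ← hgφ]; simp
    exact (inv_mul_eq_one.1 h1).symm

theorem exists_fin [Fintype α] [Fintype U] (h : IsEnvelope TV m φ) (hV : IsPSTS TV) {u : ℕ}
    (hu : Fintype.card U = u) :
    ∃ T : Finset (Finset (Fin u)), IsSTS T ∧ ∃ ψ : α → Fin u, FullEmbedding TV T ψ := by
  have h' := h.transport (Fintype.equivFinOfCardEq hu)
  exact ⟨_, h'.steiner.isSTS, _, h'.fullEmbedding hV⟩

end IsEnvelope

/-! ### The Bose construction -/

/-- The Bose operation on `A × ZMod 3`, where `h` is a half of `1` in `A`. -/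
def boseOp {A : Type*} [CommRing A] (h : A) (p q : A × ZMod 3) : A × ZMod 3 :=
  if p.2 = q.2 then (if p.1 = q.1 then p else ((p.1 + q.1) * h, p.2 + 1))
  else if q.2 = p.2 + 1 then
    (if p.1 = q.1 then (p.1, p.2 + 2) else (2 * q.1 - p.1, p.2))
  else (if p.1 = q.1 then (p.1, p.2 + 1) else (2 * p.1 - q.1, q.2))

theorem boseOp_isSteiner {A : Type*} [CommRing A] {h : A} (hh : h * 2 = 1) :
    IsSteiner (boseOp h) where
  idem p := by simp [boseOp]
  comm p q := by
    obtain ⟨a, i⟩ := p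
    obtain ⟨b, j⟩ := q
    by_cases hab : a = b
    · subst hab
      simp only [boseOp, if_true]
      have key : ∀ i j : ZMod 3, (if i = j then i else if j = i + 1 then i + 2 else i + 1) =
          if j = i then j else if i = j + 1 then j + 2 else j + 1 := by decide
      have := key i j
      split_ifs at this ⊢ <;> exact Prod.ext rfl this
    · have hba : b ≠ a := fun e => hab e.symm
      simp only [boseOp, hab, hba, if_false]
      by_cases hij : i = j
      · subst hij; simp [add_comm]
      · have hji : j ≠ i := fun e => hij e.symm
        simp only [hij, hji, if_false]
        by_cases h1 : j = i + 1
        · have h2 : i ≠ j + 1 := by revert i j; decide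
          rw [if_pos h1, if_neg h2]
        · have h2 : i = j + 1 := by revert i j; decide
          rw [if_neg h1, if_pos h2]
  inv p q := by
    obtain ⟨a, i⟩ := p
    obtain ⟨b, j⟩ := q
    have two : ∀ x y : A, x * 2 = y * 2 → x = y := fun x y e => by
      linear_combination h * e - (x - y) * hh
    have n1 : i ≠ i + 1 := by revert i; decide
    have n2 : i ≠ i + 2 := by revert i; decide
    have n3 : i + 2 ≠ i + 1 := by revert i; decide
    by_cases hab : a = b
    · subst hab
      by_cases hij : i = j
      · subst hij; simp [boseOp]
      · by_cases h1 : j = i + 1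
        · subst h1; simp [boseOp, n1, n2, n3]
        · have h2 : j = i + 2 := by revert i j; decide
          subst h2; simp [boseOp, n1, n2, n3]
    · by_cases hij : i = j
      · subst hij
        have e1 : a ≠ (a + b) * h := fun e => hab (by linear_combination 2 * e + (a + b) * hh)
        have e2 : 2 * ((a + b) * h) - a = b := by linear_combination (a + b) * hh
        simp [boseOp, hab, n1, e1, e2]
      · by_cases h1 : j = i + 1
        · subst h1
          have e1 : a ≠ 2 * b - a := fun e => hab (two _ _ (by linear_combination e))
          have e2 : 2 * b * h = b := by linear_combination b * hh
          simp [boseOp, hab, n1, e1, e2]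
        · have e1 : a ≠ 2 * a - b := fun e => hab (by linear_combination -e)
          simp [boseOp, hab, hij, h1, e1]

theorem exists_isSteiner_of_card {X : Type*} [Fintype X] {k : ℕ}
    (hX : Fintype.card X = 3 * (2 * k + 1)) : ∃ m : X → X → X, IsSteiner m := by
  have hh : ((k + 1 : ℕ) : ZMod (2 * k + 1)) * 2 = 1 := by
    have := ZMod.natCast_self (2 * k + 1)
    push_cast at this ⊢
    linear_combination this
  have hm := boseOp_isSteiner hh
  have hc : Fintype.card (ZMod (2 * k + 1) × ZMod 3) = Fintype.card X := by
    rw [Fintype.card_prod, ZMod.card, ZMod.card, hX, mul_comm]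
  let e := Fintype.equivOfCardEq hc
  generalize ((k + 1 : ℕ) : ZMod (2 * k + 1)) = c at hm
  exact ⟨fun x y => e (boseOp c (e.symm x) (e.symm y)),
    { idem := fun x => by simp [hm.idem]
      comm := fun x y => by rw [hm.comm]
      inv := fun x y => by simp [hm.inv] }⟩

/-! ### Modifying projective spaces over the field with two elements

Points are the nonempty subsets of a finite set `I`, lines the triples with vanishing sum
(symmetric difference). A trade `T s c` modifies the plane of all subsets of the `3`-set `s`
by shifting the product of any two points off their line through the centre `c`. -/

/-- A family of compatible trades. -/
structure IsTradeSystem {I : Type*} (T : Finset I → Finset I → Prop) : Prop where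
  card : ∀ s c, T s c → s.card = 3
  subset : ∀ s c, T s c → c ⊆ s
  nonempty : ∀ s c, T s c → c ≠ ∅
  unique : ∀ s c c', T s c → T s c' → c = c'
  compat : ∀ s c t d, T s c → T t d → s ≠ t → 2 ≤ (s ∩ t).card → c ⊆ t ∨ d ⊆ s

/-- The product of `p` and `q` is shifted by `c`. -/
def Shift {I : Type*} (T : Finset I → Finset I → Prop) (p q c : Finset I) : Prop :=
  ∃ s, T s c ∧ p ⊆ s ∧ q ⊆ s ∧ p ≠ ∅ ∧ q ≠ ∅ ∧ p ≠ q ∧ c ≠ p ∧ c ≠ q ∧ c ≠ symmDiff p q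

/-- The shift of the product of `p` and `q`, or `∅` if there is none. -/
def shift {I : Type*} (T : Finset I → Finset I → Prop) (p q : Finset I) : Finset I :=
  if h : ∃ c, Shift T p q c then h.choose else ∅

/-- The modified loop operation. -/
def loopOp {I : Type*} (T : Finset I → Finset I → Prop) (p q : Finset I) : Finset I :=
  symmDiff (symmDiff p q) (shift T p q)

section SymmDiff

variable {I : Type*}

theorem symmDiff_eq_empty_iff {p q : Finset I} : symmDiff p q = ∅ ↔ p = q := by
  rw [← Finset.bot_eq_empty, symmDiff_eq_bot]

theorem eq_of_subset_pair {p q c : Finset I} {x y : I} (hp : p ⊆ {x, y}) (hq : q ⊆ {x, y})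
    (hc : c ⊆ {x, y}) (hp0 : p ≠ ∅) (hq0 : q ≠ ∅) (hc0 : c ≠ ∅) (hpq : p ≠ q) :
    c = p ∨ c = q ∨ c = symmDiff p q := by
  have sub : ∀ r : Finset I, r ⊆ {x, y} → r = ∅ ∨ r = {x} ∨ r = {y} ∨ r = {x, y} := by
    intro r hr
    rw [← Finset.coe_subset, Finset.coe_pair, Set.subset_pair_iff_eq] at hr
    exact_mod_cast hr
  replace hp := sub p hp
  replace hq := sub q hq
  replace hc := sub c hc
  by_cases hxy : x = y
  · subst hxy
    simp_all
  have e1 : symmDiff ({x} : Finset I) {y} = {x, y} := by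
    ext z; simp only [Finset.mem_symmDiff, mem_insert, mem_singleton]; grind
  have e2 : symmDiff ({x} : Finset I) {x, y} = {y} := by
    ext z; simp only [Finset.mem_symmDiff, mem_insert, mem_singleton]; grind
  have e3 : symmDiff ({y} : Finset I) {x, y} = {x} := by
    ext z; simp only [Finset.mem_symmDiff, mem_insert, mem_singleton]; grind
  rcases hp with hp | rfl | rfl | rfl <;> rcases hq with hq | rfl | rfl | rfl <;>
    rcases hc with hc | rfl | rfl | rfl <;>
    first
      | exact absurd hp hp0
      | exact absurd hq hq0
      | exact absurd hc hc0
      | exact absurd rfl hpq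
      | exact Or.inl rfl
      | exact Or.inr (Or.inl rfl)
      | exact Or.inr (Or.inr (by rw [e1]))
      | exact Or.inr (Or.inr (by rw [e2]))
      | exact Or.inr (Or.inr (by rw [e3]))
      | exact Or.inr (Or.inr (by rw [symmDiff_comm, e1]))
      | exact Or.inr (Or.inr (by rw [symmDiff_comm, e2]))
      | exact Or.inr (Or.inr (by rw [symmDiff_comm, e3]))

theorem two_le_card_union {p q : Finset I} (hp : p ≠ ∅) (hq : q ≠ ∅) (hpq : p ≠ q) :
    2 ≤ (p ∪ q).card := by
  by_contra h
  have h1 : (p ∪ q).card ≤ 1 := by omega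
  rw [Finset.card_le_one] at h1
  obtain ⟨x, hx⟩ := Finset.nonempty_iff_ne_empty.2 hp
  obtain ⟨y, hy⟩ := Finset.nonempty_iff_ne_empty.2 hq
  apply hpq
  ext z
  constructor
  · intro hz
    rwa [h1 z (mem_union_left _ hz) y (mem_union_right _ hy)]
  · intro hz
    rwa [h1 z (mem_union_right _ hz) x (mem_union_left _ hx)]

end SymmDiff

namespace Shift

variable {I : Type*} {T : Finset I → Finset I → Prop} {p q c c' : Finset I}

theorem symm (h : Shift T p q c) : Shift T q p c := by
  obtain ⟨s, h1, h2, h3, h4, h5, h6, h7, h8, h9⟩ := h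
  exact ⟨s, h1, h3, h2, h5, h4, h6.symm, h8, h7, by rwa [symmDiff_comm]⟩

theorem line (h : Shift T p q c) : Shift T p (symmDiff p q) c := by
  obtain ⟨s, h1, h2, h3, h4, h5, h6, h7, h8, h9⟩ := h
  refine ⟨s, h1, h2, (Finset.symmDiff_subset_union).trans (union_subset h2 h3), h4, ?_, ?_, h7,
    h9, ?_⟩
  · rwa [Ne, symmDiff_eq_empty_iff]
  · rw [Ne, eq_comm, symmDiff_eq_left]; exact h5
  · rwa [symmDiff_symmDiff_cancel_left]

theorem shifted (hT : IsTradeSystem T) (h : Shift T p q c) :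
    Shift T p (symmDiff (symmDiff p q) c) c := by
  obtain ⟨s, h1, h2, h3, h4, h5, h6, h7, h8, h9⟩ := h
  refine ⟨s, h1, h2, ?_, h4, ?_, ?_, h7, ?_, ?_⟩
  · exact Finset.symmDiff_subset_union.trans
      (union_subset (Finset.symmDiff_subset_union.trans (union_subset h2 h3)) (hT.subset s c h1))
  · rw [Ne, symmDiff_eq_empty_iff]; exact h9.symm
  · rw [Ne, eq_comm, symmDiff_assoc, symmDiff_eq_left, Finset.bot_eq_empty, symmDiff_eq_empty_iff]
    exact h8.symm
  · rw [Ne, eq_comm, symmDiff_eq_right, Finset.bot_eq_empty, symmDiff_eq_empty_iff]; exact h6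
  · rw [symmDiff_assoc, symmDiff_symmDiff_cancel_left, Ne, eq_comm, symmDiff_eq_right]; exact h5

theorem unique (hT : IsTradeSystem T) (h : Shift T p q c) (h' : Shift T p q c') : c = c' := by
  obtain ⟨s, h1, h2, h3, h4, h5, h6, h7, h8, h9⟩ := h
  obtain ⟨s', h1', h2', h3', -, -, -, h7', h8', h9'⟩ := h'
  by_cases hs : s = s'
  · subst hs; exact hT.unique s c c' h1 h1'
  exfalso
  have hsub : p ∪ q ⊆ s ∩ s' :=
    union_subset (subset_inter h2 h2') (subset_inter h3 h3')
  have hc2 := (two_le_card_union h4 h5 h6).trans (card_le_card hsub)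
  have hc3 : (s ∩ s').card < 3 := by
    by_contra hlt
    have e1 := hT.card s c h1
    have e2 := hT.card s' c' h1'
    have f1 : s ∩ s' = s := eq_of_subset_of_card_le inter_subset_left (by omega)
    have f2 : s ∩ s' = s' := eq_of_subset_of_card_le inter_subset_right (by omega)
    exact hs (f1.symm.trans f2)
  obtain ⟨x, y, -, hxy⟩ := Finset.card_eq_two.1 (show (s ∩ s').card = 2 by omega)
  have hp := subset_union_left.trans (hxy ▸ hsub)
  have hq := subset_union_right.trans (hxy ▸ hsub)
  rcases hT.compat s c s' c' h1 h1' hs hc2 with hh | hh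
  · have := eq_of_subset_pair hp hq (hxy ▸ subset_inter (hT.subset s c h1) hh) h4 h5
      (hT.nonempty s c h1) h6
    tauto
  · have := eq_of_subset_pair hp hq (hxy ▸ subset_inter hh (hT.subset s' c' h1')) h4 h5
      (hT.nonempty s' c' h1') h6
    tauto

theorem ne_empty (hT : IsTradeSystem T) (h : Shift T p q c) : c ≠ ∅ := by
  obtain ⟨s, h1, -⟩ := h
  exact hT.nonempty s c h1

theorem card_le (hT : IsTradeSystem T) (h : Shift T p q c) : q.card ≤ 3 := by
  obtain ⟨s, h1, -, h3, -⟩ := h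
  rw [← hT.card s c h1]
  exact card_le_card h3

theorem shift_eq (hT : IsTradeSystem T) (h : Shift T p q c) : shift T p q = c := by
  have hex : ∃ c, Shift T p q c := ⟨c, h⟩
  rw [shift, dif_pos hex]
  exact unique hT hex.choose_spec h

theorem iff_shift_eq (hT : IsTradeSystem T) : Shift T p q c ↔ shift T p q = c ∧ c ≠ ∅ := by
  refine ⟨fun h => ⟨h.shift_eq hT, h.ne_empty hT⟩, ?_⟩
  rintro ⟨rfl, h⟩
  by_cases hex : ∃ c, Shift T p q c
  · obtain ⟨c, hc⟩ := hex
    rwa [hc.shift_eq hT]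
  · rw [shift, dif_neg hex] at h
    exact absurd rfl h

end Shift

section Loop

variable {I : Type*} {T : Finset I → Finset I → Prop}

theorem shift_congr {p q p' q' : Finset I} (hT : IsTradeSystem T)
    (h : ∀ c, Shift T p q c ↔ Shift T p' q' c) : shift T p q = shift T p' q' := by
  by_cases hex : ∃ c, Shift T p q c
  · obtain ⟨c, hc⟩ := hex
    rw [hc.shift_eq hT, ((h c).1 hc).shift_eq hT]
  · have hex' : ¬ ∃ c, Shift T p' q' c := by simpa only [h] using hex
    rw [shift, shift, dif_neg hex, dif_neg hex']

theorem shift_eq_empty {p q : Finset I} (h : ∀ c, ¬ Shift T p q c) : shift T p q = ∅ := by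
  rw [shift, dif_neg (by simpa using h)]

theorem loopOp_comm (hT : IsTradeSystem T) (p q : Finset I) : loopOp T p q = loopOp T q p := by
  rw [loopOp, loopOp, symmDiff_comm p q,
    shift_congr hT fun c => (⟨Shift.symm, Shift.symm⟩ : Shift T p q c ↔ Shift T q p c)]

theorem loopOp_eq_of_shift (hT : IsTradeSystem T) {p q c : Finset I} (h : Shift T p q c) :
    loopOp T p q = symmDiff (symmDiff p q) c := by
  rw [loopOp, h.shift_eq hT]

theorem loopOp_eq_of_forall_not {p q : Finset I} (h : ∀ c, ¬ Shift T p q c) :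
    loopOp T p q = symmDiff p q := by
  rw [loopOp, shift_eq_empty h, ← Finset.bot_eq_empty, symmDiff_bot]

theorem loopOp_inv (hT : IsTradeSystem T) (p q : Finset I) :
    loopOp T p (loopOp T p q) = q := by
  by_cases hex : ∃ c, Shift T p q c
  · obtain ⟨c, hc⟩ := hex
    rw [loopOp_eq_of_shift hT hc, loopOp_eq_of_shift hT (hc.shifted hT), symmDiff_assoc p q c,
      symmDiff_symmDiff_cancel_left, symmDiff_symmDiff_cancel_right]
  · have hex' : ∀ c, ¬ Shift T p q c := by simpa using hex
    rw [loopOp_eq_of_forall_not hex', loopOp_eq_of_forall_not, symmDiff_symmDiff_cancel_left]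
    intro c hc
    apply hex' c
    have := hc.line
    rwa [symmDiff_symmDiff_cancel_left] at this

theorem loopOp_self (p : Finset I) : loopOp T p p = ∅ := by
  rw [loopOp_eq_of_forall_not, symmDiff_self, Finset.bot_eq_empty]
  rintro c ⟨s, -, -, -, -, -, h, -⟩
  exact h rfl

theorem loopOp_empty (p : Finset I) : loopOp T p ∅ = p := by
  rw [loopOp_eq_of_forall_not, ← Finset.bot_eq_empty, symmDiff_bot]
  rintro c ⟨s, -, -, -, -, h, -⟩
  exact h rfl

theorem loopOp_ne_empty (hT : IsTradeSystem T) {p q : Finset I} (h : p ≠ q) :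
    loopOp T p q ≠ ∅ := by
  intro e
  have := loopOp_inv hT p q
  rw [e, loopOp_empty] at this
  exact h this

/-- The Steiner quasigroup of a trade system, on the nonempty subsets. -/
def tradeOp (T : Finset I → Finset I → Prop) (p q : {p : Finset I // p ≠ ∅}) :
    {p : Finset I // p ≠ ∅} :=
  if p = q then p else if h : loopOp T p q ≠ ∅ then ⟨loopOp T p q, h⟩ else p

theorem tradeOp_coe (hT : IsTradeSystem T) {p q : {p : Finset I // p ≠ ∅}} (h : p ≠ q) :
    (tradeOp T p q : Finset I) = loopOp T p q := by
  rw [tradeOp, if_neg h, dif_pos (loopOp_ne_empty hT fun e => h (Subtype.ext e))]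

theorem tradeOp_isSteiner (hT : IsTradeSystem T) : IsSteiner (tradeOp T) where
  idem p := by simp [tradeOp]
  comm p q := by
    by_cases h : p = q
    · rw [h]
    · apply Subtype.ext
      rw [tradeOp_coe hT h, tradeOp_coe hT (Ne.symm h), loopOp_comm hT]
  inv p q := by
    by_cases h : p = q
    · subst h; simp [tradeOp]
    · have h1 : p ≠ tradeOp T p q := by
        intro e
        have e1 := congrArg Subtype.val e
        rw [tradeOp_coe hT h] at e1
        have e2 := loopOp_inv hT p q
        rw [← e1, loopOp_self] at e2
        exact q.2 e2.symm
      apply Subtype.ext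
      rw [tradeOp_coe hT h1, tradeOp_coe hT h, loopOp_inv hT]

/-- The extension of a permutation of the nonempty subsets by `∅ ↦ ∅`. -/
def extendEmpty (g : Equiv.Perm {p : Finset I // p ≠ ∅}) : Equiv.Perm (Finset I) :=
  Equiv.Perm.ofSubtype g

theorem extendEmpty_coe (g : Equiv.Perm {p : Finset I // p ≠ ∅}) (p : {p : Finset I // p ≠ ∅}) :
    extendEmpty g p = g p :=
  Equiv.Perm.ofSubtype_apply_coe g p

theorem extendEmpty_empty (g : Equiv.Perm {p : Finset I // p ≠ ∅}) : extendEmpty g ∅ = ∅ :=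
  Equiv.Perm.ofSubtype_apply_of_not_mem g (by simp)

theorem extendEmpty_loopOp (hT : IsTradeSystem T) {g : Equiv.Perm {p : Finset I // p ≠ ∅}}
    (hg : IsOpAut (tradeOp T) g) (p q : Finset I) :
    extendEmpty g (loopOp T p q) = loopOp T (extendEmpty g p) (extendEmpty g q) := by
  by_cases hp : p = ∅
  · subst hp
    rw [loopOp_comm hT, loopOp_empty, extendEmpty_empty, loopOp_comm hT, loopOp_empty]
  by_cases hq : q = ∅
  · subst hq
    rw [loopOp_empty, extendEmpty_empty, loopOp_empty]
  by_cases hpq : p = q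
  · subst hpq
    rw [loopOp_self, loopOp_self, extendEmpty_empty]
  have hne : (⟨p, hp⟩ : {p : Finset I // p ≠ ∅}) ≠ ⟨q, hq⟩ := fun e =>
    hpq (congrArg Subtype.val e)
  have h1 := congrArg Subtype.val (hg ⟨p, hp⟩ ⟨q, hq⟩)
  rw [tradeOp_coe hT (fun e => hne (g.injective e)), ← extendEmpty_coe, ← extendEmpty_coe,
    ← extendEmpty_coe, tradeOp_coe hT hne] at h1
  exact h1

theorem card_filter_card_le_three [Fintype I] :
    (univ.filter fun p : Finset I => p.card ≤ 3).card ≤ (Fintype.card I + 1) ^ 3 := by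
  let f : Option I × Option I × Option I → Finset I := fun x =>
    x.1.toFinset ∪ (x.2.1.toFinset ∪ x.2.2.toFinset)
  have hsub : (univ.filter fun p : Finset I => p.card ≤ 3) ⊆ univ.image f := by
    intro p hp
    simp only [mem_filter, mem_univ, true_and] at hp
    simp only [mem_image, mem_univ, true_and]
    have h4 : p.card = 0 ∨ p.card = 1 ∨ p.card = 2 ∨ p.card = 3 := by omega
    rcases h4 with h | h | h | h
    · exact ⟨(none, none, none), by simp [f, Finset.card_eq_zero.1 h]⟩
    · obtain ⟨a, rfl⟩ := Finset.card_eq_one.1 h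
      exact ⟨(some a, none, none), by simp [f]⟩
    · obtain ⟨a, b, -, rfl⟩ := Finset.card_eq_two.1 h
      exact ⟨(some a, some b, none), by ext z; simp [f]⟩
    · obtain ⟨a, b, c, -, -, -, rfl⟩ := Finset.card_eq_three.1 h
      exact ⟨(some a, some b, some c), by ext z; simp [f]; tauto⟩
  refine (card_le_card hsub).trans (card_image_le.trans (le_of_eq ?_))
  simp only [card_univ, Fintype.card_prod, Fintype.card_option]
  ring

theorem extendEmpty_symmDiff [Fintype I] (hT : IsTradeSystem T)
    (hI : 4 * (Fintype.card I + 1) ^ 3 < 2 ^ Fintype.card I)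
    {g : Equiv.Perm {p : Finset I // p ≠ ∅}} (hg : IsOpAut (tradeOp T) g) (a b : Finset I) :
    extendEmpty g (symmDiff a b) = symmDiff (extendEmpty g a) (extendEmpty g b) := by
  set G := extendEmpty g with hG
  set B := univ.filter fun p : Finset I => p.card ≤ 3 with hB
  have hBc : B.card ≤ (Fintype.card I + 1) ^ 3 := card_filter_card_le_three
  have large : ∀ p q : Finset I, q ∉ B → loopOp T p q = symmDiff p q := by
    intro p q hq
    refine loopOp_eq_of_forall_not fun c hc => hq ?_
    simpa [hB] using hc.card_le hT
  have pre : ∀ f : Finset I → Finset I, Function.Injective f →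
      (univ.filter fun x => f x ∈ B).card ≤ B.card := fun f hf =>
    card_le_card_of_injOn f (fun x hx => by simpa using hx) hf.injOn
  have inj : Function.Injective fun x : Finset I => symmDiff b x := fun x y e =>
    symmDiff_right_injective b e
  obtain ⟨x, hx⟩ : ∃ x, x ∉ (univ.filter fun x => x ∈ B) ∪ (univ.filter fun x => symmDiff b x ∈ B) ∪
      ((univ.filter fun x => G x ∈ B) ∪ (univ.filter fun x => G (symmDiff b x) ∈ B)) := by
    by_contra hall
    push Not at hall
    have h1 := card_le_card fun x (_ : x ∈ (univ : Finset (Finset I))) => hall x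
    rw [card_univ, Fintype.card_finset] at h1
    have h2 := card_union_le ((univ.filter fun x => x ∈ B) ∪ (univ.filter fun x => symmDiff b x ∈ B))
      ((univ.filter fun x => G x ∈ B) ∪ (univ.filter fun x => G (symmDiff b x) ∈ B))
    have h3 := card_union_le (univ.filter fun x => x ∈ B) (univ.filter fun x => symmDiff b x ∈ B)
    have h4 := card_union_le (univ.filter fun x => G x ∈ B)
      (univ.filter fun x => G (symmDiff b x) ∈ B)
    have k1 := pre id Function.injective_id
    have k2 := pre _ inj
    have k3 := pre G G.injective
    have k4 := pre _ (G.injective.comp inj)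
    simp only [id, Function.comp_apply] at k1 k2 k3 k4
    omega
  simp only [mem_union, mem_filter, mem_univ, true_and, not_or] at hx
  obtain ⟨⟨hx1, hx2⟩, hx3, hx4⟩ := hx
  have e1 : G (symmDiff (symmDiff a b) x) = symmDiff (G (symmDiff a b)) (G x) := by
    rw [← large _ _ hx1, hG, extendEmpty_loopOp hT hg, ← hG, large _ _ hx3]
  have e2 : G (symmDiff b x) = symmDiff (G b) (G x) := by
    rw [← large _ _ hx1, hG, extendEmpty_loopOp hT hg, ← hG, large _ _ hx3]
  have e3 : G (symmDiff a (symmDiff b x)) = symmDiff (G a) (G (symmDiff b x)) := by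
    rw [← large a _ hx2, hG, extendEmpty_loopOp hT hg, ← hG, large _ _ hx4]
  rw [symmDiff_assoc, e3, e2, ← symmDiff_assoc] at e1
  exact (symmDiff_left_injective (G x) e1).symm

theorem extendEmpty_shift [Fintype I] (hT : IsTradeSystem T)
    (hI : 4 * (Fintype.card I + 1) ^ 3 < 2 ^ Fintype.card I)
    {g : Equiv.Perm {p : Finset I // p ≠ ∅}} (hg : IsOpAut (tradeOp T) g) {p q c : Finset I}
    (h : Shift T p q c) : Shift T (extendEmpty g p) (extendEmpty g q) (extendEmpty g c) := by
  have e := extendEmpty_loopOp hT hg p q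
  rw [loopOp, loopOp, extendEmpty_symmDiff hT hI hg, extendEmpty_symmDiff hT hI hg] at e
  have e1 := symmDiff_right_injective _ e
  rw [h.shift_eq hT] at e1
  rw [Shift.iff_shift_eq hT]
  refine ⟨e1.symm, fun e0 => h.ne_empty hT ?_⟩
  rw [← extendEmpty_empty g] at e0
  exact (extendEmpty g).injective e0

theorem extendEmpty_eq_one {g : Equiv.Perm {p : Finset I // p ≠ ∅}}
    (h : ∀ a b, extendEmpty g (symmDiff a b) = symmDiff (extendEmpty g a) (extendEmpty g b))
    (h1 : ∀ x, extendEmpty g {x} = {x}) : g = 1 := by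
  have h2 : ∀ p, extendEmpty g p = p := by
    intro p
    induction p using Finset.induction_on with
    | empty => exact extendEmpty_empty g
    | insert a s ha ih =>
      have e : insert a s = symmDiff {a} s := by
        ext z; simp only [mem_insert, Finset.mem_symmDiff, mem_singleton]; grind
      rw [e, h, ih, h1]
  ext p : 2
  rw [← extendEmpty_coe, h2]
  rfl

/-- A permutation of `I` preserving the trades induces an automorphism. -/
theorem exists_isOpAut_of_perm (hT : IsTradeSystem T) (π : Equiv.Perm I)
    (hπ : ∀ s c, T s c ↔ T (s.image π) (c.image π)) :
    ∃ g, IsOpAut (tradeOp T) g ∧ ∀ p, (g p : Finset I) = (p : Finset I).image π := by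
  let g : Equiv.Perm {p : Finset I // p ≠ ∅} := (π.finsetCongr).subtypeEquiv fun p => by
    simp [Equiv.finsetCongr_apply]
  have hgp : ∀ p, (g p : Finset I) = (p : Finset I).image π := fun p => by
    simp [g, Equiv.finsetCongr_apply, Finset.map_eq_image]
  have inj : Function.Injective fun p : Finset I => p.image π := Finset.image_injective π.injective
  have img : ∀ p q : Finset I, (symmDiff p q).image π = symmDiff (p.image π) (q.image π) :=
    fun p q => Finset.image_symmDiff p q π.injective
  have surj : ∀ p : Finset I, ∃ q : Finset I, q.image π = p := fun p =>
    ⟨p.image π.symm, by rw [image_image]; simp⟩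
  have hS : ∀ p q c, Shift T p q c ↔ Shift T (p.image π) (q.image π) (c.image π) := by
    intro p q c
    have key : ∀ s, (T s c ∧ p ⊆ s ∧ q ⊆ s ∧ p ≠ ∅ ∧ q ≠ ∅ ∧ p ≠ q ∧ c ≠ p ∧ c ≠ q ∧
        c ≠ symmDiff p q) ↔ (T (s.image π) (c.image π) ∧ p.image π ⊆ s.image π ∧
        q.image π ⊆ s.image π ∧ p.image π ≠ ∅ ∧ q.image π ≠ ∅ ∧ p.image π ≠ q.image π ∧
        c.image π ≠ p.image π ∧ c.image π ≠ q.image π ∧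
        c.image π ≠ symmDiff (p.image π) (q.image π)) := by
      intro s
      rw [← hπ, ← img, Finset.image_subset_image_iff π.injective,
        Finset.image_subset_image_iff π.injective]
      simp only [ne_eq, inj.eq_iff, Finset.image_eq_empty]
    constructor
    · rintro ⟨s, hs⟩
      exact ⟨s.image π, (key s).1 hs⟩
    · rintro ⟨s, hs⟩
      obtain ⟨s, rfl⟩ := surj s
      exact ⟨s, (key s).2 hs⟩
  have hop : ∀ p q, (loopOp T p q).image π = loopOp T (p.image π) (q.image π) := by
    intro p q
    by_cases hex : ∃ c, Shift T p q c
    · obtain ⟨c, hc⟩ := hex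
      rw [loopOp_eq_of_shift hT hc, loopOp_eq_of_shift hT ((hS p q c).1 hc), img, img]
    · have hex1 : ∀ c, ¬ Shift T p q c := by simpa using hex
      have hex2 : ∀ c, ¬ Shift T (p.image π) (q.image π) c := by
        intro c
        obtain ⟨c, rfl⟩ := surj c
        rw [← hS]; exact hex1 c
      rw [loopOp_eq_of_forall_not hex1, loopOp_eq_of_forall_not hex2, img]
  refine ⟨g, fun p q => ?_, hgp⟩
  by_cases hpq : p = q
  · subst hpq
    rw [(tradeOp_isSteiner hT).idem, (tradeOp_isSteiner hT).idem]
  · apply Subtype.ext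
    rw [hgp, tradeOp_coe hT hpq, tradeOp_coe hT (fun e => hpq (g.injective e)), hop, hgp, hgp]

end Loop

/-! ### A rigid trade system around a partial Steiner triple system -/

/-- The set `α` together with a chain of `k` further points. -/
def ChainIdx (k : ℕ) (α : Type*) : Type _ := Fin k ⊕ α

instance {k : ℕ} {α : Type*} [Fintype α] : Fintype (ChainIdx k α) :=
  inferInstanceAs (Fintype (Fin k ⊕ α))

/-- The points of the chain. -/
def chainPt {α : Type*} {k : ℕ} [NeZero k] (i : ℕ) : ChainIdx k α := Sum.inl (Fin.ofNat k i)

/-- The points of `α`. -/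
def basePt {α : Type*} {k : ℕ} (a : α) : ChainIdx k α := Sum.inr a

theorem card_chainIdx (k : ℕ) (α : Type*) [Fintype α] :
    Fintype.card (ChainIdx k α) = k + Fintype.card α :=
  (Fintype.card_sum (α := Fin k) (β := α)).trans (by rw [Fintype.card_fin])

theorem chainPt_inj {α : Type*} {k : ℕ} [NeZero k] {i j : ℕ} (hi : i < k) (hj : j < k)
    (h : (chainPt i : ChainIdx k α) = chainPt j) : i = j := by
  have := congrArg Fin.val (Sum.inl_injective h)
  simpa [Fin.ofNat, Nat.mod_eq_of_lt hi, Nat.mod_eq_of_lt hj] using this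

theorem basePt_injective {α : Type*} {k : ℕ} :
    Function.Injective (basePt : α → ChainIdx k α) := Sum.inr_injective

theorem chainPt_ne_basePt {α : Type*} {k : ℕ} [NeZero k] (i : ℕ) (a : α) :
    (chainPt i : ChainIdx k α) ≠ basePt a := Sum.inl_ne_inr

theorem exists_chainPt {α : Type*} {k : ℕ} [NeZero k] (x : ChainIdx k α) :
    (∃ i < k, x = chainPt i) ∨ ∃ a, x = basePt a := by
  rcases x with i | a
  · exact Or.inl ⟨i, i.2, congrArg Sum.inl (by ext; simp)⟩
  · exact Or.inr ⟨a, rfl⟩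

theorem chainPt_notMem_image_basePt {α : Type*} {k : ℕ} [NeZero k] (t : Finset α) (i : ℕ) :
    (chainPt i : ChainIdx k α) ∉ t.image basePt := by
  intro hm
  obtain ⟨a, -, ha⟩ := mem_image.1 hm
  exact chainPt_ne_basePt i a ha.symm

/-- Two stars of trades centred at the first two points of the chain, one trade for each link of
the rest of the chain, and one trade for each triple of `TV`. -/
inductive ChainTrade {α : Type*} (TV : Finset (Finset α)) (k : ℕ) [NeZero k] :
    Finset (ChainIdx k α) → Finset (ChainIdx k α) → Prop
  | fstStar (y : ChainIdx k α) : y ≠ chainPt 0 → y ≠ chainPt 3 →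
      ChainTrade TV k {chainPt 0, chainPt 3, y} {chainPt 0}
  | sndStar (y : ChainIdx k α) : y ≠ chainPt 0 → y ≠ chainPt 1 → y ≠ chainPt 2 → y ≠ chainPt 3 →
      ChainTrade TV k {chainPt 1, chainPt 2, y} {chainPt 1}
  | link (i : ℕ) : 3 ≤ i → i + 1 < k →
      ChainTrade TV k {chainPt i, chainPt 1, chainPt (i + 1)} {chainPt i}
  | triple (t : Finset α) : t ∈ TV → ChainTrade TV k (t.image basePt) (t.image basePt)

namespace ChainTrade

variable {α : Type*} {TV : Finset (Finset α)} {k : ℕ} [NeZero k]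

theorem card_eq_three (hV : IsPSTS TV) (hk : 6 ≤ k) {s c : Finset (ChainIdx k α)}
    (h : ChainTrade TV k s c) : s.card = 3 := by
  have inj := fun i j hi hj => chainPt_inj (α := α) (k := k) (i := i) (j := j) hi hj
  cases h with
  | fstStar y h0 h3 =>
    refine Finset.card_eq_three.2 ⟨_, _, _, fun e => ?_, h0.symm, h3.symm, rfl⟩
    have := inj _ _ (by omega) (by omega) e
    omega
  | sndStar y h0 h1 h2 h3 =>
    refine Finset.card_eq_three.2 ⟨_, _, _, fun e => ?_, h1.symm, h2.symm, rfl⟩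
    have := inj _ _ (by omega) (by omega) e
    omega
  | link i hi hik =>
    refine Finset.card_eq_three.2 ⟨_, _, _, fun e => ?_, fun e => ?_, fun e => ?_, rfl⟩ <;>
    · have := inj _ _ (by omega) (by omega) e
      omega
  | triple t ht => rw [card_image_of_injective _ basePt_injective, hV.1 t ht]

theorem compat (hV : IsPSTS TV) (hk : 6 ≤ k) {s c s' c' : Finset (ChainIdx k α)}
    (h : ChainTrade TV k s c) (h' : ChainTrade TV k s' c') {x y : ChainIdx k α} (hxy : x ≠ y)
    (hx : x ∈ s) (hx' : x ∈ s') (hy : y ∈ s) (hy' : y ∈ s') : c ⊆ s' ∨ c' ⊆ s := by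
  have inj := fun i j hi hj => chainPt_inj (α := α) (k := k) (i := i) (j := j) hi hj
  have inr := fun t i => chainPt_notMem_image_basePt (α := α) (k := k) t i
  cases h with
  | fstStar z h0 h3 =>
    cases h' with
    | fstStar w h0 h3 => simp
    | sndStar w k0 k1 k2 k3 =>
      simp only [singleton_subset_iff, mem_insert, mem_singleton] at hx hx' hy hy' ⊢
      grind
    | link i hi hik =>
      simp only [singleton_subset_iff, mem_insert, mem_singleton] at hx hx' hy hy' ⊢
      grind
    | triple t ht =>
      simp only [mem_insert, mem_singleton] at hx hy
      grind
  | sndStar z h0 h1 h2 h3 =>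
    cases h' with
    | fstStar w h0 h3 =>
      simp only [singleton_subset_iff, mem_insert, mem_singleton] at hx hx' hy hy' ⊢
      grind
    | sndStar w k0 k1 k2 k3 => simp
    | link i hi hik => simp
    | triple t ht =>
      simp only [mem_insert, mem_singleton] at hx hy
      grind
  | link j hj hjk =>
    cases h' with
    | fstStar w h0 h3 =>
      simp only [singleton_subset_iff, mem_insert, mem_singleton] at hx hx' hy hy' ⊢
      grind
    | sndStar w k0 k1 k2 k3 => simp
    | link i hi hik =>
      simp only [singleton_subset_iff, mem_insert, mem_singleton] at hx hx' hy hy' ⊢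
      grind
    | triple t ht =>
      simp only [mem_insert, mem_singleton] at hx hy
      grind
  | triple r hr =>
    cases h' with
    | fstStar w h0 h3 =>
      simp only [mem_insert, mem_singleton] at hx' hy'
      grind
    | sndStar w k0 k1 k2 k3 =>
      simp only [mem_insert, mem_singleton] at hx' hy'
      grind
    | link i hi hik =>
      simp only [mem_insert, mem_singleton] at hx' hy'
      grind
    | triple t ht =>
      obtain ⟨a, ha, rfl⟩ := mem_image.1 hx
      obtain ⟨b, hb, rfl⟩ := mem_image.1 hy
      rw [basePt_injective.mem_finset_image] at hx' hy'
      rw [hV.2 a b (fun e => hxy (congrArg _ e)) r hr t ht ha hb hx' hy']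
      exact Or.inl subset_rfl

theorem unique (hk : 6 ≤ k) {s c c' : Finset (ChainIdx k α)}
    (h : ChainTrade TV k s c) (h' : ChainTrade TV k s c') : c = c' := by
  have inj := fun i j hi hj => chainPt_inj (α := α) (k := k) (i := i) (j := j) hi hj
  have inr := fun t i => chainPt_notMem_image_basePt (α := α) (k := k) t i
  generalize hs : s = s' at h'
  cases h with
  | fstStar z h0 h3 =>
    have m0 : chainPt 0 ∈ s' := by rw [← hs]; simp
    cases h' with
    | fstStar w h0 h3 => rfl
    | sndStar w k0 k1 k2 k3 =>
      simp only [mem_insert, mem_singleton] at m0; grind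
    | link i hi hik =>
      simp only [mem_insert, mem_singleton] at m0; grind
    | triple t ht => exact absurd m0 (inr t 0)
  | sndStar z h0 h1 h2 h3 =>
    have m1 : chainPt 1 ∈ s' := by rw [← hs]; simp
    have m2 : chainPt 2 ∈ s' := by rw [← hs]; simp
    cases h' with
    | fstStar w h0 h3 =>
      simp only [mem_insert, mem_singleton] at m1 m2; grind
    | sndStar w k0 k1 k2 k3 => rfl
    | link i hi hik =>
      simp only [mem_insert, mem_singleton] at m2; grind
    | triple t ht => exact absurd m1 (inr t 1)
  | link j hj hjk =>
    have m1 : chainPt 1 ∈ s' := by rw [← hs]; simp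
    have m2 : chainPt j ∈ s' := by rw [← hs]; simp
    have m3 : chainPt (j + 1) ∈ s' := by rw [← hs]; simp
    cases h' with
    | fstStar w h0 h3 =>
      simp only [mem_insert, mem_singleton] at m1 m2 m3; grind
    | sndStar w k0 k1 k2 k3 =>
      simp only [mem_insert, mem_singleton] at m1 m2 m3; grind
    | link i hi hik =>
      simp only [mem_insert, mem_singleton] at m1 m2 m3; grind
    | triple t ht => exact absurd m1 (inr t 1)
  | triple r hr =>
    cases h' with
    | fstStar w h0 h3 => exact absurd (by rw [hs]; simp) (inr r 0)
    | sndStar w k0 k1 k2 k3 => exact absurd (by rw [hs]; simp) (inr r 1)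
    | link i hi hik => exact absurd (by rw [hs]; simp) (inr r 1)
    | triple t ht => exact hs

theorem isTradeSystem (hV : IsPSTS TV) (hk : 6 ≤ k) : IsTradeSystem (ChainTrade TV k) where
  card _ _ h := h.card_eq_three hV hk
  subset s c h := by cases h <;> simp
  nonempty s c h := by
    cases h with
    | triple t ht =>
      have := hV.1 t ht
      rw [Ne, image_eq_empty]
      rintro rfl
      simp at this
    | _ => exact singleton_ne_empty _
  unique s c c' h h' := h.unique hk h'
  compat s c s' c' h h' _ h2 := by
    obtain ⟨x, hx, y, hy, hxy⟩ := Finset.one_lt_card.1 (show 1 < (s ∩ s').card by omega)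
    rw [mem_inter] at hx hy
    exact h.compat hV hk h' hxy hx.1 hx.2 hy.1 hy.2

end ChainTrade

theorem Shift.of_mem {I : Type*} {T : Finset I → Finset I → Prop} {s c : Finset I} (h : T s c)
    {a b d : I} (ha : a ∈ s) (hb : b ∈ s) (hab : a ≠ b) (hd : d ∈ c) (hda : d ≠ a) (hdb : d ≠ b) :
    Shift T {a} {b} c := by
  refine ⟨s, h, by simpa, by simpa, singleton_ne_empty a, singleton_ne_empty b, by simpa, ?_, ?_,
    ?_⟩ <;> rintro rfl
  · exact hda (mem_singleton.1 hd)
  · exact hdb (mem_singleton.1 hd)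
  · simp [Finset.mem_symmDiff, hda, hdb] at hd

namespace ChainTrade

variable {α : Type*} {TV : Finset (Finset α)} {k : ℕ} [NeZero k]

theorem of_chainPt_zero (hk : 6 ≤ k) {s : Finset (ChainIdx k α)}
    (h : ChainTrade TV k s {chainPt 0}) :
    ∃ y, y ≠ chainPt 0 ∧ y ≠ chainPt 3 ∧ s = {chainPt 0, chainPt 3, y} := by
  generalize hc : ({chainPt 0} : Finset (ChainIdx k α)) = c at h
  cases h with
  | fstStar y h0 h3 => exact ⟨y, h0, h3, rfl⟩
  | sndStar y _ _ _ _ =>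
    have := chainPt_inj (by omega) (by omega) (singleton_injective hc)
    omega
  | link i hi hik =>
    have := chainPt_inj (by omega) (by omega) (singleton_injective hc)
    omega
  | triple t ht => exact absurd (hc ▸ mem_singleton_self _) (chainPt_notMem_image_basePt t 0)

theorem of_chainPt_one (hk : 6 ≤ k) {s : Finset (ChainIdx k α)}
    (h : ChainTrade TV k s {chainPt 1}) :
    ∃ y, y ≠ chainPt 0 ∧ y ≠ chainPt 1 ∧ y ≠ chainPt 2 ∧ y ≠ chainPt 3 ∧
      s = {chainPt 1, chainPt 2, y} := by
  generalize hc : ({chainPt 1} : Finset (ChainIdx k α)) = c at h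
  cases h with
  | sndStar y h0 h1 h2 h3 => exact ⟨y, h0, h1, h2, h3, rfl⟩
  | fstStar y _ _ =>
    have := chainPt_inj (by omega) (by omega) (singleton_injective hc)
    omega
  | link i hi hik =>
    have := chainPt_inj (by omega) (by omega) (singleton_injective hc)
    omega
  | triple t ht => exact absurd (hc ▸ mem_singleton_self _) (chainPt_notMem_image_basePt t 1)

theorem of_chainPt (hk : 6 ≤ k) {i : ℕ} (hi : 3 ≤ i) (hik : i < k) {s : Finset (ChainIdx k α)}
    (h : ChainTrade TV k s {chainPt i}) : s = {chainPt i, chainPt 1, chainPt (i + 1)} := by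
  generalize hc : ({chainPt i} : Finset (ChainIdx k α)) = c at h
  cases h with
  | fstStar y _ _ =>
    have := chainPt_inj (by omega) (by omega) (singleton_injective hc)
    omega
  | sndStar y _ _ _ _ =>
    have := chainPt_inj (by omega) (by omega) (singleton_injective hc)
    omega
  | link j hj hjk =>
    have := chainPt_inj (by omega) (by omega) (singleton_injective hc)
    rw [this]
  | triple t ht => exact absurd (hc ▸ mem_singleton_self _) (chainPt_notMem_image_basePt t i)

theorem support_unique (hk : 6 ≤ k) {s s' c : Finset (ChainIdx k α)} (h : ChainTrade TV k s c)
    (h' : ChainTrade TV k s' c) (h0 : c ≠ {chainPt 0}) (h1 : c ≠ {chainPt 1}) : s = s' := by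
  cases h with
  | fstStar y _ _ => exact absurd rfl h0
  | sndStar y _ _ _ _ => exact absurd rfl h1
  | link i hi hik => exact (of_chainPt hk hi (by omega) h').symm
  | triple t ht =>
    generalize hc : t.image basePt = c at h'
    cases h' with
    | triple r hr => rfl
    | _ => exact absurd (hc ▸ mem_singleton_self _) (chainPt_notMem_image_basePt t _)

theorem shift_zero (hk : 6 ≤ k) {y : ChainIdx k α} (h0 : y ≠ chainPt 0) (h3 : y ≠ chainPt 3) :
    Shift (ChainTrade TV k) {y} {chainPt 3} {chainPt 0} := by
  refine Shift.of_mem (fstStar y h0 h3) (by simp) (by simp) h3 (mem_singleton_self _) h0.symm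
    fun e => ?_
  have := chainPt_inj (by omega) (by omega) e
  omega

theorem shift_one (hk : 6 ≤ k) {y : ChainIdx k α} (h0 : y ≠ chainPt 0) (h1 : y ≠ chainPt 1)
    (h2 : y ≠ chainPt 2) (h3 : y ≠ chainPt 3) :
    Shift (ChainTrade TV k) {y} {chainPt 2} {chainPt 1} := by
  refine Shift.of_mem (sndStar y h0 h1 h2 h3) (by simp) (by simp) h2 (mem_singleton_self _)
    h1.symm fun e => ?_
  have := chainPt_inj (by omega) (by omega) e
  omega

theorem shift_link (hk : 6 ≤ k) {i : ℕ} (hi : 3 ≤ i) (hik : i + 1 < k) :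
    Shift (ChainTrade TV k) {chainPt 1} {chainPt (i + 1)} {chainPt i} := by
  refine Shift.of_mem (link i hi hik) (by simp) (by simp) (fun e => ?_) (mem_singleton_self _)
    (fun e => ?_) fun e => ?_ <;>
  · have := chainPt_inj (by omega) (by omega) e
    omega

theorem eq_singleton (hk : 16 ≤ k) {p q q' : Finset (ChainIdx k α)}
    (h0 : Shift (ChainTrade TV k) p q {chainPt 0})
    (h1 : Shift (ChainTrade TV k) p q' {chainPt 1}) : ∃ y, p = {y} := by
  have inj := fun i j hi hj => chainPt_inj (α := α) (k := k) (i := i) (j := j) hi hj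
  obtain ⟨s, hs, hp, -, hpe, -⟩ := h0
  obtain ⟨s', hs', hp', -⟩ := h1
  obtain ⟨y, -, -, rfl⟩ := of_chainPt_zero (by omega) hs
  obtain ⟨y', k0, -, -, k3, rfl⟩ := of_chainPt_one (by omega) hs'
  have key : ∀ x ∈ p, x = y := by
    intro x hx
    have e1 := hp hx
    have e2 := hp' hx
    simp only [mem_insert, mem_singleton] at e1 e2
    grind
  refine ⟨y, Finset.eq_singleton_iff_nonempty_unique_mem.2
    ⟨Finset.nonempty_iff_ne_empty.2 hpe, key⟩⟩

section Rigid

variable [Fintype α]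

theorem eight_lt_card (hk : 16 ≤ k) {c : Finset (ChainIdx k α)}
    (h : ∀ y : ChainIdx k α, y ≠ chainPt 0 → y ≠ chainPt 1 → y ≠ chainPt 2 → y ≠ chainPt 3 →
      ∃ q, Shift (ChainTrade TV k) {y} q c) :
    8 < (univ.filter fun p => ∃ q, Shift (ChainTrade TV k) p q c).card := by
  let Y : Finset (ChainIdx k α) := univ \ {chainPt 0, chainPt 1, chainPt 2, chainPt 3}
  have hY : 8 < Y.card := by
    have h1 : _ ≤ Y.card :=
      le_card_sdiff ({chainPt 0, chainPt 1, chainPt 2, chainPt 3} : Finset (ChainIdx k α)) univ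
    have h2 : ({chainPt 0, chainPt 1, chainPt 2, chainPt 3} : Finset (ChainIdx k α)).card ≤ 4 :=
      card_le_four
    rw [card_univ, card_chainIdx] at h1
    omega
  refine hY.trans_le (card_le_card_of_injOn (fun y => {y}) ?_ singleton_injective.injOn)
  intro y hy
  have hy' : y ∈ Y := hy
  simp only [Y, mem_sdiff, mem_univ, true_and, mem_insert, mem_singleton, not_or] at hy'
  simpa using h y hy'.1 hy'.2.1 hy'.2.2.1 hy'.2.2.2

theorem card_le_eight (hV : IsPSTS TV) (hk : 16 ≤ k) {c : Finset (ChainIdx k α)}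
    (h0 : c ≠ {chainPt 0}) (h1 : c ≠ {chainPt 1}) :
    (univ.filter fun p => ∃ q, Shift (ChainTrade TV k) p q c).card ≤ 8 := by
  by_cases hex : ∃ s, ChainTrade TV k s c
  · obtain ⟨s, hs⟩ := hex
    have hsub : (univ.filter fun p => ∃ q, Shift (ChainTrade TV k) p q c) ⊆ s.powerset := by
      intro p hp
      obtain ⟨q, s', hs', hp, -⟩ := (mem_filter.1 hp).2
      rwa [mem_powerset, support_unique (by omega) hs hs' h0 h1]
    refine (card_le_card hsub).trans ?_
    rw [card_powerset, hs.card_eq_three hV (by omega)]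
    norm_num
  · rw [filter_false_of_mem]
    · simp
    · rintro p - ⟨q, s, hs, -⟩
      exact hex ⟨s, hs⟩

variable {G : Equiv.Perm (Finset (ChainIdx k α))}

theorem fixes_stars (hV : IsPSTS TV) (hk : 16 ≤ k)
    (hG : ∀ p q c, Shift (ChainTrade TV k) p q c → Shift (ChainTrade TV k) (G p) (G q) (G c)) :
    G {chainPt 0} = {chainPt 0} ∧ G {chainPt 1} = {chainPt 1} := by
  have inj := fun i j hi hj => chainPt_inj (α := α) (k := k) (i := i) (j := j) hi hj
  have step : ∀ c, 8 < (univ.filter fun p => ∃ q, Shift (ChainTrade TV k) p q c).card →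
      G c = {chainPt 0} ∨ G c = {chainPt 1} := by
    intro c hc
    by_contra hne
    push Not at hne
    have h1 := card_le_eight hV hk hne.1 hne.2
    have h2 : (univ.filter fun p => ∃ q, Shift (ChainTrade TV k) p q c).card ≤
        (univ.filter fun p => ∃ q, Shift (ChainTrade TV k) p q (G c)).card := by
      refine card_le_card_of_injOn G (fun p hp => ?_) G.injective.injOn
      have hp' : ∃ q, Shift (ChainTrade TV k) p q c := by simpa using hp
      obtain ⟨q, hq⟩ := hp'
      simpa using ⟨G q, hG _ _ _ hq⟩
    omega
  have s0 := step {chainPt 0} (eight_lt_card hk fun y h0 _ _ h3 => ⟨_, shift_zero (by omega) h0 h3⟩)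
  have s1 := step {chainPt 1} (eight_lt_card hk fun y h0 h1 h2 h3 =>
    ⟨_, shift_one (by omega) h0 h1 h2 h3⟩)
  have ne01 : (chainPt 0 : ChainIdx k α) ≠ chainPt 1 := fun e => by
    have := inj _ _ (by omega) (by omega) e
    omega
  have ne02 : (chainPt 0 : ChainIdx k α) ≠ chainPt 2 := fun e => by
    have := inj _ _ (by omega) (by omega) e
    omega
  have ne31 : (chainPt 3 : ChainIdx k α) ≠ chainPt 1 := fun e => by
    have := inj _ _ (by omega) (by omega) e
    omega
  have hne : G {chainPt 0} ≠ G {chainPt 1} := fun e => ne01 (singleton_injective (G.injective e))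
  rcases s0 with s0 | s0
  · refine ⟨s0, s1.resolve_left fun e => hne (s0.trans e.symm)⟩
  · exfalso
    have s1' := s1.resolve_right fun e => hne (s0.trans e.symm)
    have h := hG _ _ _ (shift_zero (TV := TV) (by omega) ne01.symm ne31.symm)
    rw [s0, s1'] at h
    obtain ⟨s, hs, hsub, -⟩ := h
    obtain ⟨y, h0, -, -, -, rfl⟩ := of_chainPt_one (by omega) hs
    simp only [singleton_subset_iff, mem_insert, mem_singleton] at hsub
    grind

theorem fixes_three (hV : IsPSTS TV) (hk : 16 ≤ k)
    (hG : ∀ p q c, Shift (ChainTrade TV k) p q c → Shift (ChainTrade TV k) (G p) (G q) (G c)) :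
    G {chainPt 3} = {chainPt 3} := by
  have inj := fun i j hi hj => chainPt_inj (α := α) (k := k) (i := i) (j := j) hi hj
  obtain ⟨f0, f1⟩ := fixes_stars hV hk hG
  have a := hG _ _ _ (shift_zero (TV := TV) (y := chainPt 1) (by omega)
    (fun e => by have := inj _ _ (by omega) (by omega) e; omega)
    (fun e => by have := inj _ _ (by omega) (by omega) e; omega))
  have b := hG _ _ _ (shift_link (TV := TV) (by omega) le_rfl (by omega))
  rw [f0, f1] at a
  rw [f1] at b
  obtain ⟨s, hs, h1, hsub, -, hpe, hp1, -, hp0, -⟩ := a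
  obtain ⟨y, -, -, rfl⟩ := of_chainPt_zero (by omega) hs
  obtain ⟨s', hs', -⟩ := b
  generalize G {chainPt 3} = c at *
  simp only [singleton_subset_iff, mem_insert, mem_singleton] at h1
  have hy : chainPt 1 = y := by grind
  subst hy
  cases hs' with
  | fstStar z _ _ => exact absurd rfl hp0
  | sndStar z _ _ _ _ => exact absurd rfl hp1
  | link i hi hik =>
    simp only [singleton_subset_iff, mem_insert, mem_singleton] at hsub
    congr 1
    grind
  | triple t ht =>
    obtain ⟨x, hx⟩ := Finset.nonempty_iff_ne_empty.2 hpe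
    have h2 := hsub hx
    simp only [mem_insert, mem_singleton] at h2
    rcases h2 with rfl | rfl | rfl <;> exact absurd hx (chainPt_notMem_image_basePt t _)

theorem map_singleton (hV : IsPSTS TV) (hk : 16 ≤ k)
    (hG : ∀ p q c, Shift (ChainTrade TV k) p q c → Shift (ChainTrade TV k) (G p) (G q) (G c))
    {y : ChainIdx k α} (h0 : y ≠ chainPt 0) (h1 : y ≠ chainPt 1)
    (h2 : y ≠ chainPt 2) (h3 : y ≠ chainPt 3) : ∃ z, G {y} = {z} := by
  obtain ⟨f0, f1⟩ := fixes_stars hV hk hG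
  have a := hG _ _ _ (shift_zero (TV := TV) (by omega) h0 h3)
  have b := hG _ _ _ (shift_one (TV := TV) (by omega) h0 h1 h2 h3)
  rw [f0] at a
  rw [f1] at b
  exact eq_singleton hk a b

theorem fixes_two (hV : IsPSTS TV) (hk : 16 ≤ k)
    (hG : ∀ p q c, Shift (ChainTrade TV k) p q c → Shift (ChainTrade TV k) (G p) (G q) (G c)) :
    G {chainPt 2} = {chainPt 2} := by
  have inj := fun i j hi hj => chainPt_inj (α := α) (k := k) (i := i) (j := j) hi hj
  have ne : ∀ i j, i < k → j < k → i ≠ j → (chainPt i : ChainIdx k α) ≠ chainPt j :=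
    fun i j hi hj hij e => hij (inj i j hi hj e)
  obtain ⟨f0, f1⟩ := fixes_stars hV hk hG
  have key : ∀ i, 4 ≤ i → i < k → G {chainPt 2} = {chainPt 2} ∨ G {chainPt i} = {chainPt 2} := by
    intro i hi hik
    have n0 := ne i 0 hik (by omega) (by omega)
    have n1 := ne i 1 hik (by omega) (by omega)
    have n2 := ne i 2 hik (by omega) (by omega)
    have n3 := ne i 3 hik (by omega) (by omega)
    have a := hG _ _ _ (shift_zero (TV := TV) (by omega) (ne 2 0 (by omega) (by omega) (by omega))
      (ne 2 3 (by omega) (by omega) (by omega)))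
    have b := hG _ _ _ (shift_one (TV := TV) (by omega) n0 n1 n2 n3)
    rw [f0] at a
    rw [f1] at b
    obtain ⟨x, hx⟩ := eq_singleton hk a b.symm
    obtain ⟨z, hz⟩ := map_singleton hV hk hG n0 n1 n2 n3
    rw [hx, hz] at b ⊢
    obtain ⟨s, hs, m1, m2, -, -, hne, c1, c2, -⟩ := b
    obtain ⟨w, -, -, -, -, rfl⟩ := of_chainPt_one (by omega) hs
    simp only [singleton_subset_iff, mem_insert, mem_singleton] at m1 m2
    simp only [ne_eq, singleton_inj] at *
    grind
  rcases key 4 le_rfl (by omega) with h | h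
  · exact h
  rcases key 5 (by omega) (by omega) with h' | h'
  · exact h'
  · exact absurd (singleton_injective (G.injective (h.trans h'.symm)))
      (ne 4 5 (by omega) (by omega) (by omega))

theorem fixes_chainPt (hV : IsPSTS TV) (hk : 16 ≤ k)
    (hG : ∀ p q c, Shift (ChainTrade TV k) p q c → Shift (ChainTrade TV k) (G p) (G q) (G c))
    {i : ℕ} (hi : i < k) : G {chainPt i} = {chainPt i} := by
  have inj := fun i j hi hj => chainPt_inj (α := α) (k := k) (i := i) (j := j) hi hj
  have ne : ∀ i j, i < k → j < k → i ≠ j → (chainPt i : ChainIdx k α) ≠ chainPt j :=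
    fun i j hi hj hij e => hij (inj i j hi hj e)
  obtain ⟨f0, f1⟩ := fixes_stars hV hk hG
  have up : ∀ j, 3 + j < k → G {chainPt (3 + j)} = {chainPt (3 + j)} := by
    intro j
    induction j with
    | zero => intro _; exact fixes_three hV hk hG
    | succ j ih =>
      intro hj
      have a := hG _ _ _ (shift_link (TV := TV) (i := 3 + j) (by omega) (by omega) (by omega))
      rw [f1, ih (by omega)] at a
      obtain ⟨z, hz⟩ := map_singleton (y := chainPt (3 + j + 1)) hV hk hG
        (ne _ _ (by omega) (by omega) (by omega)) (ne _ _ (by omega) (by omega) (by omega))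
        (ne _ _ (by omega) (by omega) (by omega)) (ne _ _ (by omega) (by omega) (by omega))
      rw [hz] at a
      rw [← add_assoc, hz]
      obtain ⟨s, hs, -, hq, -, -, hne, -, hc, -⟩ := a
      obtain rfl := of_chainPt (by omega) (by omega) (by omega) hs
      simp only [singleton_subset_iff, mem_insert, mem_singleton] at hq
      simp only [ne_eq, singleton_inj] at *
      grind
  rcases (by omega : i = 0 ∨ i = 1 ∨ i = 2 ∨ 3 ≤ i) with rfl | rfl | rfl | h
  · exact f0
  · exact f1
  · exact fixes_two hV hk hG
  · obtain ⟨j, rfl⟩ := Nat.exists_eq_add_of_le h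
    exact up j hi

theorem map_basePt (hV : IsPSTS TV) (hk : 16 ≤ k)
    (hG : ∀ p q c, Shift (ChainTrade TV k) p q c → Shift (ChainTrade TV k) (G p) (G q) (G c))
    (a : α) : ∃ b, G {basePt a} = {basePt b} := by
  have ne : ∀ i, (basePt a : ChainIdx k α) ≠ chainPt i := fun i => (chainPt_ne_basePt i a).symm
  obtain ⟨z, hz⟩ := map_singleton hV hk hG (ne 0) (ne 1) (ne 2) (ne 3)
  rcases exists_chainPt z with ⟨i, hi, rfl⟩ | ⟨b, rfl⟩
  · rw [← fixes_chainPt hV hk hG hi] at hz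
    exact absurd (singleton_injective (G.injective hz)) (ne i)
  · exact ⟨b, hz⟩

end Rigid

theorem image_iff {h : Equiv.Perm α} (hh : IsAut TV h) :
    ∃ π : Equiv.Perm (ChainIdx k α), (∀ a, π (basePt a) = basePt (h a)) ∧
      ∀ s c, ChainTrade TV k s c ↔ ChainTrade TV k (s.image π) (c.image π) := by
  have key : ∀ h : Equiv.Perm α, IsAut TV h → ∀ π : Equiv.Perm (ChainIdx k α),
      (∀ a, π (basePt a) = basePt (h a)) → (∀ i, π (chainPt i) = chainPt i) →
      ∀ s c, ChainTrade TV k s c → ChainTrade TV k (s.image π) (c.image π) := by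
    intro h hh π hb hc s c hs
    have ne : ∀ {y i}, y ≠ chainPt i → π y ≠ chainPt i := by
      intro y i hy e
      rw [← hc i] at e
      exact hy (π.injective e)
    cases hs with
    | fstStar y h0 h3 =>
      simpa [image_insert, hc] using fstStar (π y) (ne h0) (ne h3)
    | sndStar y h0 h1 h2 h3 =>
      simpa [image_insert, hc] using sndStar (π y) (ne h0) (ne h1) (ne h2) (ne h3)
    | link i hi hik => simpa [image_insert, hc] using link i hi hik
    | triple t ht =>
      have e : (t.image basePt).image π = (t.image h).image basePt := by
        rw [image_image, image_image]
        exact image_congr fun a _ => hb a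
      rw [e]
      exact triple _ ((hh t).1 ht)
  let π : Equiv.Perm (ChainIdx k α) := Equiv.sumCongr (Equiv.refl (Fin k)) h
  have hb : ∀ a, π (basePt a) = basePt (h a) := fun a => rfl
  have hc : ∀ i, π (chainPt i) = chainPt i := fun i => rfl
  refine ⟨π, hb, fun s c => ⟨key h hh π hb hc s c, fun hs => ?_⟩⟩
  have h1 := key h⁻¹ ((autGroup TV).inv_mem hh) π.symm (fun a => ?_) (fun i => ?_) _ _ hs
  · simpa [image_image] using h1
  · rw [Equiv.symm_apply_eq, hb]; simp
  · rw [Equiv.symm_apply_eq, hc]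

theorem loopOp_basePt (hV : IsPSTS TV) (hk : 16 ≤ k) {a b c : α} (hab : a ≠ b) :
    loopOp (ChainTrade TV k) {basePt a} {basePt b} = {basePt c} ↔ ({a, b, c} : Finset α) ∈ TV := by
  have hT := isTradeSystem (k := k) hV (by omega)
  have hab' : (basePt a : ChainIdx k α) ≠ basePt b := fun e => hab (basePt_injective e)
  have hca : ∀ i, (basePt a : ChainIdx k α) ≠ chainPt i := fun i => (chainPt_ne_basePt i a).symm
  have hcb : ∀ i, (basePt b : ChainIdx k α) ≠ chainPt i := fun i => (chainPt_ne_basePt i b).symm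
  have val : ∀ {d}, ({a, b, d} : Finset α) ∈ TV →
      loopOp (ChainTrade TV k) {basePt a} {basePt b} = {basePt d} := by
    intro d hd
    have h3 := hV.1 _ hd
    have hda : d ≠ a := by
      rintro rfl
      have : ({d, b, d} : Finset α) = {d, b} := by ext; simp; tauto
      rw [this] at h3
      have := card_le_two (a := d) (b := b)
      omega
    have hdb : d ≠ b := by
      rintro rfl
      have : ({a, d, d} : Finset α) = {a, d} := by ext; simp
      rw [this] at h3
      have := card_le_two (a := a) (b := d)
      omega
    have hS : Shift (ChainTrade TV k) {basePt a} {basePt b} (image basePt {a, b, d}) :=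
      Shift.of_mem (triple _ hd) (mem_image_of_mem _ (by simp)) (mem_image_of_mem _ (by simp)) hab'
        (mem_image_of_mem _ (by simp : d ∈ _)) (fun e => hda (basePt_injective e))
        (fun e => hdb (basePt_injective e))
    rw [loopOp_eq_of_shift hT hS]
    have hda' : (basePt d : ChainIdx k α) ≠ basePt a := fun e => hda (basePt_injective e)
    have hdb' : (basePt d : ChainIdx k α) ≠ basePt b := fun e => hdb (basePt_injective e)
    ext z
    simp only [Finset.mem_symmDiff, image_insert, image_singleton, mem_insert, mem_singleton]
    grind
  refine ⟨fun h => ?_, val⟩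
  by_cases hex : ∃ z, Shift (ChainTrade TV k) {basePt a} {basePt b} z
  · obtain ⟨z, s, hs, ha, hb, -⟩ := hex
    rw [singleton_subset_iff] at ha hb
    cases hs with
    | fstStar y _ _ =>
      simp only [mem_insert, mem_singleton] at ha hb
      grind
    | sndStar y _ _ _ _ =>
      simp only [mem_insert, mem_singleton] at ha hb
      grind
    | link i _ _ =>
      simp only [mem_insert, mem_singleton] at ha hb
      grind
    | triple t ht =>
      rw [basePt_injective.mem_finset_image] at ha hb
      have hc1 : ((t.erase a).erase b).card = 1 := by
        rw [card_erase_of_mem (mem_erase.2 ⟨hab.symm, hb⟩), card_erase_of_mem ha, hV.1 t ht]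
      obtain ⟨d, hd⟩ := Finset.card_eq_one.1 hc1
      have ht' : t = {a, b, d} := by
        rw [← hd, insert_erase (mem_erase.2 ⟨hab.symm, hb⟩), insert_erase ha]
      have h1 := val (ht' ▸ ht)
      rw [h] at h1
      rw [basePt_injective (singleton_injective h1), ← ht']
      exact ht
  · exfalso
    rw [loopOp_eq_of_forall_not (by simpa using hex)] at h
    have h1 : basePt a ∈ symmDiff {basePt a} ({basePt b} : Finset (ChainIdx k α)) := by
      simp [Finset.mem_symmDiff, hab']
    have h2 : basePt b ∈ symmDiff {basePt a} ({basePt b} : Finset (ChainIdx k α)) := by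
      simp [Finset.mem_symmDiff, hab'.symm]
    rw [h, mem_singleton] at h1 h2
    exact hab' (h1.trans h2.symm)

end ChainTrade

theorem four_mul_cube_lt_two_pow {n : ℕ} (hn : 20 ≤ n) : 4 * (n + 1) ^ 3 < 2 ^ n := by
  induction n, hn using Nat.le_induction with
  | base => norm_num
  | succ n hn ih =>
    have h : (n + 1 + 1) ^ 3 ≤ 2 * (n + 1) ^ 3 := by
      obtain ⟨k, rfl⟩ := Nat.exists_eq_add_of_le hn
      ring_nf
      nlinarith [sq_nonneg k, pow_pos (Nat.succ_pos k) 3]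
    rw [pow_succ 2 n]
    omega

/-- A partial Steiner triple system on `n` points has an envelope on `2 ^ (k + n) - 1` points. -/
theorem isEnvelope_chainTrade {α : Type*} [Fintype α] {TV : Finset (Finset α)} (hV : IsPSTS TV)
    {k : ℕ} [NeZero k] (hk : 20 ≤ k) :
    IsEnvelope TV (tradeOp (ChainTrade TV k))
      (fun a => ⟨{basePt a}, singleton_ne_empty (basePt a)⟩) := by
  have hT := ChainTrade.isTradeSystem (k := k) hV (by omega)
  have hI : 4 * (Fintype.card (ChainIdx k α) + 1) ^ 3 < 2 ^ Fintype.card (ChainIdx k α) :=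
    four_mul_cube_lt_two_pow (by rw [card_chainIdx]; omega)
  refine ⟨tradeOp_isSteiner hT, ?_, ?_, ?_, ?_, ?_⟩
  · intro a b e
    exact basePt_injective (singleton_injective (congrArg Subtype.val e))
  · intro a b c hab
    rw [← ChainTrade.loopOp_basePt hV (k := k) (by omega) hab, Subtype.ext_iff, tradeOp_coe hT]
    exact fun e => hab (basePt_injective (singleton_injective (congrArg Subtype.val e)))
  · intro h hh
    obtain ⟨π, hπb, hπ⟩ := ChainTrade.image_iff (k := k) hh
    obtain ⟨g, hg, hgp⟩ := exists_isOpAut_of_perm hT π hπ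
    refine ⟨g, hg, fun a => Subtype.ext ?_⟩
    rw [hgp, image_singleton, hπb]
  · intro g hg a
    obtain ⟨b, hb⟩ := ChainTrade.map_basePt hV (by omega)
      (fun p q c h => extendEmpty_shift hT hI hg h) a
    exact ⟨b, Subtype.ext (by rw [← extendEmpty_coe]; exact hb)⟩
  · intro g hg hfix
    refine extendEmpty_eq_one (extendEmpty_symmDiff hT hI hg) fun x => ?_
    rcases exists_chainPt x with ⟨i, hi, rfl⟩ | ⟨a, rfl⟩
    · exact ChainTrade.fixes_chainPt hV (by omega)
        (fun p q c h => extendEmpty_shift hT hI hg h) hi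
    · have := extendEmpty_coe g ⟨{basePt a}, singleton_ne_empty (basePt a)⟩
      rw [hfix] at this
      exact this

theorem card_ne_empty_subtype {I : Type*} [Fintype I] :
    Fintype.card {p : Finset I // p ≠ ∅} = 2 ^ Fintype.card I - 1 := by
  rw [Fintype.card_subtype_compl, Fintype.card_finset, Fintype.card_subtype_eq]

/-! ### Blowing up a Steiner quasigroup -/

/-- The data on the index set `A` from which one builds a Steiner quasigroup on `X ⊕ P × A`:
the involutions `σ x` give the products of points of `X` with points of
a fibre, and `tri` gives the products of two points of a fibre not matched by any `σ x`. -/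
structure IsFibreSystem {X A : Type*} (mX : X → X → X) (σ : X → A → A) (tri : A → A → A) :
    Prop where
  steiner : IsSteiner mX
  invol : ∀ x s, σ x (σ x s) = s
  ne_self : ∀ x s, σ x s ≠ s
  inj : ∀ x y s, σ x s = σ y s → x = y
  tri_comm : ∀ s t, s ≠ t → (∀ x, σ x s ≠ t) → tri s t = tri t s
  tri_ne : ∀ s t, s ≠ t → (∀ x, σ x s ≠ t) → s ≠ tri s t
  tri_unmatched : ∀ s t, s ≠ t → (∀ x, σ x s ≠ t) → ∀ x, σ x s ≠ tri s t
  tri_inv : ∀ s t, s ≠ t → (∀ x, σ x s ≠ t) → tri s (tri s t) = t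

/-- The product on `X ⊕ P × A`. -/
def blowUp {X P A : Type*} [AddCommGroup A] (mX : X → X → X) (mP : P → P → P) (σ : X → A → A)
    (tri : A → A → A) : X ⊕ P × A → X ⊕ P × A → X ⊕ P × A
  | Sum.inl x, Sum.inl y => Sum.inl (mX x y)
  | Sum.inl x, Sum.inr (v, a) => Sum.inr (v, σ x a)
  | Sum.inr (v, a), Sum.inl x => Sum.inr (v, σ x a)
  | Sum.inr (v, a), Sum.inr (w, b) =>
    if v = w then
      if a = b then Sum.inr (v, a)
      else if h : ∃ x, σ x a = b then Sum.inl h.choose else Sum.inr (v, tri a b)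
    else Sum.inr (mP v w, -a - b)

section BlowUp

variable {X P A : Type*} [AddCommGroup A] {mX : X → X → X} {mP : P → P → P} {σ : X → A → A}
  {tri : A → A → A}

@[simp]
theorem blowUp_inl_inl (x y : X) :
    blowUp mX mP σ tri (Sum.inl x) (Sum.inl y) = Sum.inl (mX x y) := rfl

@[simp]
theorem blowUp_inl_inr (x : X) (v : P) (a : A) :
    blowUp mX mP σ tri (Sum.inl x) (Sum.inr (v, a)) = Sum.inr (v, σ x a) := rfl

@[simp]
theorem blowUp_inr_inl (x : X) (v : P) (a : A) :
    blowUp mX mP σ tri (Sum.inr (v, a)) (Sum.inl x) = Sum.inr (v, σ x a) := rfl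

theorem blowUp_of_ne {v w : P} (h : v ≠ w) (a b : A) :
    blowUp mX mP σ tri (Sum.inr (v, a)) (Sum.inr (w, b)) = Sum.inr (mP v w, -a - b) := by
  simp [blowUp, h]

theorem blowUp_self (v : P) (a : A) :
    blowUp mX mP σ tri (Sum.inr (v, a)) (Sum.inr (v, a)) = Sum.inr (v, a) := by
  simp [blowUp]

theorem blowUp_matched (hF : IsFibreSystem mX σ tri) (v : P) {a b : A} {x : X} (h : σ x a = b) :
    blowUp mX mP σ tri (Sum.inr (v, a)) (Sum.inr (v, b)) = Sum.inl x := by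
  have hab : a ≠ b := fun e => hF.ne_self x a (h.trans e.symm)
  have hex : ∃ x, σ x a = b := ⟨x, h⟩
  simp only [blowUp, if_true, if_neg hab, dif_pos hex]
  rw [hF.inj _ _ _ (hex.choose_spec.trans h.symm)]

theorem blowUp_unmatched (v : P) {a b : A} (hab : a ≠ b) (h : ∀ x, σ x a ≠ b) :
    blowUp mX mP σ tri (Sum.inr (v, a)) (Sum.inr (v, b)) = Sum.inr (v, tri a b) := by
  have hex : ¬ ∃ x, σ x a = b := by simpa using h
  simp only [blowUp, if_true, if_neg hab, dif_neg hex]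

theorem blowUp_isSteiner (hF : IsFibreSystem mX σ tri) (hP : IsSteiner mP) :
    IsSteiner (blowUp mX mP σ tri) where
  idem p := by
    rcases p with x | ⟨v, a⟩
    · simp [hF.steiner.idem]
    · exact blowUp_self v a
  comm p q := by
    rcases p with x | ⟨v, a⟩ <;> rcases q with y | ⟨w, b⟩
    · simp [hF.steiner.comm x y]
    · simp
    · simp
    · by_cases hvw : v = w
      · subst hvw
        by_cases hab : a = b
        · rw [hab]
        · by_cases hex : ∃ x, σ x a = b
          · obtain ⟨x, hx⟩ := hex
            rw [blowUp_matched hF v hx, blowUp_matched hF v (x := x) (by rw [← hx, hF.invol])]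
          · have hex1 : ∀ x, σ x a ≠ b := by simpa using hex
            have hex2 : ∀ x, σ x b ≠ a := fun x e => hex1 x (by rw [← e, hF.invol])
            rw [blowUp_unmatched v hab hex1, blowUp_unmatched v (Ne.symm hab) hex2,
              hF.tri_comm a b hab hex1]
      · rw [blowUp_of_ne hvw, blowUp_of_ne (Ne.symm hvw), hP.comm, neg_sub_left, neg_sub_left,
          add_comm]
  inv p q := by
    rcases p with x | ⟨v, a⟩ <;> rcases q with y | ⟨w, b⟩
    · simp [hF.steiner.inv]
    · simp [hF.invol]
    · rw [blowUp_inr_inl, blowUp_matched hF v rfl]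
    · by_cases hvw : v = w
      · subst hvw
        by_cases hab : a = b
        · subst hab; rw [blowUp_self, blowUp_self]
        · by_cases hex : ∃ x, σ x a = b
          · obtain ⟨x, hx⟩ := hex
            rw [blowUp_matched hF v hx, blowUp_inr_inl, hx]
          · have hex1 : ∀ x, σ x a ≠ b := by simpa using hex
            rw [blowUp_unmatched v hab hex1, blowUp_unmatched v (hF.tri_ne a b hab hex1)
              (hF.tri_unmatched a b hab hex1), hF.tri_inv a b hab hex1]
      · rw [blowUp_of_ne hvw, blowUp_of_ne (hP.ne_left hvw).symm, hP.inv]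
        congr 2
        abel

end BlowUp

/-- The number of pairs `(q, r)` fixed by a certain word in the translations by `p` and `q`. -/
def wordCount {U : Type*} [Fintype U] (m : U → U → U) (p : U) : ℕ :=
  (univ.filter fun x : U × U => m p (m x.1 (m p (m x.1 x.2))) = x.2).card

theorem IsOpAut.wordCount_eq {U : Type*} [Fintype U] {m : U → U → U} {g : Equiv.Perm U}
    (hg : IsOpAut m g) (p : U) : wordCount m (g p) = wordCount m p := by
  symm
  refine card_bij (fun x _ => (g x.1, g x.2)) ?_ ?_ ?_
  · intro x hx
    have hx' : m p (m x.1 (m p (m x.1 x.2))) = x.2 := (mem_filter.1 hx).2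
    refine mem_filter.2 ⟨mem_univ _, ?_⟩
    simp only [← hg _ _, hx']
  · intro x _ y _ e
    simpa [Prod.ext_iff] using e
  · rintro ⟨q, r⟩ hx
    obtain ⟨q, rfl⟩ := g.surjective q
    obtain ⟨r, rfl⟩ := g.surjective r
    refine ⟨(q, r), mem_filter.2 ⟨mem_univ _, ?_⟩, rfl⟩
    have hx' := (mem_filter.1 hx).2
    simp only [← hg _ _] at hx'
    exact g.injective hx'

section Count

variable {X P A : Type*} [AddCommGroup A] {mX : X → X → X} {mP : P → P → P} {σ : X → A → A}
  {tri : A → A → A} [Fintype X] [Fintype P] [Fintype A]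

theorem mul_le_wordCount_inl (hF : IsFibreSystem mX σ tri) (hP : IsSteiner mP) (x : X) (δ : A) :
    (Fintype.card P * Fintype.card P - Fintype.card P) *
      ((univ.filter fun s => σ x s = s + δ).card * (univ.filter fun s => σ x s = s + δ).card) ≤
      wordCount (blowUp mX mP σ tri) (Sum.inl x) := by
  set S := univ.filter fun s => σ x s = s + δ with hS
  have e : (Fintype.card P * Fintype.card P - Fintype.card P) * (S.card * S.card) =
      ((univ : Finset P).offDiag ×ˢ (S ×ˢ S)).card := by
    rw [card_product, card_product, offDiag_card, card_univ]
  rw [e]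
  refine card_le_card_of_injOn
    (fun y => (Sum.inr (y.1.1, -y.2.1 - σ x y.2.2), Sum.inr (y.1.2, σ x y.2.2))) ?_ ?_
  · rintro ⟨⟨v, w⟩, s, t⟩ hy
    simp only [hS, coe_product, Set.mem_prod, mem_coe, mem_offDiag, mem_univ, true_and,
      mem_filter] at hy
    obtain ⟨hvw, hs, ht⟩ := hy
    simp only [mem_coe, mem_filter, mem_univ, true_and]
    have h1 := (hP.ne_left hvw).symm
    rw [blowUp_of_ne hvw, blowUp_inl_inr, blowUp_of_ne h1, hP.inv, blowUp_inl_inr]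
    have e1 : -(-s - σ x t) - σ x t = s := by abel
    rw [e1, hs, ht]
    have e2 : -(-s - (t + δ)) - (s + δ) = t := by abel
    rw [e2, ht]
  · rintro ⟨⟨v, w⟩, s, t⟩ _ ⟨⟨v', w'⟩, s', t'⟩ _ e
    simp only [Prod.mk.injEq, Sum.inr.injEq] at e
    obtain ⟨⟨rfl, h1⟩, rfl, h2⟩ := e
    have h3 : t = t' := by rw [← hF.invol x t, h2, hF.invol]
    subst h3
    have h4 : s = s' := by simpa using h1
    rw [h4]

theorem wordCount_inr_le (hP : IsSteiner mP)
    (h2 : ∀ a : A, (univ.filter fun b => b + b = a + a).card ≤ 2) (v : P) (a : A) :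
    wordCount (blowUp mX mP σ tri) (Sum.inr (v, a)) ≤
      (2 * Fintype.card X + 4 * Fintype.card A) *
        (Fintype.card X + Fintype.card P * Fintype.card A) +
      2 * Fintype.card P * (Fintype.card P * Fintype.card A) := by
  let Q := univ.filter fun b : A => b + b = a + a
  let L : Finset (X ⊕ P × A) := univ.image Sum.inl
  let Fb : P → Finset (X ⊕ P × A) := fun v => univ.image fun a => Sum.inr (v, a)
  let B : Finset ((X ⊕ P × A) × (X ⊕ P × A)) :=
    L ×ˢ univ ∪ univ ×ˢ L ∪ (Fb v ×ˢ univ ∪ univ ×ˢ Fb v) ∪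
      ((univ : Finset ((P × A) × A)).image (fun y => (Sum.inr y.1, Sum.inr (y.1.1, y.2))) ∪
      (univ : Finset ((P × A) × A)).image (fun y => (Sum.inr y.1, Sum.inr (mP v y.1.1, y.2))))
  let C : Finset ((X ⊕ P × A) × (X ⊕ P × A)) :=
    ((univ : Finset P) ×ˢ Q ×ˢ (univ : Finset (P × A))).image
      fun y => (Sum.inr (y.1, y.2.1), Sum.inr y.2.2)
  have hsub : (univ.filter fun y : (X ⊕ P × A) × (X ⊕ P × A) =>
      blowUp mX mP σ tri (Sum.inr (v, a)) (blowUp mX mP σ tri y.1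
        (blowUp mX mP σ tri (Sum.inr (v, a)) (blowUp mX mP σ tri y.1 y.2))) = y.2) ⊆ B ∪ C := by
    rintro ⟨q, r⟩ hy
    have hy := (mem_filter.1 hy).2
    simp only at hy
    rcases q with x | ⟨w, b⟩
    · simp [B, L]
    rcases r with x | ⟨z, c⟩
    · simp [B, L]
    by_cases h1 : w = v
    · simp [B, Fb, h1]
    by_cases h2 : z = v
    · simp [B, Fb, h2]
    by_cases h3 : z = w
    · subst h3
      simp [B]
    by_cases h4 : z = mP v w
    · subst h4
      simp [B]
    refine mem_union_right _ (mem_image.2 ⟨(w, b, (z, c)), ?_, rfl⟩)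
    have n2 : v ≠ mP w z := fun e => h4 (by rw [e, hP.comm (mP w z), hP.inv])
    have n3 : w ≠ mP v (mP w z) := fun e => h2 (hP.left_cancel (x := w) (by
      rw [hP.comm w v, hP.eq_iff.2 e]))
    have n4 : v ≠ mP w (mP v (mP w z)) := by
      intro e
      have e1 := hP.eq_iff.1 e.symm
      rw [hP.comm w v] at e1
      exact hP.ne_left (Ne.symm h3) (hP.left_cancel e1)
    rw [blowUp_of_ne (Ne.symm h3), blowUp_of_ne n2, blowUp_of_ne n3, blowUp_of_ne n4] at hy
    simp only [Sum.inr.injEq, Prod.mk.injEq] at hy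
    simp only [mem_product, mem_univ, true_and, and_true, Q, mem_filter]
    have e : b + b - (a + a) = 0 := by
      have : -a - (-b - (-a - (-b - c))) = b + b - (a + a) + c := by abel
      rw [this] at hy
      simpa using hy.2
    exact sub_eq_zero.1 e
  have hcard : wordCount (blowUp mX mP σ tri) (Sum.inr (v, a)) ≤ (B ∪ C).card := by
    unfold wordCount
    convert card_le_card hsub
  refine hcard.trans ((card_union_le _ _).trans ?_)
  set u := Fintype.card X + Fintype.card P * Fintype.card A with hu
  have hcU : (univ : Finset (X ⊕ P × A)).card = u := by
    rw [card_univ, Fintype.card_sum, Fintype.card_prod]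
  have hL : L.card ≤ Fintype.card X := card_image_le
  have hFb : (Fb v).card ≤ Fintype.card A := card_image_le
  have hPA : Fintype.card P * Fintype.card A ≤ u := by omega
  have hI : ∀ f : (P × A) × A → (X ⊕ P × A) × (X ⊕ P × A),
      ((univ : Finset ((P × A) × A)).image f).card ≤ u * Fintype.card A := by
    intro f
    refine card_image_le.trans ?_
    rw [card_univ, Fintype.card_prod, Fintype.card_prod]
    gcongr
  have hB : B.card ≤ (2 * Fintype.card X + 4 * Fintype.card A) * u := by
    refine (card_union_le _ _).trans ?_
    have b1 := card_union_le (L ×ˢ univ ∪ univ ×ˢ L) (Fb v ×ˢ univ ∪ univ ×ˢ Fb v)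
    have b2 := card_union_le (L ×ˢ univ) (univ ×ˢ L)
    have b3 := card_union_le (Fb v ×ˢ univ) (univ ×ˢ Fb v)
    have b4 := card_union_le
      ((univ : Finset ((P × A) × A)).image
        (fun y => ((Sum.inr y.1, Sum.inr (y.1.1, y.2)) : (X ⊕ P × A) × (X ⊕ P × A))))
      ((univ : Finset ((P × A) × A)).image (fun y => (Sum.inr y.1, Sum.inr (mP v y.1.1, y.2))))
    have b5 := hI (fun y => (Sum.inr y.1, Sum.inr (y.1.1, y.2)))
    have b6 := hI (fun y => (Sum.inr y.1, Sum.inr (mP v y.1.1, y.2)))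
    rw [card_product, card_product, hcU] at b2 b3
    have c1 : L.card * u ≤ Fintype.card X * u := by gcongr
    have c2 : (Fb v).card * u ≤ Fintype.card A * u := by gcongr
    have d1 := mul_comm u L.card
    have d2 := mul_comm u (Fb v).card
    have d3 := mul_comm u (Fintype.card A)
    have e : (2 * Fintype.card X + 4 * Fintype.card A) * u =
      2 * (Fintype.card X * u) + 4 * (Fintype.card A * u) := by ring
    rw [e]
    omega
  have hC : C.card ≤ 2 * Fintype.card P * (Fintype.card P * Fintype.card A) := by
    refine card_image_le.trans ?_
    rw [card_product, card_product, card_univ, card_univ, Fintype.card_prod]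
    have : Q.card ≤ 2 := h2 a
    calc Fintype.card P * (Q.card * (Fintype.card P * Fintype.card A))
        ≤ Fintype.card P * (2 * (Fintype.card P * Fintype.card A)) := by gcongr
      _ = _ := by ring
  omega

theorem wordCount_inr_lt_inl (hF : IsFibreSystem mX σ tri) (hP : IsSteiner mP)
    (h2 : ∀ a : A, (univ.filter fun b => b + b = a + a).card ≤ 2)
    (hσ : ∀ x, ∃ δ, Fintype.card A ≤ 4 * (univ.filter fun s => σ x s = s + δ).card)
    (hX : Fintype.card X ≤ Fintype.card A) (hw : 127 ≤ Fintype.card P)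
    (hA : 2 * Fintype.card P ^ 2 ≤ Fintype.card A) (p : P × A) (x : X) :
    wordCount (blowUp mX mP σ tri) (Sum.inr p) < wordCount (blowUp mX mP σ tri) (Sum.inl x) := by
  obtain ⟨δ, hδ⟩ := hσ x
  have h1 := mul_le_wordCount_inl (mP := mP) hF hP x δ
  have h3 := wordCount_inr_le (mX := mX) (σ := σ) (tri := tri) hP h2 p.1 p.2
  set n := (univ.filter fun s => σ x s = s + δ).card
  generalize wordCount (blowUp mX mP σ tri) (Sum.inr p) = Np at *
  generalize wordCount (blowUp mX mP σ tri) (Sum.inl x) = Nx at *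
  generalize Fintype.card X = cX at *
  generalize Fintype.card P = w at *
  generalize Fintype.card A = m at *
  have hww : w * w - w = w * (w - 1) := by rw [Nat.mul_sub, mul_one]
  rw [hww] at h1
  obtain ⟨t, rfl⟩ : ∃ t, w = t + 127 := ⟨w - 127, by omega⟩
  have e1 : t + 127 - 1 = t + 126 := by omega
  rw [e1] at h1
  have k1 : m * m ≤ 16 * (n * n) := by nlinarith
  have k2 : (t + 127) * (t + 126) * (m * m) ≤ 16 * Nx := by
    calc (t + 127) * (t + 126) * (m * m) ≤ (t + 127) * (t + 126) * (16 * (n * n)) := by gcongr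
      _ = 16 * ((t + 127) * (t + 126) * (n * n)) := by ring
      _ ≤ 16 * Nx := by gcongr
  have k3 : (2 * cX + 4 * m) * (cX + (t + 127) * m) ≤ (2 * m + 4 * m) * (m + (t + 127) * m) := by
    gcongr
  have k4 : 2 * (t + 127) * ((t + 127) * m) ≤ m * m := by
    calc 2 * (t + 127) * ((t + 127) * m) = 2 * (t + 127) ^ 2 * m := by ring
      _ ≤ m * m := by gcongr
  have k5 : 0 < m * m := by
    have : 0 < m := by nlinarith
    exact Nat.mul_pos this this
  have k6 : 16 * ((2 * m + 4 * m) * (m + (t + 127) * m) + m * m) <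
      (t + 127) * (t + 126) * (m * m) := by
    have : 16 * ((2 * m + 4 * m) * (m + (t + 127) * m) + m * m) =
        (96 * t + 12304) * (m * m) := by ring
    rw [this]
    have h : 96 * t + 12304 < (t + 127) * (t + 126) := by nlinarith
    exact mul_lt_mul_of_pos_right h k5
  have k7 := (Nat.mul_le_mul_left 16 (h3.trans (Nat.add_le_add k3 k4))).trans_lt k6
  omega

end Count

section Envelope

variable {X P : Type*} {m : ℕ} [NeZero m] {mX : X → X → X} {mP : P → P → P}
  {σ : X → ZMod m → ZMod m} {tri : ZMod m → ZMod m → ZMod m}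

/-- The only affine bijection of `ZMod m` permuting the involutions `σ x` is the identity. -/
def IsRigidFamily {X : Type*} {m : ℕ} (σ : X → ZMod m → ZMod m) : Prop :=
  ∀ f : ZMod m → ZMod m, Function.Injective f → (∀ a b, f (a + b) = f a + f b - f 0) →
    ∀ β : X → X, Function.Injective β → (∀ x a, f (σ x a) = σ (β x) (f a)) → f = id

/-- The automorphisms of a blow-up act on the factor `P` only. -/
theorem exists_perm_of_isOpAut_blowUp [Finite P] [Nontrivial P] (hF : IsFibreSystem mX σ tri)
    (hP : IsSteiner mP) (hconn : ∀ s, ∃ x, σ x s = s + 1) (hrigid : IsRigidFamily σ)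
    {g : Equiv.Perm (X ⊕ P × ZMod m)} (hg : IsOpAut (blowUp mX mP σ tri) g)
    (hl : ∀ x, ∃ y, g (Sum.inl x) = Sum.inl y) (hr : ∀ p, ∃ q, g (Sum.inr p) = Sum.inr q) :
    ∃ π : Equiv.Perm P, IsOpAut mP π ∧ (∀ x, g (Sum.inl x) = Sum.inl x) ∧
      ∀ v s, g (Sum.inr (v, s)) = Sum.inr (π v, s) := by
  choose β hβ using hl
  choose G hG using hr
  have hβi : Function.Injective β := fun x y e =>
    Sum.inl_injective (g.injective (by rw [hβ, hβ, e]))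
  have hGi : Function.Injective G := fun x y e =>
    Sum.inr_injective (g.injective (by rw [hG, hG, e]))
  have hGσ : ∀ x v s, G (v, σ x s) = ((G (v, s)).1, σ (β x) (G (v, s)).2) := by
    intro x v s
    have h := hg (Sum.inl x) (Sum.inr (v, s))
    rw [blowUp_inl_inr, hG, hβ, hG] at h
    exact Sum.inr_injective h
  have hG1 : ∀ v s, (G (v, s)).1 = (G (v, 0)).1 := by
    intro v s
    have h : ∀ n : ℕ, (G (v, (n : ZMod m))).1 = (G (v, 0)).1 := by
      intro n
      induction n with
      | zero => simp
      | succ n ih =>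
        obtain ⟨x, hx⟩ := hconn (n : ZMod m)
        rw [Nat.cast_succ, ← hx, hGσ, ih]
    rw [← ZMod.natCast_zmod_val s]
    exact h _
  let π : P → P := fun v => (G (v, 0)).1
  let f : P → ZMod m → ZMod m := fun v s => (G (v, s)).2
  have hGf : ∀ v s, G (v, s) = (π v, f v s) := fun v s => Prod.ext (hG1 v s) rfl
  have hfi : ∀ v, Function.Injective (f v) := by
    intro v s t e
    have := hGi (a₁ := (v, s)) (a₂ := (v, t)) (by rw [hGf, hGf, e])
    exact (Prod.ext_iff.1 this).2
  have hπi : Function.Injective π := by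
    intro v w e
    obtain ⟨s, hs⟩ := (Finite.injective_iff_surjective.1 (hfi v)) (f w 0)
    have := hGi (a₁ := (v, s)) (a₂ := (w, 0)) (by rw [hGf, hGf, e, hs])
    exact (Prod.ext_iff.1 this).1
  have hmul : ∀ v w, v ≠ w → ∀ a b,
      π (mP v w) = mP (π v) (π w) ∧ f (mP v w) (-a - b) = -f v a - f w b := by
    intro v w hvw a b
    have h := hg (Sum.inr (v, a)) (Sum.inr (w, b))
    rw [blowUp_of_ne hvw, hG, hG, hG, hGf, hGf, hGf,
      blowUp_of_ne fun e => hvw (hπi e)] at h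
    exact Prod.ext_iff.1 (Sum.inr_injective h)
  have hfa : ∀ v a b, f v (a + b) = f v a + f v b - f v 0 := by
    intro v a b
    obtain ⟨w, hw⟩ := exists_ne v
    have h : ∀ a b, f v (a + b) = f v a + f w b - f w 0 := by
      intro a b
      have h1 := (hmul v w hw.symm a b).2
      have h2 := (hmul v w hw.symm (a + b) 0).2
      have h3 : -(a + b) - 0 = -a - b := by ring
      rw [h3, h1] at h2
      linear_combination h2
    have h1 := h a b
    have h2 := h 0 b
    rw [zero_add] at h2
    rw [h1, h2]
    ring
  have hfσ : ∀ v x a, f v (σ x a) = σ (β x) (f v a) := fun v x a =>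
    congrArg Prod.snd (hGσ x v a)
  have hfid : ∀ v s, f v s = s := fun v s =>
    congrFun (hrigid (f v) (hfi v) (hfa v) β hβi (hfσ v)) s
  obtain ⟨v₀⟩ : Nonempty P := inferInstance
  have hβid : ∀ x, β x = x := by
    intro x
    have h := hfσ v₀ x 0
    rw [hfid, hfid] at h
    exact (hF.inj _ _ _ h).symm
  refine ⟨Equiv.ofBijective π (Finite.injective_iff_bijective.1 hπi), fun v w => ?_,
    fun x => by rw [hβ, hβid], fun v s => by rw [hG, hGf, hfid]; rfl⟩
  by_cases hvw : v = w
  · subst hvw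
    rw [hP.idem, hP.idem]
  · exact (hmul v w hvw 0 0).1

theorem isEnvelope_blowUp {α : Type*} {TV : Finset (Finset α)} {φ : α → P} [Fintype X] [Fintype P]
    (hE : IsEnvelope TV mP φ) (hF : IsFibreSystem mX σ tri)
    (hconn : ∀ s, ∃ x, σ x s = s + 1) (hrigid : IsRigidFamily σ)
    (h2 : ∀ a : ZMod m, (univ.filter fun b => b + b = a + a).card ≤ 2)
    (hσ : ∀ x, ∃ δ, m ≤ 4 * (univ.filter fun s => σ x s = s + δ).card)
    (hX : Fintype.card X ≤ m) (hw : 127 ≤ Fintype.card P) (hA : 2 * Fintype.card P ^ 2 ≤ m) :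
    IsEnvelope TV (blowUp mX mP σ tri) (fun a => Sum.inr (φ a, 0)) := by
  have hP := hE.steiner
  have : Nontrivial P := Fintype.one_lt_card_iff_nontrivial.1 (by omega)
  have hlt : ∀ p x, wordCount (blowUp mX mP σ tri) (Sum.inr p) <
      wordCount (blowUp mX mP σ tri) (Sum.inl x) :=
    wordCount_inr_lt_inl hF hP (by convert h2) (by rw [ZMod.card]; convert hσ) (by simpa [ZMod.card] using hX)
      hw (by simpa [ZMod.card] using hA)
  have hact : ∀ g, IsOpAut (blowUp mX mP σ tri) g →
      ∃ π : Equiv.Perm P, IsOpAut mP π ∧ (∀ x, g (Sum.inl x) = Sum.inl x) ∧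
        ∀ v s, g (Sum.inr (v, s)) = Sum.inr (π v, s) := by
    intro g hg
    refine exists_perm_of_isOpAut_blowUp hF hP hconn hrigid hg (fun x => ?_) (fun p => ?_)
    · rcases h : g (Sum.inl x) with y | q
      · exact ⟨y, rfl⟩
      · have h1 := hg.wordCount_eq (Sum.inl x)
        have h2 := hlt q x
        rw [h] at h1
        omega
    · rcases h : g (Sum.inr p) with y | q
      · have h1 := hg.wordCount_eq (Sum.inr p)
        have h2 := hlt p y
        rw [h] at h1
        omega
      · exact ⟨q, rfl⟩
  refine ⟨blowUp_isSteiner hF hP, fun a b e => hE.inj ?_, fun a b c hab => ?_, fun h hh => ?_,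
    fun g hg a => ?_, fun g hg hfix => ?_⟩
  · exact congrArg Prod.fst (Sum.inr_injective e)
  · rw [← hE.triple a b c hab, blowUp_of_ne fun e => hab (hE.inj e)]
    simp
  · obtain ⟨π, hπ, hπφ⟩ := hE.lift h hh
    refine ⟨Equiv.sumCongr (Equiv.refl X) (Equiv.prodCongr π (Equiv.refl _)), ?_, fun a => ?_⟩
    · rintro (x | ⟨v, a⟩) (y | ⟨w, b⟩)
      · simp
      · simp
      · simp
      · by_cases hvw : v = w
        · subst hvw
          by_cases hab : a = b
          · subst hab
            simp [blowUp_self]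
          · by_cases hex : ∃ x, σ x a = b
            · obtain ⟨x, hx⟩ := hex
              simp [blowUp_matched hF _ hx]
            · have hex1 : ∀ x, σ x a ≠ b := by simpa using hex
              simp [blowUp_unmatched _ hab hex1]
        · have hvw' : π v ≠ π w := fun e => hvw (π.injective e)
          simp [blowUp_of_ne hvw, blowUp_of_ne hvw', hπ v w]
    · simp [hπφ]
  · obtain ⟨π, hπ, -, hr⟩ := hact g hg
    obtain ⟨b, hb⟩ := hE.restrict π hπ a
    exact ⟨b, by rw [hr, hb]⟩
  · obtain ⟨π, hπ, hl, hr⟩ := hact g hg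
    have h1 : π = 1 := by
      refine hE.faithful π hπ fun a => ?_
      have h := hfix a
      rw [hr] at h
      exact congrArg Prod.fst (Sum.inr_injective h)
    ext p
    rcases p with x | ⟨v, s⟩
    · rw [hl]; rfl
    · rw [hr, h1]; rfl

end Envelope

/-! ### A fibre system on the integers modulo `48 * p + 28` -/

/-- The sizes of the steps by which the involutions move. -/
def stepSize (p : ℕ) {j : ℕ} : Option (Fin j × Fin 3) → ℤ
  | none => 20 * p + 11
  | some (i, 0) => 8 * (i : ℕ) + 1
  | some (i, 1) => 12 * p + 6 - 4 * (i : ℕ)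
  | some (i, 2) => 12 * p + 7 + 4 * (i : ℕ)

/-- `e` is not the size of a step. -/
def IsNonStep (p j : ℕ) (e : ℤ) : Prop :=
  e ≠ 20 * p + 11 ∧ ¬ (e % 8 = 1 ∧ 0 < e ∧ e < 8 * j) ∧
    ¬ ((12 * p + 6 - e) % 4 = 0 ∧ 0 ≤ 12 * p + 6 - e ∧ 12 * p + 6 - e < 4 * j) ∧
    ¬ ((e - 12 * p - 7) % 4 = 0 ∧ 0 ≤ e - 12 * p - 7 ∧ e - 12 * p - 7 < 4 * j)

/-- The differences occurring in the triples inside a fibre. -/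
def IsFree (p j : ℕ) (e : ℤ) : Prop :=
  e ≠ 0 ∧ -(24 * p + 14) < e ∧ e < 24 * p + 14 ∧ IsNonStep p j e ∧ IsNonStep p j (-e)

theorem isNonStep_iff {p j : ℕ} {e : ℤ} :
    IsNonStep p j e ↔ ∀ l : Option (Fin j × Fin 3), e ≠ stepSize p l := by
  constructor
  · rintro ⟨h1, h2, h3, h4⟩ (_ | ⟨i, k⟩)
    · exact h1
    · have hi := i.2
      fin_cases k <;> simp only [stepSize] <;> omega
  · intro h
    refine ⟨h none, fun h2 => ?_, fun h3 => ?_, fun h4 => ?_⟩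
    · have := h (some (⟨(e / 8).toNat, by omega⟩, 0))
      simp only [stepSize] at this
      omega
    · have := h (some (⟨((12 * p + 6 - e) / 4).toNat, by omega⟩, 1))
      simp only [stepSize] at this
      omega
    · have := h (some (⟨((e - 12 * p - 7) / 4).toNat, by omega⟩, 2))
      simp only [stepSize] at this
      omega

theorem stepSize_pos {p j : ℕ} (hj : j ≤ p) (l : Option (Fin j × Fin 3)) : 0 < stepSize p l := by
  rcases l with _ | ⟨i, k⟩
  · simp only [stepSize]; omega
  · have hi := i.2
    fin_cases k <;> simp only [stepSize] <;> omega

theorem stepSize_lt {p j : ℕ} (hj : j ≤ p) (l : Option (Fin j × Fin 3)) :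
    stepSize p l < 24 * p + 14 := by
  rcases l with _ | ⟨i, k⟩
  · simp only [stepSize]; omega
  · have hi := i.2
    fin_cases k <;> simp only [stepSize] <;> omega

theorem stepSize_mod_four {p j : ℕ} (l : Option (Fin j × Fin 3)) : stepSize p l % 4 ≠ 0 := by
  rcases l with _ | ⟨i, k⟩
  · simp only [stepSize]; omega
  · fin_cases k <;> simp only [stepSize] <;> omega

theorem stepSize_injective {p j : ℕ} (hj : j ≤ p) :
    Function.Injective (stepSize p : Option (Fin j × Fin 3) → ℤ) := by
  rintro (_ | ⟨i, k⟩) (_ | ⟨i', k'⟩) h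
  · rfl
  · have hi := i'.2
    fin_cases k' <;> simp only [stepSize] at h <;> omega
  · have hi := i.2
    fin_cases k <;> simp only [stepSize] at h <;> omega
  · have hi := i.2
    have hi' := i'.2
    fin_cases k <;> fin_cases k' <;> simp only [stepSize] at h <;> first | omega | skip
    all_goals
      have : i = i' := Fin.ext (by omega)
      rw [this]

/-- The triples inside a fibre are the translates of `{0, e, thirdPoint p e}`. -/
def thirdPoint (p : ℕ) (e : ℤ) : ℤ :=
  if -(8 * p + 4) ≤ e ∧ e ≤ 8 * p + 4 then
    if e % 2 = 1 then (24 * p + 13 + e) / 2 else (40 * p + 22 + e) / 2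
  else if 0 < e then
    if e ≤ 16 * p + 8 then 2 * e - (24 * p + 13) else 2 * e - (40 * p + 22)
  else if -e ≤ 16 * p + 8 then -e - (24 * p + 13) else -e - (40 * p + 22)

theorem IsFree.neg {p j : ℕ} {e : ℤ} (h : IsFree p j e) : IsFree p j (-e) := by
  obtain ⟨h1, h2, h3, h4, h5⟩ := h
  exact ⟨by omega, by omega, by omega, h5, by rwa [neg_neg]⟩

theorem IsFree.thirdPoint {p j : ℕ} (hj : j ≤ p) {e : ℤ} (h : IsFree p j e) :
    IsFree p j (thirdPoint p e) := by
  unfold IsFree IsNonStep at *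
  unfold _root_.thirdPoint
  split_ifs <;> omega

theorem thirdPoint_thirdPoint {p j : ℕ} {e : ℤ} (h : IsFree p j e) :
    thirdPoint p (thirdPoint p e) = e := by
  obtain ⟨h1, h2, h3, ⟨h4, -⟩, h5, -⟩ := h
  unfold thirdPoint
  split_ifs <;> omega

theorem thirdPoint_neg {p j : ℕ} {e : ℤ} (h : IsFree p j e) :
    thirdPoint p (-e) = thirdPoint p e - e := by
  obtain ⟨h1, h2, h3, ⟨h4, -⟩, h5, -⟩ := h
  unfold thirdPoint
  split_ifs <;> omega

/-- The index set of the involutions. -/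
abbrev InvIdx (j : ℕ) : Type := Option (Option (Fin j × Fin 3) × Bool)

theorem card_invIdx (j : ℕ) : Fintype.card (InvIdx j) = 3 * (2 * j + 1) := by
  simp only [InvIdx, Fintype.card_option, Fintype.card_prod, Fintype.card_fin, Fintype.card_bool]
  ring

/-- Orients the edges `{r, r + e}` of the circulant graph on `ZMod 4`, for `e ≠ 0`. -/
def forward (e r : ZMod 4) : Bool :=
  if e = 2 then decide (r = 0) || decide (r = 1) else decide (r = 0) || decide (r = 2)

theorem forward_add : ∀ e r : ZMod 4, e ≠ 0 → forward e (r + e) = !forward e r := by decide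

theorem forward_sub : ∀ e r : ZMod 4, e ≠ 0 → forward e (r - e) = !forward e r := by decide

section Shift

variable (p : ℕ) {j : ℕ}

/-- Reduction modulo four. -/
def modFour : ZMod (48 * p + 28) →+* ZMod 4 := ZMod.castHom (by omega) (ZMod 4)

/-- The amount by which the involution with index `x` moves the point `s`. -/
def stepShift : InvIdx j → ZMod (48 * p + 28) → ℤ
  | none, _ => 24 * p + 14
  | some (l, b), s =>
    if forward (stepSize p l : ℤ) (modFour p s) = b then stepSize p l else -stepSize p l

/-- The involutions before symmetry breaking. -/
def shiftInv (x : InvIdx j) (s : ZMod (48 * p + 28)) : ZMod (48 * p + 28) := s + stepShift p x s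

variable {p}

theorem intCast_inj_of_range {a b : ℤ} (ha : -(24 * p + 14) < a) (ha' : a ≤ 24 * p + 14)
    (hb : -(24 * p + 14) < b) (hb' : b ≤ 24 * p + 14)
    (h : (a : ZMod (48 * p + 28)) = b) : a = b := by
  have h1 := (ZMod.intCast_eq_intCast_iff_dvd_sub _ _ _).1 h
  obtain ⟨c, hc⟩ := h1
  push_cast at hc
  have hc0 : c = 0 := by
    have h2 : (48 * (p : ℤ) + 28) * c < 48 * p + 28 := by omega
    have h3 : -(48 * (p : ℤ) + 28) < (48 * (p : ℤ) + 28) * c := by omega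
    have : c < 1 := by nlinarith
    have : -1 < c := by nlinarith
    omega
  rw [hc0] at hc
  omega

theorem half_add_half : ((24 * p + 14 : ℤ) : ZMod (48 * p + 28)) + ((24 * p + 14 : ℤ)) = 0 := by
  rw [← Int.cast_add, ZMod.intCast_zmod_eq_zero_iff_dvd]
  exact ⟨1, by push_cast; ring⟩

theorem stepShift_eq_or (l : Option (Fin j × Fin 3)) (b : Bool) (s : ZMod (48 * p + 28)) :
    stepShift p (some (l, b)) s = stepSize p l ∨ stepShift p (some (l, b)) s = -stepSize p l := by
  simp only [stepShift]
  split_ifs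
  · exact Or.inl rfl
  · exact Or.inr rfl

theorem stepShift_range (hj : j ≤ p) (x : InvIdx j) (s : ZMod (48 * p + 28)) :
    stepShift p x s ≠ 0 ∧ -(24 * p + 14) < stepShift p x s ∧ stepShift p x s ≤ 24 * p + 14 := by
  rcases x with _ | ⟨l, b⟩
  · simp only [stepShift]; omega
  · have h1 := stepSize_pos hj l
    have h2 := stepSize_lt hj l
    rcases stepShift_eq_or l b s with h | h <;> rw [h] <;> omega

theorem stepSize_cast_ne (l : Option (Fin j × Fin 3)) : ((stepSize p l : ℤ) : ZMod 4) ≠ 0 := by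
  intro h
  have := (ZMod.intCast_zmod_eq_zero_iff_dvd _ 4).1 h
  exact stepSize_mod_four l (Int.emod_eq_zero_of_dvd this)

theorem shiftInv_shiftInv (x : InvIdx j) (s : ZMod (48 * p + 28)) :
    shiftInv p x (shiftInv p x s) = s := by
  rcases x with _ | ⟨l, b⟩
  · simp only [shiftInv, stepShift]
    rw [add_assoc, half_add_half, add_zero]
  · have h0 := stepSize_cast_ne (p := p) l
    by_cases h : forward (stepSize p l : ℤ) (modFour p s) = b
    · have h1 : forward (stepSize p l : ℤ) (modFour p (s + (stepSize p l : ℤ))) ≠ b := by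
        rw [map_add, map_intCast, forward_add _ _ h0, h]
        simp
      simp only [shiftInv, stepShift, if_pos h, if_neg h1]
      push_cast
      ring
    · have h1 : forward (stepSize p l : ℤ) (modFour p (s + ((-stepSize p l : ℤ)))) = b := by
        rw [map_add, map_intCast, Int.cast_neg, ← sub_eq_add_neg, forward_sub _ _ h0]
        revert h
        cases forward (stepSize p l : ℤ) (modFour p s) <;> cases b <;> simp
      simp only [shiftInv, stepShift, if_neg h, if_pos h1]
      push_cast
      ring

theorem shiftInv_ne_self (hj : j ≤ p) (x : InvIdx j) (s : ZMod (48 * p + 28)) :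
    shiftInv p x s ≠ s := by
  intro h
  have h1 : ((stepShift p x s : ℤ) : ZMod (48 * p + 28)) = (0 : ℤ) := by
    simpa [shiftInv] using h
  obtain ⟨h2, h3, h4⟩ := stepShift_range hj x s
  exact h2 (intCast_inj_of_range h3 h4 (by omega) (by omega) h1)

theorem shiftInv_left_injective (hj : j ≤ p) {x y : InvIdx j} {s : ZMod (48 * p + 28)}
    (h : shiftInv p x s = shiftInv p y s) : x = y := by
  have h0 : stepShift p x s = stepShift p y s := by
    obtain ⟨-, h3, h4⟩ := stepShift_range hj x s
    obtain ⟨-, h5, h6⟩ := stepShift_range hj y s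
    exact intCast_inj_of_range h3 h4 h5 h6 (add_left_cancel h)
  rcases x with _ | ⟨l, b⟩ <;> rcases y with _ | ⟨l', b'⟩
  · rfl
  · have h1 := stepSize_lt hj l'
    have h2 := stepSize_pos hj l'
    rcases stepShift_eq_or l' b' s with h | h <;> rw [h] at h0 <;> simp only [stepShift] at h0 <;> omega
  · have h1 := stepSize_lt hj l
    have h2 := stepSize_pos hj l
    rcases stepShift_eq_or l b s with h | h <;> rw [h] at h0 <;> simp only [stepShift] at h0 <;> omega
  · have hp := stepSize_pos hj l
    have hp' := stepSize_pos hj l'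
    have hl : l = l' := by
      apply stepSize_injective hj
      rcases stepShift_eq_or l b s with h | h <;> rcases stepShift_eq_or l' b' s with h' | h' <;>
        rw [h, h'] at h0 <;> omega
    subst hl
    have hb : b = b' := by
      simp only [stepShift] at h0
      revert h0
      cases forward (stepSize p l : ℤ) (modFour p s) <;> cases b <;> cases b' <;> simp <;> omega
    rw [hb]

theorem exists_stepShift_eq (l : Option (Fin j × Fin 3)) (s : ZMod (48 * p + 28)) (e : ℤ)
    (he : e = stepSize p l ∨ e = -stepSize p l) : ∃ x : InvIdx j, stepShift p x s = e := by
  rcases he with rfl | rfl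
  · exact ⟨some (l, forward (stepSize p l : ℤ) (modFour p s)), by simp [stepShift]⟩
  · exact ⟨some (l, !forward (stepSize p l : ℤ) (modFour p s)), by simp [stepShift]⟩

/-- The differences not realised by the involutions are the free ones. -/
theorem isFree_of_forall_ne {s t : ZMod (48 * p + 28)} (hst : s ≠ t)
    (h : ∀ x : InvIdx j, shiftInv p x s ≠ t) : IsFree p j (t - s).valMinAbs := by
  obtain ⟨e, he⟩ : ∃ e, e = (t - s).valMinAbs := ⟨_, rfl⟩
  obtain ⟨h1, h2⟩ := (ZMod.valMinAbs_spec _ _).1 he.symm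
  obtain ⟨h2, h3⟩ := h2
  push_cast at h2 h3
  have hne : ∀ x : InvIdx j, stepShift p x s ≠ e := by
    intro x hx
    apply h x
    rw [shiftInv, hx, ← h1]
    ring
  have hn := hne none
  simp only [stepShift] at hn
  have hs : ∀ l : Option (Fin j × Fin 3), e ≠ stepSize p l ∧ -e ≠ stepSize p l := by
    intro l
    constructor
    · intro hl
      obtain ⟨x, hx⟩ := exists_stepShift_eq l s e (Or.inl hl)
      exact hne x hx
    · intro hl
      obtain ⟨x, hx⟩ := exists_stepShift_eq l s e (Or.inr (by omega))
      exact hne x hx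
  rw [← he]
  refine ⟨?_, by omega, by omega, isNonStep_iff.2 fun l => (hs l).1,
    isNonStep_iff.2 fun l => (hs l).2⟩
  rintro rfl
  apply hst
  rw [Int.cast_zero, sub_eq_zero] at h1
  exact h1.symm

theorem shiftInv_ne_of_isFree (hj : j ≤ p) {e : ℤ} (he : IsFree p j e) (s : ZMod (48 * p + 28))
    (x : InvIdx j) : shiftInv p x s ≠ s + e := by
  intro h
  obtain ⟨-, h3, h4⟩ := stepShift_range hj x s
  obtain ⟨h5, h6, h7, h8, h9⟩ := he
  have h0 := intCast_inj_of_range h3 h4 h6 h7.le (add_left_cancel h)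
  rcases x with _ | ⟨l, b⟩
  · simp only [stepShift] at h0
    omega
  · rcases stepShift_eq_or l b s with h | h <;> rw [h] at h0
    · exact isNonStep_iff.1 h8 l h0.symm
    · exact isNonStep_iff.1 h9 l (by omega)

variable (p) in
/-- The third point of the triple through two points of a fibre. -/
def thirdInFibre (s t : ZMod (48 * p + 28)) : ZMod (48 * p + 28) :=
  s + thirdPoint p (t - s).valMinAbs

theorem thirdInFibre_add {e : ℤ} (he : IsFree p j e) (s : ZMod (48 * p + 28)) :
    thirdInFibre p s (s + e) = s + thirdPoint p e := by
  obtain ⟨-, h6, h7, -⟩ := he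
  rw [thirdInFibre, (ZMod.valMinAbs_spec _ e).2 ⟨by ring, ?_, ?_⟩]
  · push_cast; omega
  · push_cast; omega

theorem exists_isFree {s t : ZMod (48 * p + 28)} (hst : s ≠ t)
    (h : ∀ x : InvIdx j, shiftInv p x s ≠ t) : ∃ e : ℤ, IsFree p j e ∧ t = s + e :=
  ⟨_, isFree_of_forall_ne hst h, by rw [ZMod.coe_valMinAbs]; ring⟩

/-- Any family of involutions which at each point realises the same differences as `shiftInv`
gives a fibre system. -/
theorem isFibreSystem_of_invol (hj : j ≤ p) {mX : InvIdx j → InvIdx j → InvIdx j}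
    (hX : IsSteiner mX) {σ : InvIdx j → ZMod (48 * p + 28) → ZMod (48 * p + 28)}
    (τ : ZMod (48 * p + 28) → Equiv.Perm (InvIdx j)) (hτ : ∀ x s, σ x s = shiftInv p (τ s x) s)
    (hσ : ∀ x s, σ x (σ x s) = s) : IsFibreSystem mX σ (thirdInFibre p) := by
  have hfree : ∀ s t, s ≠ t → (∀ x, σ x s ≠ t) → ∃ e : ℤ, IsFree p j e ∧ t = s + e := by
    intro s t hst h
    refine exists_isFree hst fun x e => h ((τ s).symm x) ?_
    rw [hτ, Equiv.apply_symm_apply, e]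
  refine ⟨hX, hσ, fun x s => ?_, fun x y s h => ?_, ?_, ?_, ?_, ?_⟩
  · rw [hτ]
    exact shiftInv_ne_self hj _ _
  · rw [hτ, hτ] at h
    exact (τ s).injective (shiftInv_left_injective hj h)
  · intro s t hst h
    obtain ⟨e, he, rfl⟩ := hfree s t hst h
    have h1 : s = (s + e) + ((-e : ℤ) : ZMod (48 * p + 28)) := by push_cast; ring
    have h2 := thirdInFibre_add he.neg (s + e)
    rw [← h1] at h2
    rw [h2, thirdInFibre_add he, thirdPoint_neg he]
    push_cast
    ring
  · intro s t hst h
    obtain ⟨e, he, rfl⟩ := hfree s t hst h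
    rw [thirdInFibre_add he]
    intro h1
    obtain ⟨h2, h3, h4, -⟩ := he.thirdPoint hj
    refine h2 (intCast_inj_of_range h3 h4.le (b := 0) (by omega) (by omega) ?_)
    simpa using h1
  · intro s t hst h x
    obtain ⟨e, he, rfl⟩ := hfree s t hst h
    rw [thirdInFibre_add he, hτ]
    exact shiftInv_ne_of_isFree hj (he.thirdPoint hj) s _
  · intro s t hst h
    obtain ⟨e, he, rfl⟩ := hfree s t hst h
    rw [thirdInFibre_add he, thirdInFibre_add (he.thirdPoint hj), thirdPoint_thirdPoint he]

end Shift

section Trade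

variable {p j : ℕ}

theorem natCast_inj_of_lt {a b : ℕ} (ha : a < 48 * p + 28) (hb : b < 48 * p + 28)
    (h : (a : ZMod (48 * p + 28)) = b) : a = b := by
  have := (ZMod.natCast_eq_natCast_iff' a b _).1 h
  rwa [Nat.mod_eq_of_lt ha, Nat.mod_eq_of_lt hb] at this

theorem exists_shiftInv_eq_add_or_sub (x : InvIdx j) :
    ∃ d : ZMod (48 * p + 28), ∀ s, shiftInv p x s = s + d ∨ shiftInv p x s = s - d := by
  rcases x with _ | ⟨l, b⟩
  · exact ⟨((24 * p + 14 : ℤ) : ZMod (48 * p + 28)), fun s => Or.inl rfl⟩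
  · refine ⟨(stepSize p l : ℤ), fun s => ?_⟩
    rcases stepShift_eq_or l b s with h | h
    · left; rw [shiftInv, h]
    · right; rw [shiftInv, h, Int.cast_neg, sub_eq_add_neg]

variable (p) in
/-- The size of the long steps used in the symmetry breaking. -/
def farStep : ZMod (48 * p + 28) := ((12 * p + 6 : ℕ) : ZMod (48 * p + 28))

variable (j) in
/-- An involution moving by steps of size one. -/
def nearIdx [NeZero j] : InvIdx j := some (some (0, 0), true)

variable (j) in
/-- An involution moving by steps of size `farStep p`. -/
def farIdx [NeZero j] : InvIdx j := some (some (0, 1), true)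

theorem shiftInv_nearIdx [NeZero j] (s : ZMod (48 * p + 28)) :
    shiftInv p (nearIdx j) s =
      if modFour p s = 0 ∨ modFour p s = 2 then s + 1 else s - 1 := by
  have h : ∀ r : ZMod 4, forward 1 r = true ↔ r = 0 ∨ r = 2 := by decide
  simp only [shiftInv, nearIdx, stepShift, stepSize, Fin.val_zero]
  push_cast
  simp only [h]
  split_ifs <;> simp [sub_eq_add_neg]

theorem four_mul_eq_zero (r : ZMod 4) : 4 * r = 0 := by
  revert r; decide

theorem shiftInv_farIdx [NeZero j] (s : ZMod (48 * p + 28)) :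
    shiftInv p (farIdx j) s =
      if modFour p s = 0 ∨ modFour p s = 1 then s + farStep p else s - farStep p := by
  have h : ∀ r : ZMod 4, forward 2 r = true ↔ r = 0 ∨ r = 1 := by decide
  simp only [shiftInv, farIdx, stepShift, stepSize, Fin.val_zero, farStep]
  push_cast
  have h4 := four_mul_eq_zero (3 * p + 1)
  have h2 : (12 * p + 6 - 0 : ZMod 4) = 2 := by linear_combination h4
  simp only [h2, h]
  split_ifs <;> ring

/-- The offsets of the points at which symmetry is broken. -/
def tradeOffsets : Finset ℕ := {0, 1, 4, 5, 12, 13}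

variable (p) in
/-- The lower half of the set of points at which symmetry is broken. -/
def lowSet : Finset (ZMod (48 * p + 28)) := tradeOffsets.image fun n : ℕ => (n : ZMod (48 * p + 28))

variable (p) in
/-- The upper half of the set of points at which symmetry is broken. -/
def highSet : Finset (ZMod (48 * p + 28)) :=
  tradeOffsets.image fun n : ℕ => ((12 * p + 6 + n : ℕ) : ZMod (48 * p + 28))

variable (p) in
/-- The set of points at which symmetry is broken. -/
def tradeSet : Finset (ZMod (48 * p + 28)) := lowSet p ∪ highSet p

theorem mem_tradeOffsets {n : ℕ} :
    n ∈ tradeOffsets ↔ n = 0 ∨ n = 1 ∨ n = 4 ∨ n = 5 ∨ n = 12 ∨ n = 13 := by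
  simp [tradeOffsets]

theorem mem_lowSet {s : ZMod (48 * p + 28)} :
    s ∈ lowSet p ↔ ∃ n ∈ tradeOffsets, (n : ZMod (48 * p + 28)) = s := by
  simp only [lowSet, mem_image]

theorem mem_highSet {s : ZMod (48 * p + 28)} :
    s ∈ highSet p ↔ ∃ n ∈ tradeOffsets, ((12 * p + 6 + n : ℕ) : ZMod (48 * p + 28)) = s := by
  simp only [highSet, mem_image]

theorem mem_highSet_iff {s : ZMod (48 * p + 28)} : s ∈ highSet p ↔ s - farStep p ∈ lowSet p := by
  rw [mem_highSet, mem_lowSet]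
  refine exists_congr fun n => and_congr_right fun _ => ?_
  rw [eq_sub_iff_add_eq, farStep, ← Nat.cast_add, Nat.add_comm n]

theorem card_tradeSet_le : (tradeSet p).card ≤ 12 := by
  refine (card_union_le _ _).trans ?_
  have h : tradeOffsets.card = 6 := rfl
  have h1 : (lowSet p).card ≤ 6 := card_image_le.trans h.le
  have h2 : (highSet p).card ≤ 6 := card_image_le.trans h.le
  omega

theorem modFour_of_mem_lowSet {s : ZMod (48 * p + 28)} (hs : s ∈ lowSet p) :
    (modFour p s = 0 ∧ s + 1 ∈ lowSet p) ∨ (modFour p s = 1 ∧ s - 1 ∈ lowSet p) := by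
  obtain ⟨n, hn, rfl⟩ := mem_lowSet.1 hs
  rw [map_natCast]
  have hup : n + 1 ∈ tradeOffsets → ((n : ℕ) : ZMod (48 * p + 28)) + 1 ∈ lowSet p := fun h =>
    mem_lowSet.2 ⟨n + 1, h, by push_cast; ring⟩
  have hdown : ∀ k, n = k + 1 → k ∈ tradeOffsets →
      ((n : ℕ) : ZMod (48 * p + 28)) - 1 ∈ lowSet p := fun k hk h =>
    mem_lowSet.2 ⟨k, h, by rw [hk]; push_cast; ring⟩
  rcases mem_tradeOffsets.1 hn with rfl | rfl | rfl | rfl | rfl | rfl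
  · exact Or.inl ⟨rfl, hup (by decide)⟩
  · exact Or.inr ⟨rfl, hdown 0 rfl (by decide)⟩
  · exact Or.inl ⟨rfl, hup (by decide)⟩
  · exact Or.inr ⟨rfl, hdown 4 rfl (by decide)⟩
  · exact Or.inl ⟨rfl, hup (by decide)⟩
  · exact Or.inr ⟨rfl, hdown 12 rfl (by decide)⟩

theorem modFour_farStep : modFour p (farStep p) = 2 := by
  rw [farStep, map_natCast]
  have h4 := four_mul_eq_zero (3 * p + 1)
  push_cast
  linear_combination h4

theorem modFour_of_mem_highSet {s : ZMod (48 * p + 28)} (hs : s ∈ highSet p) :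
    (modFour p s = 2 ∧ s + 1 ∈ highSet p) ∨ (modFour p s = 3 ∧ s - 1 ∈ highSet p) := by
  rw [mem_highSet_iff, mem_highSet_iff]
  have e1 : s + 1 - farStep p = s - farStep p + 1 := by ring
  have e2 : s - 1 - farStep p = s - farStep p - 1 := by ring
  rw [e1, e2]
  refine (modFour_of_mem_lowSet (mem_highSet_iff.1 hs)).imp (And.imp_left fun h => ?_)
    (And.imp_left fun h => ?_) <;> rw [map_sub, modFour_farStep, sub_eq_iff_eq_add] at h <;>
    rw [h] <;> rfl

theorem shiftInv_farIdx_of_mem_lowSet [NeZero j] {s : ZMod (48 * p + 28)} (hs : s ∈ lowSet p) :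
    shiftInv p (farIdx j) s = s + farStep p := by
  rw [shiftInv_farIdx, if_pos]
  exact (modFour_of_mem_lowSet hs).imp And.left And.left

theorem shiftInv_farIdx_of_mem_highSet [NeZero j] {s : ZMod (48 * p + 28)}
    (hs : s ∈ highSet p) : shiftInv p (farIdx j) s = s - farStep p := by
  rw [shiftInv_farIdx, if_neg]
  rcases modFour_of_mem_highSet hs with h | h <;> rw [h.1] <;> decide

theorem shiftInv_mem_tradeSet [NeZero j] {x : InvIdx j} (hx : x = nearIdx j ∨ x = farIdx j)
    {s : ZMod (48 * p + 28)} (hs : s ∈ tradeSet p) : shiftInv p x s ∈ tradeSet p := by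
  rcases hx with rfl | rfl <;> rcases mem_union.1 hs with hs | hs
  · refine mem_union_left _ ?_
    rcases modFour_of_mem_lowSet hs with h | h <;> rw [shiftInv_nearIdx, h.1]
    · rw [if_pos (by decide)]; exact h.2
    · rw [if_neg (by decide)]; exact h.2
  · refine mem_union_right _ ?_
    rcases modFour_of_mem_highSet hs with h | h <;> rw [shiftInv_nearIdx, h.1]
    · rw [if_pos (by decide)]; exact h.2
    · rw [if_neg (by decide)]; exact h.2
  · rw [shiftInv_farIdx_of_mem_lowSet hs]
    exact mem_union_right _ (mem_highSet_iff.2 (by simpa using hs))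
  · rw [shiftInv_farIdx_of_mem_highSet hs]
    exact mem_union_left _ (mem_highSet_iff.1 hs)

variable (p j) in
/-- The permutation of the indices of the involutions at the point `s`. -/
def tradePerm [NeZero j] (s : ZMod (48 * p + 28)) : Equiv.Perm (InvIdx j) :=
  if s ∈ tradeSet p then Equiv.swap (nearIdx j) (farIdx j) else 1

variable (p) in
/-- The involutions obtained from `shiftInv` by exchanging, on `tradeSet p`, the involutions with
indices `nearIdx j` and `farIdx j`. -/
def tradedInv [NeZero j] (x : InvIdx j) (s : ZMod (48 * p + 28)) : ZMod (48 * p + 28) :=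
  shiftInv p (tradePerm p j s x) s

theorem tradedInv_of_notMem [NeZero j] (x : InvIdx j) {s : ZMod (48 * p + 28)}
    (hs : s ∉ tradeSet p) : tradedInv p x s = shiftInv p x s := by
  rw [tradedInv, tradePerm, if_neg hs, Equiv.Perm.one_apply]

theorem tradedInv_of_ne [NeZero j] {x : InvIdx j} (h1 : x ≠ nearIdx j) (h2 : x ≠ farIdx j)
    (s : ZMod (48 * p + 28)) : tradedInv p x s = shiftInv p x s := by
  rw [tradedInv, tradePerm]
  split_ifs
  · rw [Equiv.swap_apply_of_ne_of_ne h1 h2]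
  · rfl

theorem tradedInv_nearIdx_of_mem [NeZero j] {s : ZMod (48 * p + 28)} (hs : s ∈ tradeSet p) :
    tradedInv p (nearIdx j) s = shiftInv p (farIdx j) s := by
  rw [tradedInv, tradePerm, if_pos hs, Equiv.swap_apply_left]

theorem tradedInv_farIdx_of_mem [NeZero j] {s : ZMod (48 * p + 28)} (hs : s ∈ tradeSet p) :
    tradedInv p (farIdx j) s = shiftInv p (nearIdx j) s := by
  rw [tradedInv, tradePerm, if_pos hs, Equiv.swap_apply_right]

theorem tradedInv_tradedInv [NeZero j] (x : InvIdx j) (s : ZMod (48 * p + 28)) :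
    tradedInv p x (tradedInv p x s) = s := by
  by_cases hx : x = nearIdx j ∨ x = farIdx j
  · by_cases hs : s ∈ tradeSet p
    · rcases hx with rfl | rfl
      · rw [tradedInv_nearIdx_of_mem hs,
          tradedInv_nearIdx_of_mem (shiftInv_mem_tradeSet (Or.inr rfl) hs), shiftInv_shiftInv]
      · rw [tradedInv_farIdx_of_mem hs,
          tradedInv_farIdx_of_mem (shiftInv_mem_tradeSet (Or.inl rfl) hs), shiftInv_shiftInv]
    · have hs' : shiftInv p x s ∉ tradeSet p := fun h => hs (by
        have := shiftInv_mem_tradeSet hx h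
        rwa [shiftInv_shiftInv] at this)
      rw [tradedInv_of_notMem x hs, tradedInv_of_notMem x hs', shiftInv_shiftInv]
  · push Not at hx
    rw [tradedInv_of_ne hx.1 hx.2, tradedInv_of_ne hx.1 hx.2, shiftInv_shiftInv]

theorem isFibreSystem_tradedInv [NeZero j] (hj : j ≤ p) {mX : InvIdx j → InvIdx j → InvIdx j}
    (hX : IsSteiner mX) : IsFibreSystem mX (tradedInv p) (thirdInFibre p) :=
  isFibreSystem_of_invol hj hX (tradePerm p j) (fun _ _ => rfl) tradedInv_tradedInv

theorem exists_tradedInv_eq_add_one [NeZero j] (s : ZMod (48 * p + 28)) :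
    ∃ x : InvIdx j, tradedInv p x s = s + 1 := by
  obtain ⟨x, hx⟩ := exists_stepShift_eq (p := p) (some ((0 : Fin j), 0)) s 1
    (Or.inl (by simp [stepSize]))
  refine ⟨(tradePerm p j s).symm x, ?_⟩
  rw [tradedInv, Equiv.apply_symm_apply, shiftInv, hx, Int.cast_one]

theorem card_double_eq_le (a : ZMod (48 * p + 28)) :
    (univ.filter fun b => b + b = a + a).card ≤ 2 := by
  have h : (univ.filter fun b => b + b = a + a) ⊆
      {a, a + ((24 * p + 14 : ℤ) : ZMod (48 * p + 28))} := by
    intro b hb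
    have hb := (mem_filter.1 hb).2
    obtain ⟨e, he⟩ : ∃ e, e = (b - a).valMinAbs := ⟨_, rfl⟩
    obtain ⟨h1, h2⟩ := (ZMod.valMinAbs_spec _ _).1 he.symm
    obtain ⟨h2, h3⟩ := h2
    have h4 : ((e + e : ℤ) : ZMod (48 * p + 28)) = 0 := by
      push_cast
      rw [← h1]
      linear_combination hb
    obtain ⟨c, hc⟩ := (ZMod.intCast_zmod_eq_zero_iff_dvd _ _).1 h4
    push_cast at h2 h3 hc
    have hc1 : c < 2 := by nlinarith
    have hc2 : -1 < c := by nlinarith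
    have hb' : b = a + e := by rw [← h1]; ring
    rw [mem_insert, mem_singleton, hb']
    obtain rfl | rfl : c = 0 ∨ c = 1 := by omega
    · left
      have : e = 0 := by omega
      simp [this]
    · right
      have : e = 24 * p + 14 := by omega
      rw [this]
  exact (card_le_card h).trans card_le_two

theorem exists_le_card_tradedInv [NeZero j] (x : InvIdx j) :
    ∃ δ, 48 * p + 28 ≤ 4 * (univ.filter fun s => tradedInv p x s = s + δ).card := by
  obtain ⟨d, hd⟩ := exists_shiftInv_eq_add_or_sub (p := p) x
  have h : (univ : Finset (ZMod (48 * p + 28))) ⊆ tradeSet p ∪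
      ((univ.filter fun s => tradedInv p x s = s + d) ∪
        (univ.filter fun s => tradedInv p x s = s + -d)) := by
    intro s _
    by_cases hs : s ∈ tradeSet p
    · exact mem_union_left _ hs
    · refine mem_union_right _ ?_
      rw [mem_union, mem_filter, mem_filter, tradedInv_of_notMem x hs, ← sub_eq_add_neg]
      exact (hd s).imp (fun h => ⟨mem_univ _, h⟩) (fun h => ⟨mem_univ _, h⟩)
  have h1 := (card_le_card h).trans (card_union_le _ _)
  have h2 := card_union_le (univ.filter fun s => tradedInv p x s = s + d)
    (univ.filter fun s => tradedInv p x s = s + -d)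
  have h3 := card_tradeSet_le (p := p)
  rw [card_univ, ZMod.card] at h1
  by_cases h4 : 48 * p + 28 ≤ 4 * (univ.filter fun s => tradedInv p x s = s + d).card
  · exact ⟨d, h4⟩
  · exact ⟨-d, by omega⟩

end Trade

section Rigid

variable {p j : ℕ} [NeZero j]

theorem farStep_ne (hp : 1 ≤ p) : farStep p ≠ 1 ∧ farStep p ≠ -1 ∧ farStep p ≠ -farStep p := by
  refine ⟨fun h => ?_, fun h => ?_, fun h => ?_⟩
  · have := natCast_inj_of_lt (p := p) (a := 12 * p + 6) (b := 1) (by omega) (by omega)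
      (by simpa [farStep] using h)
    omega
  · have := natCast_inj_of_lt (p := p) (a := 12 * p + 6 + 1) (b := 0) (by omega) (by omega)
      (by rw [farStep, eq_neg_iff_add_eq_zero] at h; simpa using h)
    omega
  · have := natCast_inj_of_lt (p := p) (a := 12 * p + 6 + (12 * p + 6)) (b := 0) (by omega)
      (by omega) (by rw [farStep, eq_neg_iff_add_eq_zero] at h; simpa using h)
    omega

theorem shiftInv_nearIdx_eq_or (s : ZMod (48 * p + 28)) :
    shiftInv p (nearIdx j) s = s + 1 ∨ shiftInv p (nearIdx j) s = s - 1 := by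
  rw [shiftInv_nearIdx]
  split_ifs
  · exact Or.inl rfl
  · exact Or.inr rfl

theorem shiftInv_farIdx_eq_or (s : ZMod (48 * p + 28)) :
    shiftInv p (farIdx j) s = s + farStep p ∨ shiftInv p (farIdx j) s = s - farStep p := by
  rw [shiftInv_farIdx]
  split_ifs
  · exact Or.inl rfl
  · exact Or.inr rfl

theorem tradedInv_nearIdx_of_mem_lowSet {s : ZMod (48 * p + 28)} (hs : s ∈ lowSet p) :
    tradedInv p (nearIdx j) s = s + farStep p := by
  rw [tradedInv_nearIdx_of_mem (mem_union_left _ hs), shiftInv_farIdx_of_mem_lowSet hs]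

theorem tradedInv_nearIdx_of_mem_highSet {s : ZMod (48 * p + 28)} (hs : s ∈ highSet p) :
    tradedInv p (nearIdx j) s = s - farStep p := by
  rw [tradedInv_nearIdx_of_mem (mem_union_right _ hs), shiftInv_farIdx_of_mem_highSet hs]

theorem tradedInv_nearIdx_of_notMem {s : ZMod (48 * p + 28)} (hs : s ∉ tradeSet p) :
    tradedInv p (nearIdx j) s = s + 1 ∨ tradedInv p (nearIdx j) s = s - 1 := by
  rw [tradedInv_of_notMem _ hs]
  exact shiftInv_nearIdx_eq_or s

theorem mem_lowSet_of_tradedInv (hp : 1 ≤ p) {s : ZMod (48 * p + 28)}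
    (h : tradedInv p (nearIdx j) s = s + farStep p) : s ∈ lowSet p := by
  obtain ⟨h1, h2, h3⟩ := farStep_ne hp
  by_cases hs : s ∈ tradeSet p
  · rcases mem_union.1 hs with hs | hs
    · exact hs
    · rw [tradedInv_nearIdx_of_mem_highSet hs] at h
      exact absurd (by linear_combination -h) h3
  · rcases tradedInv_nearIdx_of_notMem (j := j) hs with e | e <;> rw [e] at h
    · exact absurd (by linear_combination -h) h1
    · exact absurd (by linear_combination -h) h2

theorem mem_highSet_of_tradedInv (hp : 1 ≤ p) {s : ZMod (48 * p + 28)}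
    (h : tradedInv p (nearIdx j) s = s - farStep p) : s ∈ highSet p := by
  obtain ⟨h1, h2, h3⟩ := farStep_ne hp
  by_cases hs : s ∈ tradeSet p
  · rcases mem_union.1 hs with hs | hs
    · rw [tradedInv_nearIdx_of_mem_lowSet hs] at h
      exact absurd (by linear_combination h) h3
    · exact hs
  · rcases tradedInv_nearIdx_of_notMem (j := j) hs with e | e <;> rw [e] at h
    · exact absurd (by linear_combination h) h2
    · exact absurd (by linear_combination h) h1

theorem mem_tradeSet_of_tradedInv (hp : 1 ≤ p) {s : ZMod (48 * p + 28)}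
    (h : tradedInv p (farIdx j) s = s + 1 ∨ tradedInv p (farIdx j) s = s - 1) :
    s ∈ tradeSet p := by
  obtain ⟨h1, h2, h3⟩ := farStep_ne hp
  by_contra hs
  rw [tradedInv_of_notMem _ hs] at h
  rcases shiftInv_farIdx_eq_or (j := j) s with e | e <;> rw [e] at h <;> rcases h with h | h
  · exact h1 (by linear_combination h)
  · exact h2 (by linear_combination h)
  · exact h2 (by linear_combination -h)
  · exact h1 (by linear_combination -h)

theorem tradedInv_sub_self_cases {x : InvIdx j} (hx : x = nearIdx j ∨ x = farIdx j)
    (s : ZMod (48 * p + 28)) :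
    (tradedInv p x s = s + 1 ∨ tradedInv p x s = s - 1) ∨
      (tradedInv p x s = s + farStep p ∨ tradedInv p x s = s - farStep p) := by
  by_cases hs : s ∈ tradeSet p
  · rcases hx with rfl | rfl
    · rw [tradedInv_nearIdx_of_mem hs]
      exact Or.inr (shiftInv_farIdx_eq_or s)
    · rw [tradedInv_farIdx_of_mem hs]
      exact Or.inl (shiftInv_nearIdx_eq_or s)
  · rw [tradedInv_of_notMem _ hs]
    rcases hx with rfl | rfl
    · exact Or.inl (shiftInv_nearIdx_eq_or s)
    · exact Or.inr (shiftInv_farIdx_eq_or s)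

theorem eight_notMem_tradeSet (hp : 1 ≤ p) : ((8 : ℕ) : ZMod (48 * p + 28)) ∉ tradeSet p := by
  intro h
  rcases mem_union.1 h with h | h
  · obtain ⟨n, hn, e⟩ := mem_lowSet.1 h
    rw [mem_tradeOffsets] at hn
    have := natCast_inj_of_lt (by omega) (by omega) e
    omega
  · obtain ⟨n, hn, e⟩ := mem_highSet.1 h
    rw [mem_tradeOffsets] at hn
    have := natCast_inj_of_lt (by omega) (by omega) e
    omega

theorem tradedInv_nearIdx_eight (hp : 1 ≤ p) :
    tradedInv p (nearIdx j) ((8 : ℕ) : ZMod (48 * p + 28)) = ((8 : ℕ) : ZMod _) + 1 := by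
  rw [tradedInv_of_notMem _ (eight_notMem_tradeSet hp), shiftInv_nearIdx, map_natCast,
    if_pos (by decide)]

theorem half_mul_farStep : ((24 * p + 14 : ℕ) : ZMod (48 * p + 28)) * farStep p = 0 := by
  rw [farStep, ← Nat.cast_mul, ZMod.natCast_eq_zero_iff]
  exact ⟨6 * p + 3, by ring⟩

theorem half_ne_zero : ((24 * p + 14 : ℕ) : ZMod (48 * p + 28)) ≠ 0 := by
  intro h
  have := natCast_inj_of_lt (p := p) (a := 24 * p + 14) (b := 0) (by omega) (by omega)
    (by rw [h]; simp)
  omega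

theorem isRigidFamily_tradedInv (hp : 1 ≤ p) :
    IsRigidFamily (tradedInv p : InvIdx j → ZMod (48 * p + 28) → ZMod (48 * p + 28)) := by
  intro f hf hadd β _ hβ
  obtain ⟨hA1, hA2, hA3⟩ := farStep_ne hp
  obtain ⟨k, hk⟩ : ∃ k, k = f 1 - f 0 := ⟨_, rfl⟩
  obtain ⟨c, hc⟩ : ∃ c, c = f 0 := ⟨_, rfl⟩
  have hlin : ∀ s, f s = k * s + c := by
    have h : ∀ n : ℕ, f n = k * n + c := by
      intro n
      induction n with
      | zero => simp [hc]
      | succ n ih =>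
        rw [Nat.cast_succ, hadd, ih, hk]
        ring
    intro s
    rw [← ZMod.natCast_zmod_val s]
    exact h _
  have hker : ∀ s, k * s = 0 → s = 0 := fun s hs => hf (by rw [hlin, hs, hlin 0, mul_zero])
  have hdiff : ∀ x s, tradedInv p (β x) (f s) = f s + k * (tradedInv p x s - s) := by
    intro x s
    rw [← hβ, hlin, hlin]
    ring
  have h0low : (0 : ZMod (48 * p + 28)) ∈ lowSet p := mem_lowSet.2 ⟨0, by decide, by simp⟩
  have h13low : ((13 : ℕ) : ZMod (48 * p + 28)) ∈ lowSet p := mem_lowSet.2 ⟨13, by decide, rfl⟩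
  have h4low : ((4 : ℕ) : ZMod (48 * p + 28)) ∈ lowSet p := mem_lowSet.2 ⟨4, by decide, rfl⟩
  have hd8 := hdiff (nearIdx j) (8 : ℕ)
  rw [tradedInv_nearIdx_eight hp, add_sub_cancel_left, mul_one] at hd8
  have hdlow : ∀ s ∈ lowSet p, tradedInv p (β (nearIdx j)) (f s) = f s + k * farStep p := by
    intro s hs
    rw [hdiff, tradedInv_nearIdx_of_mem_lowSet hs, add_sub_cancel_left]
  have hnear : β (nearIdx j) = nearIdx j ∨ β (nearIdx j) = farIdx j := by
    by_contra hne
    push Not at hne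
    obtain ⟨d, hd⟩ := exists_shiftInv_eq_add_or_sub (p := p) (β (nearIdx j))
    have h1 := hd (f (8 : ℕ))
    have h2 := hd (f 0)
    rw [← tradedInv_of_ne hne.1 hne.2, hd8, sub_eq_add_neg, add_right_inj, add_right_inj] at h1
    rw [← tradedInv_of_ne hne.1 hne.2, hdlow 0 h0low, sub_eq_add_neg, add_right_inj,
      add_right_inj] at h2
    have h3 : k * farStep p = k ∨ k * farStep p = -k := by
      rcases h1 with h1 | h1 <;> rcases h2 with h2 | h2 <;> rw [h2, h1] <;> simp
    rcases h3 with h3 | h3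
    · exact hA1 (sub_eq_zero.1 (hker (farStep p - 1) (by linear_combination h3)))
    · exact hA2 (eq_neg_of_add_eq_zero_left (hker (farStep p + 1) (by linear_combination h3)))
  have hk1 : k = 1 ∨ k = -1 := by
    have h := tradedInv_sub_self_cases hnear (f (8 : ℕ))
    rw [hd8] at h
    simp only [sub_eq_add_neg, add_right_inj] at h
    refine h.resolve_right fun h => half_ne_zero (p := p) (hker _ ?_)
    have h0 := half_mul_farStep (p := p)
    rcases h with h | h <;> rw [h]
    · linear_combination h0
    · linear_combination -h0
  have hfix : β (nearIdx j) = nearIdx j := by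
    refine hnear.resolve_right fun hfar => ?_
    have hmaps : ∀ s ∉ tradeSet p, f s ∈ tradeSet p := by
      intro s hs
      refine mem_tradeSet_of_tradedInv (j := j) hp ?_
      have h := hdiff (nearIdx j) s
      rw [hfar] at h
      rw [h, sub_eq_add_neg (f s) 1, add_right_inj, add_right_inj]
      rcases tradedInv_nearIdx_of_notMem (j := j) hs with e | e <;> rw [e] <;>
        rcases hk1 with hk1 | hk1 <;> rw [hk1] <;> ring_nf <;> simp
    have h1 : (univ \ tradeSet p).card ≤ (tradeSet p).card :=
      card_le_card_of_injOn f (fun s hs => hmaps s (by simpa using hs)) hf.injOn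
    have h2 := card_tradeSet_le (p := p)
    have h3 := le_card_sdiff (tradeSet p) (univ : Finset (ZMod (48 * p + 28)))
    rw [card_univ, ZMod.card] at h3
    omega
  rw [hfix] at hdlow
  rcases hk1 with hk1 | hk1
  · have hlow : ∀ s ∈ lowSet p, s + c ∈ lowSet p := by
      intro s hs
      have h := hdlow s hs
      rw [hk1, one_mul] at h
      have := mem_lowSet_of_tradedInv hp h
      rwa [hlin, hk1, one_mul] at this
    obtain ⟨n, hn, e⟩ := mem_lowSet.1 (hlow 0 h0low)
    obtain ⟨n', hn', e'⟩ := mem_lowSet.1 (hlow _ h13low)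
    rw [zero_add] at e
    rw [← e, ← Nat.cast_add] at e'
    rw [mem_tradeOffsets] at hn hn'
    have h1 := natCast_inj_of_lt (by omega) (by omega) e'
    have h2 : n = 0 := by omega
    funext s
    rw [hlin, hk1, ← e, h2]
    simp
  · have hhigh : ∀ s ∈ lowSet p, c - s ∈ highSet p := by
      intro s hs
      have h := hdlow s hs
      rw [hk1, neg_one_mul, ← sub_eq_add_neg] at h
      have := mem_highSet_of_tradedInv hp h
      rwa [hlin, hk1, neg_one_mul, neg_add_eq_sub] at this
    obtain ⟨n, hn, e⟩ := mem_highSet.1 (hhigh 0 h0low)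
    obtain ⟨n', hn', e'⟩ := mem_highSet.1 (hhigh _ h13low)
    obtain ⟨n'', hn'', e''⟩ := mem_highSet.1 (hhigh _ h4low)
    rw [sub_zero] at e
    rw [← e, eq_sub_iff_add_eq, ← Nat.cast_add] at e' e''
    rw [mem_tradeOffsets] at hn hn' hn''
    have h1 := natCast_inj_of_lt (by omega) (by omega) e'
    have h2 := natCast_inj_of_lt (by omega) (by omega) e''
    omega

end Rigid

/-! ### Orders of the envelopes -/

/-- From an envelope of order `w` one obtains envelopes of all large orders congruent to `w`
modulo `6`. -/
theorem IsEnvelope.exists_isSTS_of_le {α P : Type*} [Fintype α] [Fintype P] {TV : Finset (Finset α)}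
    (hV : IsPSTS TV) {mP : P → P → P} {φ : α → P} (hE : IsEnvelope TV mP φ) {w : ℕ}
    (hw : Fintype.card P = w) (h127 : 127 ≤ w) (hodd : w % 6 = 1 ∨ w % 6 = 3) {u : ℕ}
    (hu : 9 + 28 * w + 48 * w * (w * w + 8 * w + 1) ≤ u) (hmod : u % 6 = w % 6) :
    ∃ T : Finset (Finset (Fin u)), IsSTS T ∧ ∃ φ : α → Fin u, FullEmbedding TV T φ := by
  obtain ⟨p, hp⟩ : ∃ p, p = (u - 9 - 28 * w) / (48 * w) := ⟨_, rfl⟩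
  obtain ⟨r, hr⟩ : ∃ r, r = (u - 9 - 28 * w) % (48 * w) := ⟨_, rfl⟩
  have hpr : 48 * w * p + r = u - 9 - 28 * w := by rw [hp, hr, Nat.div_add_mod]
  have hr48 : r < 48 * w := by rw [hr]; exact Nat.mod_lt _ (by omega)
  have hple : w * w + 8 * w + 1 ≤ p := by
    rw [hp, Nat.le_div_iff_mul_le (by omega), mul_comm]
    omega
  have hu' : u = r + 9 + 28 * w + 48 * (w * p) := by
    have : 48 * w * p = 48 * (w * p) := by ring
    omega
  have hr6 : r % 6 = 0 := by omega
  obtain ⟨j, hj⟩ : ∃ j, j = r / 6 + 1 := ⟨_, rfl⟩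
  have hj0 : NeZero j := ⟨by omega⟩
  have hjp : j ≤ p := by omega
  have hp1 : 1 ≤ p := by omega
  obtain ⟨mX, hX⟩ := exists_isSteiner_of_card (card_invIdx j)
  have henv := isEnvelope_blowUp hE (isFibreSystem_tradedInv hjp hX) exists_tradedInv_eq_add_one
    (isRigidFamily_tradedInv hp1) card_double_eq_le exists_le_card_tradedInv
    (by rw [card_invIdx]; omega) (by omega) (by rw [hw, pow_two]; omega)
  refine henv.exists_fin hV ?_
  rw [Fintype.card_sum, Fintype.card_prod, card_invIdx, ZMod.card, hw, hu', hj]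
  have : w * (48 * p + 28) = 48 * (w * p) + 28 * w := by ring
  omega

theorem exists_two_pow_sub_one_mod_six (a : ℕ) {r : ℕ} (hr : r = 1 ∨ r = 3) :
    ∃ k, 20 ≤ k ∧ (2 ^ (k + a) - 1) % 6 = r := by
  have h : ∀ t : ℕ, 2 ^ (2 * t + 1) % 6 = 2 ∧ 2 ^ (2 * t + 2) % 6 = 4 := by
    intro t
    induction t with
    | zero => decide
    | succ t ih =>
      have e1 : 2 ^ (2 * (t + 1) + 1) = 2 ^ (2 * t + 1) * 4 := by ring
      have e2 : 2 ^ (2 * (t + 1) + 2) = 2 ^ (2 * t + 2) * 4 := by ring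
      omega
  rcases hr with rfl | rfl
  · refine ⟨20 + (a + 1) % 2, by omega, ?_⟩
    obtain ⟨t, ht⟩ : ∃ t, 20 + (a + 1) % 2 + a = 2 * t + 1 :=
      ⟨(20 + (a + 1) % 2 + a) / 2, by omega⟩
    rw [ht]
    have h1 := (h t).1
    generalize 2 ^ (2 * t + 1) = y at h1 ⊢
    omega
  · refine ⟨20 + a % 2, by omega, ?_⟩
    obtain ⟨t, ht⟩ : ∃ t, 20 + a % 2 + a = 2 * t + 2 := ⟨(20 + a % 2 + a) / 2 - 1, by omega⟩
    rw [ht]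
    have h2 := (h t).2
    generalize 2 ^ (2 * t + 2) = y at h2 ⊢
    omega

theorem exists_bound_of_mod_six {α : Type*} [Fintype α] {TV : Finset (Finset α)}
    (hV : IsPSTS TV) {r : ℕ} (hr : r = 1 ∨ r = 3) :
    ∃ N : ℕ, ∀ u : ℕ, N ≤ u → u % 6 = r →
      ∃ T : Finset (Finset (Fin u)), IsSTS T ∧ ∃ φ : α → Fin u, FullEmbedding TV T φ := by
  obtain ⟨k, hk, hkr⟩ := exists_two_pow_sub_one_mod_six (Fintype.card α) hr
  have : NeZero k := ⟨by omega⟩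
  obtain ⟨w, hw⟩ : ∃ w, w = 2 ^ (k + Fintype.card α) - 1 := ⟨_, rfl⟩
  have h127 : 127 ≤ w := by
    have : 2 ^ 7 ≤ 2 ^ (k + Fintype.card α) := Nat.pow_le_pow_right (by omega) (by omega)
    omega
  rw [← hw] at hkr
  refine ⟨9 + 28 * w + 48 * w * (w * w + 8 * w + 1), fun u hu hur => ?_⟩
  refine (isEnvelope_chainTrade hV hk).exists_isSTS_of_le hV ?_ h127 (by omega) hu (by omega)
  rw [card_ne_empty_subtype, card_chainIdx, hw]

/-- **Theorem 1.3.** If `V` is a partial Steiner triple system then there is an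
integer `N'` such that, for `u ≥ N'` and `u ≡ 1` or `3 (mod 6)`, there is a Steiner
triple system `U` on `u` points having `V` as an `Aut U`-invariant subsystem on
which `Aut U` induces `Aut V`, with `Aut U ≅ Aut V` via restriction. -/
theorem stmt2 {α : Type*} [Fintype α] (TV : Finset (Finset α)) (hV : IsPSTS TV) :
    ∃ N : ℕ, ∀ u : ℕ, N ≤ u → u % 6 = 1 ∨ u % 6 = 3 →
      ∃ T : Finset (Finset (Fin u)), IsSTS T ∧
        ∃ φ : α → Fin u, FullEmbedding TV T φ := by
  obtain ⟨N₁, h₁⟩ := exists_bound_of_mod_six hV (Or.inl rfl)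
  obtain ⟨N₃, h₃⟩ := exists_bound_of_mod_six hV (Or.inr rfl)
  refine ⟨max N₁ N₃, fun u hu hmod => ?_⟩
  rcases hmod with h | h
  · exact h₁ u ((le_max_left _ _).trans hu) h
  · exact h₃ u ((le_max_right _ _).trans hu) h

end
end

section
/- In Moore's construction, U := X ∪ (V × A) with the triples (M1), (M2), (M3) is a Steiner triple system: every pair of distinct elements of U lies in exactly one of the listed triples. -/
open Finset

noncomputable section
open scoped Classical

theorem exists_eq_triple_of_card_eq_three {β : Type*} [DecidableEq β] {t : Finset β}
    (ht : t.card = 3) {p q : β} (hp : p ∈ t) (hq : q ∈ t) (hpq : p ≠ q) :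
    ∃ r, t = {p, q, r} := by
  have hq' : q ∈ t.erase p := mem_erase.2 ⟨hpq.symm, hq⟩
  obtain ⟨r, hr⟩ : ∃ r, (t.erase p).erase q = {r} := by
    rw [← card_eq_one, card_erase_of_mem hq', card_erase_of_mem hp, ht]
  exact ⟨r, by rw [← hr, insert_erase hq', insert_erase hp]⟩

theorem IsSTS.existsUnique_third {β : Type*} [DecidableEq β] {T : Finset (Finset β)}
    (hT : IsSTS T) {p q : β} (hpq : p ≠ q) : ∃! r, ({p, q, r} : Finset β) ∈ T := by
  obtain ⟨t, ⟨ht, hp, hq⟩, huniq⟩ := hT.2 p q hpq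
  obtain ⟨r, rfl⟩ := exists_eq_triple_of_card_eq_three (hT.1 t ht) hp hq hpq
  refine ⟨r, ht, fun r' hr' => ?_⟩
  have heq := huniq _ ⟨hr', by simp, by simp⟩
  have hc := hT.1 _ ht
  have hc' := hT.1 _ hr'
  have hmem : r' ∈ ({p, q, r} : Finset β) := heq ▸ by simp
  simp only [mem_insert, mem_singleton] at hmem
  rcases hmem with rfl | rfl | h
  · rw [show ({r', q, r'} : Finset β) = {q, r'} by ext; simp] at hc'
    have := card_le_two (a := q) (b := r')
    omega
  · rw [show ({p, r', r'} : Finset β) = {p, r'} by ext; simp] at hc'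
    have := card_le_two (a := p) (b := r')
    omega
  · exact h

theorem isSTS_of_existsUnique_third {β : Type*} [DecidableEq β] {T : Finset (Finset β)}
    (hcard : ∀ t ∈ T, t.card = 3)
    (hT : ∀ p q : β, p ≠ q → ∃! r, ({p, q, r} : Finset β) ∈ T) : IsSTS T := by
  refine ⟨hcard, fun p q hpq => ?_⟩
  obtain ⟨r, hr, huniq⟩ := hT p q hpq
  refine ⟨{p, q, r}, ⟨hr, by simp, by simp⟩, ?_⟩
  rintro t ⟨ht, hp, hq⟩
  obtain ⟨s, rfl⟩ := exists_eq_triple_of_card_eq_three (hcard t ht) hp hq hpq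
  rw [huniq s ht]

theorem card_insert_insert_singleton_eq_three {β : Type*} [DecidableEq β] {a b c : β} :
    ({a, b, c} : Finset β).card = 3 ↔ a ≠ b ∧ a ≠ c ∧ b ≠ c := by
  refine ⟨fun h => ?_, fun ⟨h1, h2, h3⟩ => card_eq_three.2 ⟨a, b, c, h1, h2, h3, rfl⟩⟩
  have h1 := card_le_two (a := a) (b := b)
  have h2 := card_le_two (a := b) (b := c)
  refine ⟨?_, ?_, ?_⟩ <;> rintro rfl <;> simp at h <;> omega

theorem eq_perm_of_triple_eq {β : Type*} [DecidableEq β] {a b c d e f : β}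
    (hcard : ({d, e, f} : Finset β).card = 3)
    (h : ({a, b, c} : Finset β) = {d, e, f}) :
    a = d ∧ b = e ∧ c = f ∨ a = d ∧ b = f ∧ c = e ∨ a = e ∧ b = d ∧ c = f ∨
      a = e ∧ b = f ∧ c = d ∨ a = f ∧ b = d ∧ c = e ∨ a = f ∧ b = e ∧ c = d := by
  have hcard' := hcard
  rw [← h, card_insert_insert_singleton_eq_three] at hcard'
  have ha : a ∈ ({d, e, f} : Finset β) := h ▸ by simp
  have hb : b ∈ ({d, e, f} : Finset β) := h ▸ by simp
  have hc : c ∈ ({d, e, f} : Finset β) := h ▸ by simp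
  simp only [mem_insert, mem_singleton] at ha hb hc
  grind

theorem triple_rotate {β : Type*} [DecidableEq β] (a b c : β) : ({a, b, c} : Finset β) = {c, a, b} := by
  grind

section Moore

variable {δ α γ A : Type*} [Fintype δ] [Group A]
  {TX : Finset (Finset δ)} {TV : Finset (Finset α)} {TY : Finset (Finset γ)}
  {j : δ → γ} {ℓ : A → γ}

theorem MooreSetup.j_ne_ℓ (hM : MooreSetup TX TV TY j ℓ) (x : δ) (a : A) : j x ≠ ℓ a := by
  intro h
  have : ℓ a ∈ (Set.range j)ᶜ := hM.2.2.2.2.2.2.2 ▸ Set.mem_range_self a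
  exact this ⟨x, h⟩

theorem MooreSetup.exists_j_or_ℓ (hM : MooreSetup TX TV TY j ℓ) (y : γ) :
    (∃ x, y = j x) ∨ ∃ a, y = ℓ a := by
  by_cases hy : y ∈ Set.range j
  · obtain ⟨x, rfl⟩ := hy
    exact Or.inl ⟨x, rfl⟩
  · have : y ∈ Set.range ℓ := hM.2.2.2.2.2.2.2 ▸ hy
    obtain ⟨a, rfl⟩ := this
    exact Or.inr ⟨a, rfl⟩

theorem MooreSetup.image_j_mem_iff (hM : MooreSetup TX TV TY j ℓ) (s : Finset δ) :
    s.image j ∈ TY ↔ s ∈ TX := by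
  obtain ⟨-, -, -, hj, -, ⟨-, h1, h2⟩, -, -⟩ := hM
  refine ⟨fun h => ?_, h1 s⟩
  obtain ⟨s', hs', heq⟩ := h2 _ h (image_subset_image (subset_univ s))
  rwa [image_injective hj heq]

theorem MooreSetup.triple_jjℓ_notMem (hM : MooreSetup TX TV TY j ℓ) (x y : δ) (a : A) :
    ({j x, j y, ℓ a} : Finset γ) ∉ TY := by
  intro h
  have hne := card_insert_insert_singleton_eq_three.1 (hM.1.1 _ h)
  have hsub := hM.2.2.2.2.1 _ h <| by
    rw [← card_pair hne.1]
    refine card_le_card fun z hz => ?_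
    simp only [mem_insert, mem_singleton] at hz
    rcases hz with rfl | rfl <;> simp
  have hmem : ℓ a ∈ univ.image j := hsub (by simp)
  obtain ⟨z, -, hz⟩ := mem_image.1 hmem
  exact hM.j_ne_ℓ z a hz

variable [Fintype α] [Fintype A]

theorem MooreSetup.card_eq_three (hM : MooreSetup TX TV TY j ℓ) {t : Finset (δ ⊕ α × A)}
    (ht : t ∈ MooreTriples TX TV TY j ℓ) : t.card = 3 := by
  simp only [MooreTriples, mem_filter, mem_univ, true_and] at ht
  rcases ht with ⟨s, hs, rfl⟩ | ⟨v, a, b, x, h, rfl⟩ | ⟨v, a, b, c, h, rfl⟩ |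
    ⟨u, v, w, a, b, c, h, -, rfl⟩
  · rw [card_image_of_injective _ Sum.inl_injective, ← card_image_of_injective s hM.2.2.2.1]
    exact hM.1.1 _ ((hM.image_j_mem_iff s).2 hs)
  · have := card_insert_insert_singleton_eq_three.1 (hM.1.1 _ h)
    rw [card_insert_insert_singleton_eq_three]
    grind
  · have := card_insert_insert_singleton_eq_three.1 (hM.1.1 _ h)
    rw [card_insert_insert_singleton_eq_three]
    grind
  · have := card_insert_insert_singleton_eq_three.1 (hM.2.1.1 _ h)
    rw [card_insert_insert_singleton_eq_three]
    grind

theorem MooreSetup.triple_inl_inl_inl_mem_iff (hM : MooreSetup TX TV TY j ℓ) (x y z : δ) :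
    ({Sum.inl x, Sum.inl y, Sum.inl z} : Finset (δ ⊕ α × A)) ∈ MooreTriples TX TV TY j ℓ ↔
      ({j x, j y, j z} : Finset γ) ∈ TY := by
  have himage : ({j x, j y, j z} : Finset γ) = ({x, y, z} : Finset δ).image j := by
    simp [image_insert]
  have himage' : ({Sum.inl x, Sum.inl y, Sum.inl z} : Finset (δ ⊕ α × A)) =
      ({x, y, z} : Finset δ).image Sum.inl := by
    simp [image_insert]
  rw [himage, hM.image_j_mem_iff]
  constructor
  · intro h
    have hcard := hM.card_eq_three h
    simp only [MooreTriples, mem_filter, mem_univ, true_and] at h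
    rcases h with ⟨s, hs, h⟩ | ⟨v, a, b, x, -, h⟩ | ⟨v, a, b, c, -, h⟩ |
      ⟨u, v, w, a, b, c, -, -, h⟩
    · rw [himage'] at h
      rwa [image_injective Sum.inl_injective h]
    all_goals
      rw [h] at hcard
      have := eq_perm_of_triple_eq hcard h
      simp at this
  · intro h
    simp only [MooreTriples, mem_filter, mem_univ, true_and]
    exact Or.inl ⟨_, h, himage'⟩

theorem MooreSetup.triple_inl_inl_inr_notMem (hM : MooreSetup TX TV TY j ℓ) (x y : δ)
    (p : α × A) : ({Sum.inl x, Sum.inl y, Sum.inr p} : Finset (δ ⊕ α × A)) ∉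
      MooreTriples TX TV TY j ℓ := by
  intro h
  have hcard := hM.card_eq_three h
  simp only [MooreTriples, mem_filter, mem_univ, true_and] at h
  rcases h with ⟨s, hs, h⟩ | ⟨v, a, b, x, -, h⟩ | ⟨v, a, b, c, -, h⟩ |
    ⟨u, v, w, a, b, c, -, -, h⟩
  · have : (Sum.inr p : δ ⊕ α × A) ∈ s.image Sum.inl := h ▸ by simp
    simp at this
  all_goals
    rw [h] at hcard
    have := eq_perm_of_triple_eq hcard h
    simp at this

theorem MooreSetup.triple_inl_inr_inr_mem_iff (hM : MooreSetup TX TV TY j ℓ) (x : δ)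
    (v w : α) (a b : A) :
    ({Sum.inl x, Sum.inr (v, a), Sum.inr (w, b)} : Finset (δ ⊕ α × A)) ∈
      MooreTriples TX TV TY j ℓ ↔ v = w ∧ ({j x, ℓ a, ℓ b} : Finset γ) ∈ TY := by
  constructor
  · intro h
    have hcard := hM.card_eq_three h
    simp only [MooreTriples, mem_filter, mem_univ, true_and] at h
    rcases h with ⟨s, hs, h⟩ | ⟨v, a, b, x, hY, h⟩ | ⟨v, a, b, c, -, h⟩ |
      ⟨u, v, w, a, b, c, -, -, h⟩
    · have : (Sum.inr (v, a) : δ ⊕ α × A) ∈ s.image Sum.inl := h ▸ by simp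
      simp at this
    · rw [h] at hcard
      have := eq_perm_of_triple_eq hcard h
      simp only [reduceCtorEq, false_and, and_false, false_or, Sum.inl.injEq,
        Sum.inr.injEq, Prod.mk.injEq] at this
      rcases this with ⟨rfl, ⟨rfl, rfl⟩, rfl, rfl⟩ | ⟨rfl, ⟨rfl, rfl⟩, rfl, rfl⟩ <;>
        refine ⟨rfl, ?_⟩ <;> convert hY using 1 <;> grind
    all_goals
      rw [h] at hcard
      have := eq_perm_of_triple_eq hcard h
      simp at this
  · rintro ⟨rfl, h⟩
    simp only [MooreTriples, mem_filter, mem_univ, true_and]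
    refine Or.inr (Or.inl ⟨v, a, b, x, ?_, ?_⟩)
    · convert h using 1; grind
    · grind

theorem MooreSetup.triple_inr_inr_inr_mem_iff (hM : MooreSetup TX TV TY j ℓ)
    (u v w : α) (a b c : A) :
    ({Sum.inr (u, a), Sum.inr (v, b), Sum.inr (w, c)} : Finset (δ ⊕ α × A)) ∈
      MooreTriples TX TV TY j ℓ ↔ (u = v ∧ v = w ∧ ({ℓ a, ℓ b, ℓ c} : Finset γ) ∈ TY) ∨
        (({u, v, w} : Finset α) ∈ TV ∧ a * b * c = 1) := by
  constructor
  · intro h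
    have hcard := hM.card_eq_three h
    simp only [MooreTriples, mem_filter, mem_univ, true_and] at h
    rcases h with ⟨s, hs, h⟩ | ⟨v, a, b, x, -, h⟩ | ⟨v, a, b, c, hY, h⟩ |
      ⟨u, v, w, a, b, c, hV, habc, h⟩
    · have : (Sum.inr (v, b) : δ ⊕ α × A) ∈ s.image Sum.inl := h ▸ by simp
      simp at this
    · rw [h] at hcard
      have := eq_perm_of_triple_eq hcard h
      simp at this
    · rw [h] at hcard
      have := eq_perm_of_triple_eq hcard h
      simp only [Sum.inr.injEq, Prod.mk.injEq] at this
      left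
      rcases this with ⟨⟨rfl, rfl⟩, ⟨rfl, rfl⟩, rfl, rfl⟩ | ⟨⟨rfl, rfl⟩, ⟨rfl, rfl⟩, rfl, rfl⟩ |
        ⟨⟨rfl, rfl⟩, ⟨rfl, rfl⟩, rfl, rfl⟩ | ⟨⟨rfl, rfl⟩, ⟨rfl, rfl⟩, rfl, rfl⟩ |
        ⟨⟨rfl, rfl⟩, ⟨rfl, rfl⟩, rfl, rfl⟩ | ⟨⟨rfl, rfl⟩, ⟨rfl, rfl⟩, rfl, rfl⟩ <;>
        refine ⟨rfl, rfl, ?_⟩ <;> convert hY using 1 <;> grind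
    · rw [h] at hcard
      have := eq_perm_of_triple_eq hcard h
      simp only [Sum.inr.injEq, Prod.mk.injEq] at this
      right
      have hcomm : ∀ x y : A, x * y = y * x := hM.2.2.1.isMulCommutative.is_comm.comm
      rcases this with ⟨⟨rfl, rfl⟩, ⟨rfl, rfl⟩, rfl, rfl⟩ | ⟨⟨rfl, rfl⟩, ⟨rfl, rfl⟩, rfl, rfl⟩ |
        ⟨⟨rfl, rfl⟩, ⟨rfl, rfl⟩, rfl, rfl⟩ | ⟨⟨rfl, rfl⟩, ⟨rfl, rfl⟩, rfl, rfl⟩ |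
        ⟨⟨rfl, rfl⟩, ⟨rfl, rfl⟩, rfl, rfl⟩ | ⟨⟨rfl, rfl⟩, ⟨rfl, rfl⟩, rfl, rfl⟩ <;>
        refine ⟨?_, ?_⟩ <;> first | (convert hV using 1; grind) | grind [mul_assoc]
  · simp only [MooreTriples, mem_filter, mem_univ, true_and]
    rintro (⟨rfl, rfl, h⟩ | ⟨hV, habc⟩)
    · exact Or.inr (Or.inr (Or.inl ⟨u, a, b, c, h, rfl⟩))
    · exact Or.inr (Or.inr (Or.inr ⟨u, v, w, a, b, c, hV, habc, rfl⟩))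

theorem MooreSetup.existsUnique_third_inl_inl (hM : MooreSetup TX TV TY j ℓ) {x y : δ}
    (hxy : x ≠ y) :
    ∃! r, ({Sum.inl x, Sum.inl y, r} : Finset (δ ⊕ α × A)) ∈ MooreTriples TX TV TY j ℓ := by
  obtain ⟨c, hc, huniq⟩ := hM.1.existsUnique_third (hM.2.2.2.1.ne hxy)
  rcases hM.exists_j_or_ℓ c with ⟨z, rfl⟩ | ⟨a, rfl⟩
  · refine ⟨Sum.inl z, (hM.triple_inl_inl_inl_mem_iff x y z).2 hc, ?_⟩
    rintro (z' | p) h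
    · rw [hM.2.2.2.1 (huniq _ ((hM.triple_inl_inl_inl_mem_iff x y z').1 h))]
    · exact absurd h (hM.triple_inl_inl_inr_notMem x y p)
  · exact absurd hc (hM.triple_jjℓ_notMem x y a)

theorem MooreSetup.existsUnique_third_inl_inr (hM : MooreSetup TX TV TY j ℓ) (x : δ)
    (v : α) (a : A) :
    ∃! r, ({Sum.inl x, Sum.inr (v, a), r} : Finset (δ ⊕ α × A)) ∈
      MooreTriples TX TV TY j ℓ := by
  obtain ⟨c, hc, huniq⟩ := hM.1.existsUnique_third (hM.j_ne_ℓ x a)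
  rcases hM.exists_j_or_ℓ c with ⟨z, rfl⟩ | ⟨b, rfl⟩
  · rw [pair_comm] at hc
    exact absurd hc (hM.triple_jjℓ_notMem x z a)
  · refine ⟨Sum.inr (v, b), (hM.triple_inl_inr_inr_mem_iff x v v a b).2 ⟨rfl, hc⟩, ?_⟩
    rintro (z' | ⟨w, b'⟩) h
    · rw [pair_comm] at h
      exact absurd h (hM.triple_inl_inl_inr_notMem x z' (v, a))
    · obtain ⟨rfl, h'⟩ := (hM.triple_inl_inr_inr_mem_iff x v w a b').1 h
      rw [hM.2.2.2.2.2.2.1 (huniq _ h')]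

theorem MooreSetup.existsUnique_third_inr_inr_same (hM : MooreSetup TX TV TY j ℓ) (v : α)
    {a b : A} (hab : a ≠ b) :
    ∃! r, ({Sum.inr (v, a), Sum.inr (v, b), r} : Finset (δ ⊕ α × A)) ∈
      MooreTriples TX TV TY j ℓ := by
  have hℓ := hM.2.2.2.2.2.2.1
  have hV : ∀ w, ({v, v, w} : Finset α) ∉ TV := fun w h =>
    (card_insert_insert_singleton_eq_three.1 (hM.2.1.1 _ h)).1 rfl
  have hinl : ∀ z, ({Sum.inr (v, a), Sum.inr (v, b), Sum.inl z} : Finset (δ ⊕ α × A)) ∈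
      MooreTriples TX TV TY j ℓ ↔ ({ℓ a, ℓ b, j z} : Finset γ) ∈ TY := fun z => by
    rw [triple_rotate, hM.triple_inl_inr_inr_mem_iff, triple_rotate (ℓ a)]
    simp
  have hinr : ∀ w c, ({Sum.inr (v, a), Sum.inr (v, b), Sum.inr (w, c)} : Finset (δ ⊕ α × A)) ∈
      MooreTriples TX TV TY j ℓ ↔ v = w ∧ ({ℓ a, ℓ b, ℓ c} : Finset γ) ∈ TY := fun w c => by
    simp [hM.triple_inr_inr_inr_mem_iff, -insert_eq_of_mem, -mem_insert, hV]
  obtain ⟨c, hc, huniq⟩ := hM.1.existsUnique_third (hℓ.ne hab)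
  rcases hM.exists_j_or_ℓ c with ⟨z, rfl⟩ | ⟨c, rfl⟩
  · refine ⟨Sum.inl z, (hinl z).2 hc, ?_⟩
    rintro (z' | ⟨w, c'⟩) h
    · rw [hM.2.2.2.1 (huniq _ ((hinl z').1 h))]
    · exact absurd (huniq _ ((hinr w c').1 h).2).symm (hM.j_ne_ℓ z c')
  · refine ⟨Sum.inr (v, c), (hinr v c).2 ⟨rfl, hc⟩, ?_⟩
    rintro (z' | ⟨w, c'⟩) h
    · exact absurd (huniq _ ((hinl z').1 h)) (hM.j_ne_ℓ z' c)
    · obtain ⟨rfl, h'⟩ := (hinr w c').1 h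
      rw [hℓ (huniq _ h')]

theorem MooreSetup.existsUnique_third_inr_inr_of_ne (hM : MooreSetup TX TV TY j ℓ) {v w : α}
    (hvw : v ≠ w) (a b : A) :
    ∃! r, ({Sum.inr (v, a), Sum.inr (w, b), r} : Finset (δ ⊕ α × A)) ∈
      MooreTriples TX TV TY j ℓ := by
  obtain ⟨u, hu, huniq⟩ := hM.2.1.existsUnique_third hvw
  refine ⟨Sum.inr (u, (a * b)⁻¹),
    (hM.triple_inr_inr_inr_mem_iff ..).2 (Or.inr ⟨hu, mul_inv_cancel _⟩), ?_⟩
  rintro (z | ⟨u', c⟩) h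
  · rw [triple_rotate] at h
    exact absurd ((hM.triple_inl_inr_inr_mem_iff ..).1 h).1 hvw
  · rcases (hM.triple_inr_inr_inr_mem_iff ..).1 h with ⟨h, -⟩ | ⟨h, hc⟩
    · exact absurd h hvw
    · rw [huniq u' h, eq_inv_of_mul_eq_one_right hc]

end Moore

/-- **Moore's construction** `U := X ∪ (V × A)` with the triples (M1), (M2), (M3)
is a Steiner triple system. -/
theorem stmt3 {δ α γ A : Type*} [Fintype δ] [Fintype α] [Fintype γ] [Fintype A]
    [Group A] (TX : Finset (Finset δ)) (TV : Finset (Finset α))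
    (TY : Finset (Finset γ)) (j : δ → γ) (ℓ : A → γ)
    (hM : MooreSetup TX TV TY j ℓ) :
    IsSTS (MooreTriples TX TV TY j ℓ) := by
  refine isSTS_of_existsUnique_third (fun t ht => hM.card_eq_three ht) ?_
  rintro (x | ⟨v, a⟩) (y | ⟨w, b⟩) hne
  · exact hM.existsUnique_third_inl_inl (by rintro rfl; exact hne rfl)
  · exact hM.existsUnique_third_inl_inr x w b
  · simp only [Finset.insert_comm (Sum.inr (v, a))]
    exact hM.existsUnique_third_inl_inr y v a
  · by_cases hvw : v = w
    · subst hvw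
      exact hM.existsUnique_third_inr_inr_same v (by rintro rfl; exact hne rfl)
    · exact hM.existsUnique_third_inr_inr_of_ne hvw a b

end
end
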